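/- Let E be a rank two bundle on P^n with isolated cohomology of type (n,k), where n ≥ 7 and 1 < k < n/2. Then the exact sequence 0 → P_k(N) → P ⊕ F → P_{n-k}(M) → 0 associated to the minimal monad bundle P of E is not split. -/

import Mathlib

/-!
Background setup (the paper works on projective space `ℙⁿ` over a field `K`):
we encode a coherent sheaf on `ℙⁿ_K` by a module `M` over the homogeneous coordinate
ring `S = K[X₀,…,Xₙ]` (namely `M = Γ_*` of the sheaf), and the intermediate cohomology
module `H^i_*(F) = ⊕_ν H^i(ℙⁿ, F(ν))` (for `i ≥ 1`) by the local cohomology module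
`H^{i+1}_𝔪(M)` at the irrelevant maximal ideal `𝔪 = (X₀,…,Xₙ)`, to which it is
canonically isomorphic.
-/

open CategoryTheory TensorProduct

noncomputable section

/-- The homogeneous coordinate ring `S = K[X₀,…,Xₙ]` of `ℙⁿ`. -/
abbrev PolyS (K : Type) [Field K] (n : ℕ) : Type := MvPolynomial (Fin (n+1)) K

variable (K : Type) [Field K] (n : ℕ)

/-- The irrelevant maximal ideal `𝔪 = (X₀,…,Xₙ)` of `S`. -/
def irrel : Ideal (PolyS K n) := Ideal.span (Set.range MvPolynomial.X)

/-- `H^i_*` of the sheaf on `ℙⁿ` associated to the `S`-module `M`, encoded (for `i ≥ 1`)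
as the local cohomology module `H^{i+1}_𝔪(M)`. -/
def Hstar (i : ℕ) (M : Type) [AddCommGroup M] [Module (PolyS K n) M] :
    ModuleCat (PolyS K n) :=
  (localCohomology (irrel K n) (i+1)).obj (ModuleCat.of (PolyS K n) M)

/-- `M` is (the module of sections `Γ_*` of) an algebraic vector bundle on `ℙⁿ`:
finitely generated, depth `≥ 2` at `𝔪` (i.e. `H⁰_𝔪(M) = H¹_𝔪(M) = 0`, so `M = Γ_*(M̃)`),
and locally free at every prime other than the irrelevant ideal. -/
structure IsBundleModule (M : Type) [AddCommGroup M] [Module (PolyS K n) M] : Prop where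
  finite : Module.Finite (PolyS K n) M
  h0 : Subsingleton ((localCohomology (irrel K n) 0).obj (ModuleCat.of (PolyS K n) M))
  h1 : Subsingleton ((localCohomology (irrel K n) 1).obj (ModuleCat.of (PolyS K n) M))
  locFree : ∀ p : PrimeSpectrum (PolyS K n), p.asIdeal ≠ irrel K n →
    Module.Free (Localization.AtPrime p.asIdeal) (LocalizedModule p.asIdeal.primeCompl M)

/-- `M` represents a vector bundle of rank two on `ℙⁿ`. -/
structure IsRankTwoBundleModule (M : Type) [AddCommGroup M] [Module (PolyS K n) M]
    extends IsBundleModule K n M : Prop where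
  rank2 : ∀ p : PrimeSpectrum (PolyS K n), p.asIdeal ≠ irrel K n →
    Module.rank (Localization.AtPrime p.asIdeal) (LocalizedModule p.asIdeal.primeCompl M) = 2

/-- A finite length module which is moreover supported at the irrelevant ideal: the
(ungraded avatar of the) notion of a *graded* `S`-module of finite length. -/
def IsGradedFiniteLength (N : Type) [AddCommGroup N] [Module (PolyS K n) N] : Prop :=
  IsFiniteLength (PolyS K n) N ∧
    ∃ c : ℕ, (irrel K n) ^ c ≤ Module.annihilator (PolyS K n) N

/-- A minimal graded free resolution `⋯ → L₁ → L₀ → N → 0` of an `S`-module `N`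
(minimality: all differentials have entries in the maximal ideal `𝔪`).
Here `d i : L (i+1) → L i` and `P_k(N)`, the `k`-th syzygy module, is `range (d k)`,
i.e. the image of `f_{k+1} : L_{k+1} → L_k`. -/
structure MinimalResolution (N : Type) [AddCommGroup N] [Module (PolyS K n) N] where
  L : ℕ → Type
  [addCommGroup : ∀ i, AddCommGroup (L i)]
  [module : ∀ i, Module (PolyS K n) (L i)]
  free : ∀ i, Module.Free (PolyS K n) (L i)
  finite : ∀ i, Module.Finite (PolyS K n) (L i)
  d : ∀ i : ℕ, L (i+1) →ₗ[PolyS K n] L i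
  aug : L 0 →ₗ[PolyS K n] N
  aug_surjective : Function.Surjective aug
  exact0 : LinearMap.range (d 0) = LinearMap.ker aug
  exact : ∀ i : ℕ, LinearMap.range (d (i+1)) = LinearMap.ker (d i)
  minimal : ∀ i : ℕ, LinearMap.range (d i) ≤ (irrel K n) • (⊤ : Submodule (PolyS K n) (L i))
  minimal0 : LinearMap.ker aug ≤ (irrel K n) • (⊤ : Submodule (PolyS K n) (L 0))

attribute [instance] MinimalResolution.addCommGroup MinimalResolution.module

/-- The cohomology `ker β / im α` of a monad `A --α--> P --β--> B`. -/
def MonadHomology {R A P B : Type} [CommRing R] [AddCommGroup A] [Module R A]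
    [AddCommGroup P] [Module R P] [AddCommGroup B] [Module R B]
    (α : A →ₗ[R] P) (β : P →ₗ[R] B) : Type :=
  ↥(LinearMap.ker β) ⧸ (LinearMap.range α).comap (LinearMap.ker β).subtype

instance {R A P B : Type} [CommRing R] [AddCommGroup A] [Module R A]
    [AddCommGroup P] [Module R P] [AddCommGroup B] [Module R B]
    (α : A →ₗ[R] P) (β : P →ₗ[R] B) : AddCommGroup (MonadHomology α β) := by
  unfold MonadHomology; infer_instance

instance {R A P B : Type} [CommRing R] [AddCommGroup A] [Module R A]
    [AddCommGroup P] [Module R P] [AddCommGroup B] [Module R B]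
    (α : A →ₗ[R] P) (β : P →ₗ[R] B) : Module R (MonadHomology α β) := by
  unfold MonadHomology; infer_instance

/-- A linear map of `S`-modules which becomes an isomorphism of the associated sheaves
on `ℙⁿ`: its kernel and cokernel are annihilated by a power of the irrelevant ideal. -/
def IsSheafIso {M N' : Type} [AddCommGroup M] [Module (PolyS K n) M]
    [AddCommGroup N'] [Module (PolyS K n) N'] (f : M →ₗ[PolyS K n] N') : Prop :=
  (∃ c : ℕ, (irrel K n) ^ c ≤ Module.annihilator (PolyS K n) ↥(LinearMap.ker f)) ∧
  (∃ c : ℕ, (irrel K n) ^ c ≤ Module.annihilator (PolyS K n) (N' ⧸ LinearMap.range f))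

/-!
By local duality `H^i_*(G)` is dual to `Ext^{n-i}(G, S)`, so cohomology is tested through the
groups `Ext^j(-, S)`. They see modules only up to modules on which the coordinates act nilpotently,
so exactness and splitting are only needed up to multiplication by powers of the coordinates.

Suppose that the sequence splits, with `W = P ⊕ F`. Since `⋀²E` is a line bundle, the monad shows
that `Ext^j(⋀²W, S) = 0` whenever `2 ≤ j ≤ n - 2` and `j ≠ k, n - k`.

For `k > 2` take `j = k - 1`. The summand `P_k(N) ⊗ P_{n-k}(M)` of `⋀²W` then yields
`Ext^p(M, P_k(N)^∨) = 0` for some `p`, and climbing the dual resolution turns this into the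
vanishing of some `Ext^q(M, Ext^{n+1}(N, S))` with `q ≤ n + 1`. But such groups between nonzero
modules with nilpotent coordinates never vanish, as one sees by translating `M` along the
coordinates.

For `k = 2` take `j = n - 4` and `j = n - 3`. For the summand `⋀²P_2(N)` these vanishings make the
tail `S²L₁ ⊕ (L₂ ⊗ L₀) → (L₁ ⊗ L₀) ⊕ S²L₀ → L₀ ⊗ L₀ → 0` of the exterior square of the resolution of
`N` exact. If `rank L₀ ≥ 2` this fails at `L₀ ⊗ L₀`, and if `rank L₀ = 1` it would force the ideal
`im (L₁ → L₀)` into its own square.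
-/

namespace Horrocks

open Abelian

universe u

section Ext

variable {R : Type u} [CommRing R]
variable {A B C N : Type u} [AddCommGroup A] [Module R A] [AddCommGroup B] [Module R B]
  [AddCommGroup C] [Module R C] [AddCommGroup N] [Module R N]

/-- `Ext^j_R(A, B)` for unbundled modules. -/
abbrev ExtMod (R A B : Type u) [CommRing R] [AddCommGroup A] [Module R A] [AddCommGroup B]
    [Module R B] (j : ℕ) : Type u :=
  Ext (ModuleCat.of R A) (ModuleCat.of R B) j

/-- The condition `Ext^j_R(A, B) = 0`. -/
abbrev ExtVanishes (R A B : Type u) [CommRing R] [AddCommGroup A] [Module R A] [AddCommGroup B]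
    [Module R B] (j : ℕ) : Prop :=
  Subsingleton (ExtMod R A B j)

/-- The pullback `f^* : Ext^j(B, N) → Ext^j(A, N)`, linear in `f : A → B` as well. -/
def extPrecomp {j : ℕ} : (A →ₗ[R] B) →ₗ[R] ExtMod R B N j →ₗ[R] ExtMod R A N j :=
  LinearMap.mk₂ R (fun f x => (Ext.mk₀ (ModuleCat.ofHom f)).comp x (zero_add j))
    (fun f g x => by simp [ModuleCat.ofHom_add, Ext.mk₀_add])
    (fun r f x => by
      rw [show ModuleCat.ofHom (r • f) = r • ModuleCat.ofHom f from rfl, Ext.mk₀_smul,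
        Ext.smul_comp])
    (fun f x y => by simp)
    (fun r f x => by simp)

/-- The pushforward `f_* : Ext^j(N, A) → Ext^j(N, B)`, linear in `f : A → B` as well. -/
def extPostcomp {j : ℕ} : (A →ₗ[R] B) →ₗ[R] ExtMod R N A j →ₗ[R] ExtMod R N B j :=
  LinearMap.mk₂ R (fun f x => x.comp (Ext.mk₀ (ModuleCat.ofHom f)) (add_zero j))
    (fun f g x => by simp [ModuleCat.ofHom_add, Ext.mk₀_add])
    (fun r f x => by
      rw [show ModuleCat.ofHom (r • f) = r • ModuleCat.ofHom f from rfl, Ext.mk₀_smul,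
        Ext.comp_smul])
    (fun f x y => by simp)
    (fun r f x => by simp)

lemma extPrecomp_id {j : ℕ} :
    extPrecomp (N := N) (j := j) (LinearMap.id : A →ₗ[R] A) = LinearMap.id :=
  LinearMap.ext fun x => Ext.mk₀_id_comp x

lemma extPostcomp_id {j : ℕ} :
    extPostcomp (N := N) (j := j) (LinearMap.id : A →ₗ[R] A) = LinearMap.id :=
  LinearMap.ext fun x => Ext.comp_mk₀_id x

lemma extPrecomp_comp (f : A →ₗ[R] B) (g : B →ₗ[R] C) {j : ℕ} :
    extPrecomp (N := N) (j := j) (g ∘ₗ f) = extPrecomp f ∘ₗ extPrecomp g := by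
  ext x
  simp [extPrecomp, ModuleCat.ofHom_comp]

lemma extPostcomp_comp (f : A →ₗ[R] B) (g : B →ₗ[R] C) {j : ℕ} :
    extPostcomp (N := N) (j := j) (g ∘ₗ f) = extPostcomp g ∘ₗ extPostcomp f := by
  ext x
  simp only [extPostcomp, LinearMap.mk₂_apply, LinearMap.comp_apply, ModuleCat.ofHom_comp,
    ← Ext.mk₀_comp_mk₀]
  exact (Ext.comp_assoc_of_third_deg_zero _ _ _ _).symm

lemma extPrecomp_mk₀ (f : A →ₗ[R] B) (a : B →ₗ[R] N) :
    extPrecomp f (Ext.mk₀ (ModuleCat.ofHom a)) = Ext.mk₀ (ModuleCat.ofHom (a ∘ₗ f)) := by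
  simp [extPrecomp, ModuleCat.ofHom_comp]

lemma exists_mk₀_ofHom_eq (x : ExtMod R A N 0) :
    ∃ a : A →ₗ[R] N, Ext.mk₀ (ModuleCat.ofHom a) = x := by
  obtain ⟨a, rfl⟩ := (Ext.mk₀_bijective _ _).2 x
  exact ⟨a.hom, rfl⟩

lemma mk₀_ofHom_injective :
    Function.Injective fun a : A →ₗ[R] N => Ext.mk₀ (ModuleCat.ofHom a) :=
  fun _ _ h => congrArg ModuleCat.Hom.hom ((Ext.mk₀_bijective _ _).1 h)

lemma extVanishes_zero_iff : ExtVanishes R A N 0 ↔ Subsingleton (A →ₗ[R] N) := by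
  refine ⟨fun h => mk₀_ofHom_injective.subsingleton, fun h => ⟨fun x y => ?_⟩⟩
  obtain ⟨a, rfl⟩ := exists_mk₀_ofHom_eq x
  obtain ⟨b, rfl⟩ := exists_mk₀_ofHom_eq y
  rw [Subsingleton.elim a b]

lemma extVanishes_iff {j : ℕ} : ExtVanishes R A N j ↔ ∀ x : ExtMod R A N j, x = 0 :=
  subsingleton_iff_forall_eq 0

lemma smul_eq_zero_of_left {r : R} (h : ∀ a : A, r • a = 0) {j : ℕ} (x : ExtMod R A N j) :
    r • x = 0 := by
  have hr : r • (LinearMap.id : A →ₗ[R] A) = 0 := LinearMap.ext h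
  simpa [extPrecomp_id] using LinearMap.congr_fun (congrArg extPrecomp hr) x

lemma smul_eq_zero_of_right {r : R} (h : ∀ a : A, r • a = 0) {j : ℕ} (x : ExtMod R N A j) :
    r • x = 0 := by
  have hr : r • (LinearMap.id : A →ₗ[R] A) = 0 := LinearMap.ext h
  simpa [extPostcomp_id] using LinearMap.congr_fun (congrArg extPostcomp hr) x

namespace ExtVanishes

variable {j : ℕ}

lemma of_projective [Module.Projective R A] (hj : 1 ≤ j) : ExtVanishes R A N j := by
  obtain ⟨i, rfl⟩ := Nat.exists_eq_add_of_le' hj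
  have : Projective (ModuleCat.of R A) := (IsProjective.iff_projective A).1 inferInstance
  exact Ext.subsingleton_of_projective _ _ _

lemma of_sum_comp_eq_id_left {ι : Type*} (s : Finset ι) (i : ι → A →ₗ[R] B) (p : ι → B →ₗ[R] A)
    (h : ∑ k ∈ s, p k ∘ₗ i k = LinearMap.id) (hB : ExtVanishes R B N j) :
    ExtVanishes R A N j := by
  refine extVanishes_iff.2 fun x => ?_
  have hx := LinearMap.congr_fun (congrArg extPrecomp h) x
  simp only [map_sum, extPrecomp_comp, extPrecomp_id, LinearMap.sum_apply, LinearMap.comp_apply,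
    LinearMap.id_apply] at hx
  rw [← hx]
  exact Finset.sum_eq_zero fun k _ => by rw [Subsingleton.elim (extPrecomp (p k) x) 0, map_zero]

lemma of_sum_comp_eq_id_right {ι : Type*} (s : Finset ι) (i : ι → A →ₗ[R] B)
    (p : ι → B →ₗ[R] A) (h : ∑ k ∈ s, p k ∘ₗ i k = LinearMap.id) (hB : ExtVanishes R N B j) :
    ExtVanishes R N A j := by
  refine extVanishes_iff.2 fun x => ?_
  have hx := LinearMap.congr_fun (congrArg extPostcomp h) x
  simp only [map_sum, extPostcomp_comp, extPostcomp_id, LinearMap.sum_apply,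
    LinearMap.comp_apply, LinearMap.id_apply] at hx
  rw [← hx]
  exact Finset.sum_eq_zero fun k _ => by rw [Subsingleton.elim (extPostcomp (i k) x) 0, map_zero]

lemma of_retract_left (i : A →ₗ[R] B) (p : B →ₗ[R] A) (h : p ∘ₗ i = LinearMap.id)
    (hB : ExtVanishes R B N j) : ExtVanishes R A N j :=
  of_sum_comp_eq_id_left {()} (fun _ => i) (fun _ => p) (by simpa using h) hB

lemma of_retract_right (i : A →ₗ[R] B) (p : B →ₗ[R] A) (h : p ∘ₗ i = LinearMap.id)
    (hB : ExtVanishes R N B j) : ExtVanishes R N A j :=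
  of_sum_comp_eq_id_right {()} (fun _ => i) (fun _ => p) (by simpa using h) hB

lemma congr_left (e : A ≃ₗ[R] B) (hB : ExtVanishes R B N j) : ExtVanishes R A N j :=
  of_retract_left e.toLinearMap e.symm.toLinearMap (by ext; simp) hB

lemma congr_right (e : A ≃ₗ[R] B) (hB : ExtVanishes R N B j) : ExtVanishes R N A j :=
  of_retract_right e.toLinearMap e.symm.toLinearMap (by ext; simp) hB

end ExtVanishes

section LongExactSequence

variable {f : A →ₗ[R] B} {g : B →ₗ[R] C} {j : ℕ}

lemma shortExact_of_exact (hf : Function.Injective f) (h : Function.Exact f g)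
    (hg : Function.Surjective g) :
    (ModuleCat.shortComplexOfCompEqZero f g h.linearMap_comp_eq_zero).ShortExact :=
  ModuleCat.shortComplex_shortExact _ h hf hg

lemma extPrecomp_surjective (hf : Function.Injective f) (h : Function.Exact f g)
    (hg : Function.Surjective g) (hC : ExtVanishes R C N (j + 1)) :
    Function.Surjective (extPrecomp f : ExtMod R B N j →ₗ[R] ExtMod R A N j) := fun x =>
  Ext.contravariant_sequence_exact₁ (shortExact_of_exact hf h hg) _ x (add_comm 1 j)
    (extVanishes_iff.1 hC _)

lemma exists_extPrecomp_eq (hf : Function.Injective f) (h : Function.Exact f g)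
    (hg : Function.Surjective g) (x : ExtMod R B N j) (hx : extPrecomp f x = 0) :
    ∃ y : ExtMod R C N j, extPrecomp g y = x :=
  Ext.contravariant_sequence_exact₂ (shortExact_of_exact hf h hg) _ x hx

lemma extPrecomp_injective_succ (hf : Function.Injective f) (h : Function.Exact f g)
    (hg : Function.Surjective g)
    (hs : Function.Surjective (extPrecomp f : ExtMod R B N j →ₗ[R] ExtMod R A N j)) :
    Function.Injective (extPrecomp g : ExtMod R C N (j + 1) →ₗ[R] ExtMod R B N (j + 1)) := by
  refine (injective_iff_map_eq_zero _).2 fun x hx => ?_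
  obtain ⟨y, rfl⟩ :=
    Ext.contravariant_sequence_exact₃ (shortExact_of_exact hf h hg) _ x hx (add_comm 1 j)
  obtain ⟨z, rfl⟩ := hs y
  exact ShortComplex.ShortExact.extClass_comp_assoc (shortExact_of_exact hf h hg) z

lemma extPrecomp_injective_zero (hg : Function.Surjective g) :
    Function.Injective (extPrecomp g : ExtMod R C N 0 →ₗ[R] ExtMod R B N 0) :=
  have : Epi (ModuleCat.ofHom g) := (ModuleCat.epi_iff_surjective _).2 hg
  Ext.precomp_mk₀_injective_of_epi (ModuleCat.of R N) (ModuleCat.ofHom g)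

lemma extPostcomp_surjective (hf : Function.Injective f) (h : Function.Exact f g)
    (hg : Function.Surjective g) (hA : ExtVanishes R N A (j + 1)) :
    Function.Surjective (extPostcomp g : ExtMod R N B j →ₗ[R] ExtMod R N C j) := fun x =>
  Ext.covariant_sequence_exact₃ _ (shortExact_of_exact hf h hg) x rfl (extVanishes_iff.1 hA _)

lemma extPostcomp_injective_succ (hf : Function.Injective f) (h : Function.Exact f g)
    (hg : Function.Surjective g)
    (hs : Function.Surjective (extPostcomp g : ExtMod R N B j →ₗ[R] ExtMod R N C j)) :
    Function.Injective (extPostcomp f : ExtMod R N A (j + 1) →ₗ[R] ExtMod R N B (j + 1)) := by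
  refine (injective_iff_map_eq_zero _).2 fun x hx => ?_
  obtain ⟨y, rfl⟩ := Ext.covariant_sequence_exact₁ _ (shortExact_of_exact hf h hg) x hx rfl
  obtain ⟨z, rfl⟩ := hs y
  have hz : (z.comp (Ext.mk₀ (ModuleCat.ofHom g)) (add_zero j)).comp
      (shortExact_of_exact hf h hg).extClass rfl = 0 := by
    rw [Ext.comp_assoc_of_second_deg_zero]
    exact (congrArg (fun w => z.comp w rfl)
      (shortExact_of_exact hf h hg).comp_extClass).trans (Ext.comp_zero _ _ _ _ _)
  exact hz

lemma extPostcomp_injective_zero (hf : Function.Injective f) :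
    Function.Injective (extPostcomp f : ExtMod R N A 0 →ₗ[R] ExtMod R N B 0) :=
  have : Mono (ModuleCat.ofHom f) := (ModuleCat.mono_iff_injective _).2 hf
  Ext.postcomp_mk₀_injective_of_mono (ModuleCat.of R N) (ModuleCat.ofHom f)

lemma exists_extension_of_extVanishes (hf : Function.Injective f) (h : Function.Exact f g)
    (hg : Function.Surjective g) (hC : ExtVanishes R C N 1) (a : A →ₗ[R] N) :
    ∃ b : B →ₗ[R] N, b ∘ₗ f = a := by
  obtain ⟨y, hy⟩ := extPrecomp_surjective hf h hg hC (Ext.mk₀ (ModuleCat.ofHom a))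
  obtain ⟨b, rfl⟩ := exists_mk₀_ofHom_eq y
  exact ⟨b, mk₀_ofHom_injective (by simpa only [extPrecomp_mk₀] using hy)⟩

lemma extVanishes_one_of_forall_exists_extension (hf : Function.Injective f)
    (h : Function.Exact f g) (hg : Function.Surjective g) [Module.Projective R B]
    (hext : ∀ a : A →ₗ[R] N, ∃ b : B →ₗ[R] N, b ∘ₗ f = a) : ExtVanishes R C N 1 := by
  have : ExtVanishes R B N 1 := .of_projective le_rfl
  refine (extPrecomp_injective_succ hf h hg fun y => ?_).subsingleton
  obtain ⟨a, rfl⟩ := exists_mk₀_ofHom_eq y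
  obtain ⟨b, rfl⟩ := hext a
  exact ⟨Ext.mk₀ (ModuleCat.ofHom b), extPrecomp_mk₀ f b⟩

namespace ExtVanishes

lemma middle_left (hf : Function.Injective f) (h : Function.Exact f g)
    (hg : Function.Surjective g) (hA : ExtVanishes R A N j) (hC : ExtVanishes R C N j) :
    ExtVanishes R B N j := by
  refine extVanishes_iff.2 fun x => ?_
  obtain ⟨y, rfl⟩ := exists_extPrecomp_eq hf h hg x (extVanishes_iff.1 hA _)
  rw [extVanishes_iff.1 hC y, map_zero]

lemma sub_left (hf : Function.Injective f) (h : Function.Exact f g)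
    (hg : Function.Surjective g) (hB : ExtVanishes R B N j) (hC : ExtVanishes R C N (j + 1)) :
    ExtVanishes R A N j :=
  (extPrecomp_surjective hf h hg hC).subsingleton

lemma quotient_left (hf : Function.Injective f) (h : Function.Exact f g)
    (hg : Function.Surjective g) (hA : ExtVanishes R A N j) (hB : ExtVanishes R B N (j + 1)) :
    ExtVanishes R C N (j + 1) :=
  (extPrecomp_injective_succ hf h hg fun _ => ⟨0, Subsingleton.elim _ _⟩).subsingleton

lemma quotient_left_zero (hg : Function.Surjective g) (hB : ExtVanishes R B N 0) :
    ExtVanishes R C N 0 :=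
  (extPrecomp_injective_zero hg).subsingleton

lemma quotient_right (hf : Function.Injective f) (h : Function.Exact f g)
    (hg : Function.Surjective g) (hB : ExtVanishes R N B j) (hA : ExtVanishes R N A (j + 1)) :
    ExtVanishes R N C j :=
  (extPostcomp_surjective hf h hg hA).subsingleton

lemma sub_right (hf : Function.Injective f) (h : Function.Exact f g)
    (hg : Function.Surjective g) (hC : ExtVanishes R N C j) (hB : ExtVanishes R N B (j + 1)) :
    ExtVanishes R N A (j + 1) :=
  (extPostcomp_injective_succ hf h hg fun _ => ⟨0, Subsingleton.elim _ _⟩).subsingleton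

lemma sub_right_zero (hf : Function.Injective f) (hB : ExtVanishes R N B 0) :
    ExtVanishes R N A 0 :=
  (extPostcomp_injective_zero hf).subsingleton

-- Multiplication by `r` is injective on `Ext^j(N, B)`, because `Ext^{j-1}(N, B / rB) = 0`, and
-- nilpotent, because it is so on `N`.
lemma of_smul_regular_right {r : R} (hr : Function.Injective (r • LinearMap.id : B →ₗ[R] B))
    (h : Function.Exact (r • LinearMap.id : B →ₗ[R] B) g) (hg : Function.Surjective g)
    {c : ℕ} (hN : ∀ a : N, r ^ c • a = 0) (hC : ∀ i < j, ExtVanishes R N C i) :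
    ExtVanishes R N B j := by
  have hinj : Function.Injective
      (extPostcomp (r • LinearMap.id) : ExtMod R N B j →ₗ[R] ExtMod R N B j) := by
    cases j with
    | zero => exact extPostcomp_injective_zero hr
    | succ j =>
      have := hC j (Nat.lt_succ_self j)
      exact extPostcomp_injective_succ hr h hg fun _ => ⟨0, Subsingleton.elim _ _⟩
  have hreg : IsSMulRegular (ExtMod R N B j) r := fun x y hxy => hinj <| by
    simpa only [map_smul, extPostcomp_id, LinearMap.smul_apply, LinearMap.id_apply] using hxy
  exact extVanishes_iff.2 fun x =>
    (hreg.pow c).right_eq_zero_of_smul (smul_eq_zero_of_left hN x)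

end ExtVanishes

end LongExactSequence

end Ext

section AlmostExact

variable {R : Type u} [CommRing R] {ι : Type*}

/-- Every `x i` acts nilpotently on `Z`; on `S`-modules and for the variables this says that the
sheaf associated to `Z` vanishes. -/
def ActsNilpotently (x : ι → R) (Z : Type*) [AddCommGroup Z] [Module R Z] : Prop :=
  ∀ i, ∃ c : ℕ, ∀ z : Z, x i ^ c • z = 0

/-- The depth of `R` along `x` exceeds `n`: `Ext^j(Z, R) = 0` for `j ≤ n` whenever `x` acts
nilpotently on `Z`. -/
def DepthGT (x : ι → R) (n : ℕ) : Prop :=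
  ∀ (Z : Type u) [AddCommGroup Z] [Module R Z], ActsNilpotently x Z → ∀ j ≤ n, ExtVanishes R Z R j

variable {A B C : Type u} [AddCommGroup A] [Module R A] [AddCommGroup B] [Module R B]
  [AddCommGroup C] [Module R C]

/-- The kernel of `a` is `x`-nilpotent; for the variables: `a` is injective on sheaves. -/
def AlmostInjective (x : ι → R) (a : A →ₗ[R] B) : Prop :=
  ∀ i, ∃ c : ℕ, ∀ z, a z = 0 → x i ^ c • z = 0

/-- The cokernel of `a` is `x`-nilpotent; for the variables: `a` is surjective on sheaves. -/
def AlmostSurjective (x : ι → R) (a : A →ₗ[R] B) : Prop :=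
  ∀ i, ∃ c : ℕ, ∀ y, ∃ z, a z = x i ^ c • y

/-- `A → B → C` is a complex with `x`-nilpotent homology at `B`; for the variables: it is exact on
sheaves. -/
def AlmostExact (x : ι → R) (a : A →ₗ[R] B) (b : B →ₗ[R] C) : Prop :=
  b ∘ₗ a = 0 ∧ ∀ i, ∃ c : ℕ, ∀ y, b y = 0 → ∃ z, a z = x i ^ c • y

variable {x : ι → R} {n j : ℕ} {a : A →ₗ[R] B} {b : B →ₗ[R] C}

lemma AlmostSurjective.of_surjective (h : Function.Surjective a) : AlmostSurjective x a :=
  fun _ => ⟨0, fun _ => h _⟩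

lemma AlmostInjective.of_injective (h : Function.Injective a) : AlmostInjective x a :=
  fun _ => ⟨0, fun z hz => by rw [(injective_iff_map_eq_zero a).1 h z hz, smul_zero]⟩

lemma AlmostInjective.actsNilpotently_ker (ha : AlmostInjective x a) :
    ActsNilpotently x (LinearMap.ker a) := fun i =>
  (ha i).imp fun _ hc z => Subtype.ext (hc z.1 z.2)

lemma AlmostSurjective.actsNilpotently_quotient_range (ha : AlmostSurjective x a) :
    ActsNilpotently x (B ⧸ LinearMap.range a) := fun i =>
  (ha i).imp fun _ hc z => by
    obtain ⟨y, rfl⟩ := Submodule.Quotient.mk_surjective _ z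
    rw [← Submodule.Quotient.mk_smul, Submodule.Quotient.mk_eq_zero]
    exact hc y

lemma AlmostSurjective.subtype_range (hb : AlmostSurjective x b) :
    AlmostSurjective x (LinearMap.range b).subtype := fun i =>
  (hb i).imp fun _ hc y => (hc y).imp' b.rangeRestrict fun _ hz => hz

lemma AlmostExact.range_le_ker (hab : AlmostExact x a b) :
    LinearMap.range a ≤ LinearMap.ker b :=
  LinearMap.range_le_ker_iff.2 hab.1

lemma AlmostExact.inclusion_range_ker (hab : AlmostExact x a b) :
    AlmostSurjective x (Submodule.inclusion hab.range_le_ker) := fun i =>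
  (hab.2 i).imp fun _ hc y => (hc y.1 y.2).imp' a.rangeRestrict fun _ hz => Subtype.ext hz

lemma AlmostExact.subtype_range (hab : AlmostExact x a b) :
    AlmostExact x (LinearMap.range a).subtype b :=
  ⟨LinearMap.ext fun ⟨_, z, hz⟩ => hz ▸ LinearMap.congr_fun hab.1 z, fun i =>
    (hab.2 i).imp fun _ hc y hy => (hc y hy).imp' a.rangeRestrict fun _ hz => hz⟩

lemma exact_subtype_ker_rangeRestrict (b : B →ₗ[R] C) :
    Function.Exact (LinearMap.ker b).subtype b.rangeRestrict := fun y => by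
  simp [Subtype.ext_iff]

namespace ExtVanishes

lemma range_of_almostInjective (hD : DepthGT x n) (ha : AlmostInjective x a) (hj : j ≤ n + 1)
    (hA : ExtVanishes R A R j) : ExtVanishes R (LinearMap.range a) R j := by
  cases j with
  | zero => exact .quotient_left_zero a.surjective_rangeRestrict hA
  | succ j =>
    exact .quotient_left (Submodule.subtype_injective _) (exact_subtype_ker_rangeRestrict a)
      a.surjective_rangeRestrict (hD _ ha.actsNilpotently_ker j (by omega)) hA

lemma of_range_of_almostInjective (hD : DepthGT x n) (ha : AlmostInjective x a) (hj : j ≤ n)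
    (hA : ExtVanishes R (LinearMap.range a) R j) : ExtVanishes R A R j :=
  .middle_left (Submodule.subtype_injective _) (exact_subtype_ker_rangeRestrict a)
    a.surjective_rangeRestrict (hD _ ha.actsNilpotently_ker j hj) hA

lemma of_source_of_almostSurjective (hD : DepthGT x n) (ha : Function.Injective a)
    (hs : AlmostSurjective x a) (hj : j ≤ n) (hA : ExtVanishes R A R j) : ExtVanishes R B R j :=
  .middle_left ha (LinearMap.exact_map_mkQ_range a) (Submodule.mkQ_surjective _) hA
    (hD _ hs.actsNilpotently_quotient_range j hj)

lemma of_target_of_almostSurjective (hD : DepthGT x n) (ha : Function.Injective a)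
    (hs : AlmostSurjective x a) (hj : j + 1 ≤ n) (hB : ExtVanishes R B R j) :
    ExtVanishes R A R j :=
  .sub_left ha (LinearMap.exact_map_mkQ_range a) (Submodule.mkQ_surjective _) hB
    (hD _ hs.actsNilpotently_quotient_range _ hj)

lemma target_of_almostIso (hD : DepthGT x n) (hi : AlmostInjective x a)
    (hs : AlmostSurjective x a) (hj : j ≤ n) (hA : ExtVanishes R A R j) : ExtVanishes R B R j :=
  .of_source_of_almostSurjective hD (Submodule.subtype_injective _) hs.subtype_range hj
    (.range_of_almostInjective hD hi (by omega) hA)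

lemma source_of_almostIso (hD : DepthGT x n) (hi : AlmostInjective x a)
    (hs : AlmostSurjective x a) (hj : j + 1 ≤ n) (hB : ExtVanishes R B R j) :
    ExtVanishes R A R j :=
  .of_range_of_almostInjective hD hi (by omega)
    (.of_target_of_almostSurjective hD (Submodule.subtype_injective _) hs.subtype_range hj hB)

lemma ker_of_almostExact (hD : DepthGT x n) (ha : AlmostInjective x a)
    (hab : AlmostExact x a b) (hj : j ≤ n) (hA : ExtVanishes R A R j) :
    ExtVanishes R (LinearMap.ker b) R j :=
  .of_source_of_almostSurjective hD (Submodule.inclusion_injective _) hab.inclusion_range_ker hj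
    (.range_of_almostInjective hD ha (by omega) hA)

lemma of_ker_of_almostExact (hD : DepthGT x n) (ha : AlmostInjective x a)
    (hab : AlmostExact x a b) (hj : j + 1 ≤ n) (hB : ExtVanishes R (LinearMap.ker b) R j) :
    ExtVanishes R A R j :=
  .of_range_of_almostInjective hD ha (by omega)
    (.of_target_of_almostSurjective hD (Submodule.inclusion_injective _)
      hab.inclusion_range_ker hj hB)

lemma middle_of_almostExact (hD : DepthGT x n) (ha : AlmostInjective x a)
    (hab : AlmostExact x a b) (hb : AlmostSurjective x b) (hj : j + 1 ≤ n)
    (hA : ExtVanishes R A R j) (hC : ExtVanishes R C R j) : ExtVanishes R B R j :=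
  .middle_left (Submodule.subtype_injective _) (exact_subtype_ker_rangeRestrict b)
    b.surjective_rangeRestrict (.ker_of_almostExact hD ha hab (by omega) hA)
    (.of_target_of_almostSurjective hD (Submodule.subtype_injective _) hb.subtype_range hj hC)

lemma sub_of_almostExact (hD : DepthGT x n) (ha : AlmostInjective x a)
    (hab : AlmostExact x a b) (hb : AlmostSurjective x b) (hj : j + 2 ≤ n)
    (hB : ExtVanishes R B R j) (hC : ExtVanishes R C R (j + 1)) : ExtVanishes R A R j :=
  .of_ker_of_almostExact hD ha hab (by omega) <|
    .sub_left (Submodule.subtype_injective _) (exact_subtype_ker_rangeRestrict b)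
      b.surjective_rangeRestrict hB
      (.of_target_of_almostSurjective hD (Submodule.subtype_injective _) hb.subtype_range hj hC)

lemma sub_of_almostExact_of_surjective (hD : DepthGT x n) (ha : AlmostInjective x a)
    (hab : AlmostExact x a b) (hb : Function.Surjective b) (hj : j + 1 ≤ n)
    (hB : ExtVanishes R B R j) (hC : ExtVanishes R C R (j + 1)) : ExtVanishes R A R j :=
  .of_ker_of_almostExact hD ha hab hj <|
    .sub_left (Submodule.subtype_injective _) (LinearMap.exact_subtype_ker_map b) hb hB hC

lemma range_of_almostExact (hD : DepthGT x n) (ha : AlmostInjective x a)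
    (hab : AlmostExact x a b) (hj : j ≤ n) (hA : ExtVanishes R A R j)
    (hB : ExtVanishes R B R (j + 1)) : ExtVanishes R (LinearMap.range b) R (j + 1) :=
  .quotient_left (Submodule.subtype_injective _) (exact_subtype_ker_rangeRestrict b)
    b.surjective_rangeRestrict (.ker_of_almostExact hD ha hab hj hA) hB

end ExtVanishes

end AlmostExact

section Residue

variable {R : Type*} [CommRing R] {I : Ideal R} {M N : Type*} [AddCommGroup M] [Module R M]
  [AddCommGroup N] [Module R N]

lemma actsNilpotently_iff {ι : Type*} [Finite ι] {x : ι → R} :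
    ActsNilpotently x M ↔ ∃ c, Ideal.span (Set.range x) ^ c ≤ Module.annihilator R M := by
  refine ⟨fun h => ?_, fun ⟨c, hc⟩ i => ⟨c, Module.mem_annihilator.1 <|
    hc (Ideal.pow_mem_pow (Ideal.subset_span (Set.mem_range_self i)) c)⟩⟩
  refine Ideal.exists_pow_le_of_le_radical_of_fg (Ideal.span_le.2 ?_)
    (Submodule.fg_span (Set.finite_range x))
  rintro _ ⟨i, rfl⟩
  exact (h i).imp fun _ => Module.mem_annihilator.2

lemma smul_top_ne_top_of_pow_le_annihilator [Nontrivial M]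
    (hM : ∃ c, I ^ c ≤ Module.annihilator R M) : I • (⊤ : Submodule R M) ≠ ⊤ := by
  obtain ⟨c, hc⟩ := hM
  intro htop
  have hpow : ∀ d, I ^ d • (⊤ : Submodule R M) = ⊤ := fun d => by
    induction d with
    | zero => rw [pow_zero, Ideal.one_eq_top, Submodule.top_smul]
    | succ d ih => rw [pow_succ, Submodule.mul_smul, htop, ih]
  have hbot : I ^ c • (⊤ : Submodule R M) = ⊥ :=
    Submodule.le_annihilator_iff.1 (hc.trans Submodule.annihilator_top.ge)
  exact bot_ne_top (hbot.symm.trans (hpow c))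

lemma exists_linearMap_to_residue_ne_zero [I.IsMaximal] [Nontrivial M]
    (hM : ∃ c, I ^ c ≤ Module.annihilator R M) : ∃ f : M →ₗ[R] R ⧸ I, f ≠ 0 := by
  let _ := Ideal.Quotient.field I
  have : Nontrivial (M ⧸ I • (⊤ : Submodule R M)) :=
    Submodule.Quotient.nontrivial_iff.2 (smul_top_ne_top_of_pow_le_annihilator hM)
  obtain ⟨z, hz⟩ := exists_ne (0 : M ⧸ I • (⊤ : Submodule R M))
  obtain ⟨f, hf⟩ := not_forall.1 ((Module.forall_dual_apply_eq_zero_iff (R ⧸ I) z).not.2 hz)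
  obtain ⟨y, rfl⟩ := Submodule.mkQ_surjective _ z
  exact ⟨f.restrictScalars R ∘ₗ Submodule.mkQ _, fun h => hf (LinearMap.congr_fun h y)⟩

lemma exists_linearMap_of_residue_ne_zero [Nontrivial N]
    (hN : ∃ c, I ^ c ≤ Module.annihilator R N) : ∃ g : R ⧸ I →ₗ[R] N, g ≠ 0 := by
  classical
  have hc₀ : Nat.find hN ≠ 0 := fun h => by
    have hle := Nat.find_spec hN
    rw [h, pow_zero, Ideal.one_eq_top, top_le_iff, Module.annihilator_eq_top_iff] at hle
    exact not_subsingleton N hle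
  obtain ⟨a, ha, ha'⟩ := SetLike.not_le_iff_exists.1 (Nat.find_min hN (Nat.pred_lt hc₀))
  obtain ⟨y, hy⟩ := not_forall.1 (Module.mem_annihilator.not.1 ha')
  have hI : I ≤ LinearMap.ker (LinearMap.toSpanSingleton R N (a • y)) := fun r hr => by
    rw [LinearMap.mem_ker, LinearMap.toSpanSingleton_apply, smul_smul]
    refine Module.mem_annihilator.1 (Nat.find_spec hN ?_) y
    rw [← Nat.succ_pred hc₀, pow_succ']
    exact Ideal.mul_mem_mul hr ha
  refine ⟨Submodule.liftQ I _ hI, fun h => hy ?_⟩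
  have h₁ : LinearMap.toSpanSingleton R N (a • y) 1 = 0 := LinearMap.congr_fun h (I.mkQ 1)
  rwa [LinearMap.toSpanSingleton_apply, one_smul] at h₁

lemma exists_linearMap_ne_zero [hI : I.IsMaximal] [Nontrivial M] [Nontrivial N]
    (hM : ∃ c, I ^ c ≤ Module.annihilator R M) (hN : ∃ c, I ^ c ≤ Module.annihilator R N) :
    ∃ f : M →ₗ[R] N, f ≠ 0 := by
  have : IsSimpleModule R (R ⧸ I) := isSimpleModule_iff_isCoatom.2 (Ideal.isMaximal_def.1 hI)
  obtain ⟨f, hf⟩ := exists_linearMap_to_residue_ne_zero hM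
  obtain ⟨g, hg⟩ := exists_linearMap_of_residue_ne_zero hN
  exact ⟨g ∘ₗ f, fun h => hg <|
    (LinearMap.cancel_right (LinearMap.surjective_of_ne_zero hf)).1
      (h.trans (LinearMap.zero_comp f).symm)⟩

end Residue

section RegularElement

variable {R : Type*} [CommRing R] {I : Ideal R} {r : R}

lemma smul_id_quotient_injective (hr : ∀ p, r * p ∈ I → p ∈ I) :
    Function.Injective (r • LinearMap.id : R ⧸ I →ₗ[R] R ⧸ I) := by
  refine (injective_iff_map_eq_zero _).2 fun b hb => ?_
  obtain ⟨p, rfl⟩ := Submodule.mkQ_surjective I b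
  rw [LinearMap.smul_apply, LinearMap.id_apply, ← map_smul, Submodule.mkQ_apply,
    Submodule.Quotient.mk_eq_zero] at hb
  exact (Submodule.Quotient.mk_eq_zero I).2 (hr p hb)

lemma exact_smul_id_factor {J : Ideal R} (hJ : J = I ⊔ Ideal.span {r}) :
    Function.Exact (r • LinearMap.id : R ⧸ I →ₗ[R] R ⧸ I)
      (Submodule.factor (hJ ▸ le_sup_left : I ≤ J)) := fun b => by
  subst hJ
  obtain ⟨p, rfl⟩ := Submodule.mkQ_surjective I b
  rw [Submodule.factor_mk, Submodule.mkQ_apply, Submodule.Quotient.mk_eq_zero,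
    Submodule.mem_sup]
  constructor
  · rintro ⟨y, hy, z, hz, rfl⟩
    obtain ⟨w, rfl⟩ := Ideal.mem_span_singleton'.1 hz
    refine ⟨I.mkQ w, ?_⟩
    have hy₀ : I.mkQ y = 0 := (Submodule.Quotient.mk_eq_zero I).2 hy
    rw [map_add, hy₀, zero_add, mul_comm, ← smul_eq_mul, map_smul]
    rfl
  · rintro ⟨b, hb⟩
    obtain ⟨w, rfl⟩ := Submodule.mkQ_surjective I b
    refine ⟨p - r * w, ?_, r * w, Ideal.mem_span_singleton.2 ⟨w, rfl⟩, by ring⟩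
    exact (Submodule.Quotient.eq I).1 (hb.symm.trans (I.mkQ.map_smul r w).symm)

end RegularElement

section Polynomial

variable {K n}

/-- The homogeneous coordinates `X₀, …, Xₙ` of `S`. -/
abbrev coords (K : Type) [Field K] (n : ℕ) : Fin (n + 1) → PolyS K n := MvPolynomial.X

/-- The ideal `(X₀, …, X_{r-1})` generated by the first `r` coordinates. -/
def coordIdeal (K : Type) [Field K] (n r : ℕ) : Ideal (PolyS K n) :=
  Ideal.span (MvPolynomial.X '' {i : Fin (n + 1) | i.val < r})

lemma coordIdeal_zero : coordIdeal K n 0 = ⊥ := by simp [coordIdeal]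

lemma coordIdeal_top : coordIdeal K n (n + 1) = irrel K n := by
  simp [coordIdeal, irrel, -Order.lt_add_one_iff]

lemma coordIdeal_succ (i : Fin (n + 1)) :
    coordIdeal K n (i.val + 1) = coordIdeal K n i ⊔ Ideal.span {coords K n i} := by
  have : {j : Fin (n + 1) | j.val < i.val + 1} = {j | j.val < i.val} ∪ {i} := by
    ext j
    simp only [Set.mem_ofPred_eq, Set.mem_union, Set.mem_singleton_iff, Fin.ext_iff]
    omega
  rw [coordIdeal, this, Set.image_union, Ideal.span_union, Set.image_singleton]
  rfl

lemma mem_coordIdeal_of_mul_mem (i : Fin (n + 1)) (p : PolyS K n)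
    (h : coords K n i * p ∈ coordIdeal K n i) : p ∈ coordIdeal K n i := by
  rw [coordIdeal, MvPolynomial.mem_ideal_span_X_image] at h ⊢
  intro m hm
  obtain ⟨j, hj, hj'⟩ := h (Finsupp.single i 1 + m) <| by
    rw [MvPolynomial.mem_support_iff, MvPolynomial.coeff_X_mul]
    exact MvPolynomial.mem_support_iff.1 hm
  have hij : i ≠ j := fun hij => (hij ▸ hj : i.val < i).false
  exact ⟨j, hj, by simpa [Finsupp.single_apply, hij] using hj'⟩

instance irrel_isMaximal : (irrel K n).IsMaximal := by
  have hker : irrel K n = RingHom.ker (MvPolynomial.constantCoeff (R := K)) := by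
    ext p
    rw [RingHom.mem_ker, irrel, ← Set.image_univ, MvPolynomial.mem_ideal_span_X_image,
      MvPolynomial.constantCoeff_eq]
    refine ⟨fun h => ?_, fun h m hm => ?_⟩
    · by_contra h₀
      obtain ⟨i, -, hi⟩ := h 0 (MvPolynomial.mem_support_iff.2 h₀)
      exact hi rfl
    · by_contra! hm₀
      obtain rfl : m = 0 := Finsupp.ext fun i => hm₀ i trivial
      exact MvPolynomial.mem_support_iff.1 hm h
  rw [hker]
  exact RingHom.ker_isMaximal_of_surjective _ fun a => ⟨MvPolynomial.C a, by simp⟩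

section ExtFrom

variable {Z : Type} [AddCommGroup Z] [Module (PolyS K n) Z]

lemma ActsNilpotently.extVanishes_quotient_coordIdeal (hZ : ActsNilpotently (coords K n) Z)
    {j r : ℕ} (hj : j + r ≤ n) : ExtVanishes (PolyS K n) Z (PolyS K n ⧸ coordIdeal K n r) j := by
  induction j using Nat.strong_induction_on generalizing r with
  | _ j ih =>
    let i : Fin (n + 1) := ⟨r, by omega⟩
    obtain ⟨c, hc⟩ := hZ i
    exact .of_smul_regular_right (smul_id_quotient_injective (mem_coordIdeal_of_mul_mem i))
      (exact_smul_id_factor (coordIdeal_succ i)) (Submodule.factor_surjective _) hc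
      fun l hl => ih l hl (by omega : l + (r + 1) ≤ n)

lemma depthGT_coords : DepthGT (coords K n) n := fun _ _ _ hZ j hj =>
  .congr_right (Submodule.quotEquivOfEqBot _ coordIdeal_zero).symm
    (hZ.extVanishes_quotient_coordIdeal (by simpa using hj))

lemma ActsNilpotently.extVanishes_of_free (hZ : ActsNilpotently (coords K n) Z) {F : Type}
    [AddCommGroup F] [Module (PolyS K n) F] [Module.Free (PolyS K n) F]
    [Module.Finite (PolyS K n) F] {j : ℕ} (hj : j ≤ n) : ExtVanishes (PolyS K n) Z F j := by
  let b := Module.Free.chooseBasis (PolyS K n) F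
  refine .of_sum_comp_eq_id_right Finset.univ (fun i => b.coord i)
    (fun i => LinearMap.toSpanSingleton (PolyS K n) F (b i)) ?_ (depthGT_coords Z hZ j hj)
  ext y
  simp [b.sum_repr]

lemma ActsNilpotently.extVanishes_quotient_coordIdeal_of_top
    (hZ : ActsNilpotently (coords K n) Z)
    (h : ExtVanishes (PolyS K n) Z (PolyS K n) (n + 1)) {j r : ℕ} (hj : j + r = n + 1) :
    ExtVanishes (PolyS K n) Z (PolyS K n ⧸ coordIdeal K n r) j := by
  induction r generalizing j with
  | zero =>
    obtain rfl : j = n + 1 := hj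
    exact .congr_right (Submodule.quotEquivOfEqBot _ coordIdeal_zero) h
  | succ r ih =>
    let i : Fin (n + 1) := ⟨r, by omega⟩
    exact .quotient_right (smul_id_quotient_injective (mem_coordIdeal_of_mul_mem i))
      (exact_smul_id_factor (coordIdeal_succ i)) (Submodule.factor_surjective _)
      (hZ.extVanishes_quotient_coordIdeal (r := r) (by omega)) (ih (by omega))

lemma ActsNilpotently.exists_pow_irrel_le (hZ : ActsNilpotently (coords K n) Z) :
    ∃ c, irrel K n ^ c ≤ Module.annihilator (PolyS K n) Z :=
  actsNilpotently_iff.1 hZ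

lemma ActsNilpotently.subsingleton_of_extVanishes_top (hZ : ActsNilpotently (coords K n) Z)
    (h : ExtVanishes (PolyS K n) Z (PolyS K n) (n + 1)) : Subsingleton Z := by
  by_contra hc
  rw [not_subsingleton_iff_nontrivial] at hc
  obtain ⟨f, hf⟩ := exists_linearMap_to_residue_ne_zero hZ.exists_pow_irrel_le
  have h₀ := hZ.extVanishes_quotient_coordIdeal_of_top h (zero_add (n + 1))
  rw [coordIdeal_top, extVanishes_zero_iff] at h₀
  exact hf (Subsingleton.elim f 0)

lemma ActsNilpotently.not_extVanishes_zero {M : Type} [AddCommGroup M] [Module (PolyS K n) M]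
    (hM : ActsNilpotently (coords K n) M) (hZ : ActsNilpotently (coords K n) Z) [Nontrivial M]
    [Nontrivial Z] : ¬ ExtVanishes (PolyS K n) M Z 0 := fun h => by
  obtain ⟨f, hf⟩ := exists_linearMap_ne_zero hM.exists_pow_irrel_le hZ.exists_pow_irrel_le
  exact hf ((extVanishes_zero_iff.1 h).elim f 0)

variable {N : Type} [AddCommGroup N] [Module (PolyS K n) N]

lemma extVanishes_quotient_coordIdeal_left {r j : ℕ} (hr : r ≤ n + 1) (hj : r < j) :
    ExtVanishes (PolyS K n) (PolyS K n ⧸ coordIdeal K n r) N j := by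
  induction r generalizing j with
  | zero =>
    exact .congr_left (Submodule.quotEquivOfEqBot _ coordIdeal_zero) (.of_projective hj)
  | succ r ih =>
    obtain ⟨j, rfl⟩ := Nat.exists_eq_add_of_le' (Nat.one_le_of_lt hj)
    let i : Fin (n + 1) := ⟨r, hr⟩
    exact .quotient_left (smul_id_quotient_injective (mem_coordIdeal_of_mul_mem i))
      (exact_smul_id_factor (coordIdeal_succ i)) (Submodule.factor_surjective _)
      (ih (by omega) (by omega)) (ih (by omega) (by omega))

lemma ActsNilpotently.extVanishes_of_lt [Module.Finite (PolyS K n) Z]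
    (hZ : ActsNilpotently (coords K n) Z) {j : ℕ} (hj : n + 1 < j) :
    ExtVanishes (PolyS K n) Z N j := by
  revert hZ
  refine IsNoetherianRing.induction_on_isQuotientEquivQuotientPrime (PolyS K n) inferInstance
    (motive := fun Z _ _ _ => ActsNilpotently (coords K n) Z → ExtVanishes (PolyS K n) Z N j)
    ?_ ?_ ?_
  · intro Z _ _ _ _ _
    exact .of_projective (by omega)
  · intro Z _ _ _ p e hZ
    obtain ⟨c, hc⟩ := hZ.exists_pow_irrel_le
    rw [e.annihilator_eq, Ideal.annihilator_quotient] at hc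
    have hp : coordIdeal K n (n + 1) = p.asIdeal :=
      coordIdeal_top.trans (irrel_isMaximal.eq_of_le p.2.ne_top (p.2.le_of_pow_le hc))
    exact .congr_left (e.trans (Submodule.quotEquivOfEq _ _ hp.symm))
      (extVanishes_quotient_coordIdeal_left le_rfl hj)
  · intro _ _ _ _ _ _ _ _ _ _ _ _ f g hf hg hfg hA hC hB
    refine .middle_left hf hfg hg (hA fun i => ?_) (hC fun i => ?_)
    · exact (hB i).imp fun c hc z => hf (by rw [map_smul, hc, map_zero])
    · refine (hB i).imp fun c hc z => ?_
      obtain ⟨w, rfl⟩ := hg z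
      rw [← map_smul, hc, map_zero]

end ExtFrom

end Polynomial

section Rigidity

variable {R V N : Type u} [CommRing R] [AddCommGroup V] [Module R V] [AddCommGroup N] [Module R N]

lemma extPrecomp_pow (f : Module.End R V) {p : ℕ} (c : ℕ) :
    extPrecomp (N := N) (j := p) (f ^ c) = (extPrecomp f : Module.End R (ExtMod R V N p)) ^ c := by
  induction c with
  | zero => exact extPrecomp_id
  | succ c ih =>
    rw [pow_succ' (extPrecomp f : Module.End R (ExtMod R V N p)), ← ih]
    exact extPrecomp_comp f (f ^ c)

lemma subsingleton_of_isNilpotent_of_surjective {f : Module.End R V} (hf : IsNilpotent f)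
    (hs : Function.Surjective f) : Subsingleton V := by
  obtain ⟨c, hc⟩ := hf
  refine subsingleton_of_forall_eq (0 : V) fun v => ?_
  obtain ⟨w, rfl⟩ := hs.iterate c v
  rw [← Module.End.coe_pow, hc, LinearMap.zero_apply]

/-- The module `V[t]`, with `R` acting through `φ : R → R[t]`. When `φ` reduces to the identity at
`t = 0`, this is a one-parameter deformation of `V`. -/
def Deformation (_ : R →+* Polynomial R) (V : Type u) [AddCommGroup V] [Module R V] : Type u :=
  PolynomialModule R V

namespace Deformation

variable (φ : R →+* Polynomial R)

instance : AddCommGroup (Deformation φ V) := inferInstanceAs (AddCommGroup (PolynomialModule R V))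

instance : Module (Polynomial R) (Deformation φ V) :=
  inferInstanceAs (Module (Polynomial R) (PolynomialModule R V))

instance : Module R (Deformation φ V) := Module.compHom _ φ

lemma smul_def (r : R) (v : Deformation φ V) : r • v = φ r • v := rfl

instance : SMulCommClass (Polynomial R) R (Deformation φ V) :=
  ⟨fun p r v => by rw [smul_def, smul_def, smul_comm]⟩

variable (V) in
/-- The `R`-linear action of a polynomial in `t` on a deformation. -/
def mul : Polynomial R →+* Module.End R (Deformation φ V) := Module.toModuleEnd R _

lemma mul_map (r : R) : mul V φ (φ r) = r • 1 := rfl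

lemma C_smul_eq_zero {r : R} (hr : ∀ v : V, r • v = 0) (v : Deformation φ V) :
    (Polynomial.C r : Polynomial R) • v = 0 := by
  refine PolynomialModule.ext (Finsupp.ext fun m => ?_)
  change ((Polynomial.C r : Polynomial R) • (show PolynomialModule R V from v)).coeff m = 0
  rw [← Polynomial.monomial_zero_left, PolynomialModule.monomial_smul_apply]
  simp [hr]

lemma X_smul_coeff_zero (v : PolynomialModule R V) :
    ((Polynomial.X : Polynomial R) • v).coeff 0 = 0 := by
  rw [← Polynomial.monomial_one_one_eq_X, PolynomialModule.monomial_smul_apply]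
  simp

lemma X_smul_coeff_succ (v : PolynomialModule R V) (m : ℕ) :
    ((Polynomial.X : Polynomial R) • v).coeff (m + 1) = v.coeff m := by
  rw [← Polynomial.monomial_one_one_eq_X, PolynomialModule.monomial_smul_apply]
  simp

lemma mul_X_injective : Function.Injective (mul V φ Polynomial.X) := fun v w h =>
  PolynomialModule.ext <| Finsupp.ext fun m =>
    (X_smul_coeff_succ v m).symm.trans <|
      (congrArg (fun u : PolynomialModule R V => u.coeff (m + 1)) h).trans (X_smul_coeff_succ w m)

variable {φ} (hφ : ∀ r, (φ r).eval 0 = r)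

/-- The fibre of a deformation at `t = 0`. -/
def specialize : Deformation φ V →ₗ[R] V where
  toFun v := PolynomialModule.eval (0 : R) (show PolynomialModule R V from v)
  map_add' _ _ := map_add _ _ _
  map_smul' r v := by
    refine (PolynomialModule.eval_smul (φ r) _ 0).trans ?_
    rw [hφ]
    rfl

lemma specialize_surjective : Function.Surjective (specialize (V := V) hφ) := fun v =>
  ⟨PolynomialModule.single R 0 v, (PolynomialModule.eval_single _ 0 v).trans (by simp)⟩

lemma specialize_apply (v : PolynomialModule R V) : specialize hφ v = v.coeff 0 := by
  induction v using PolynomialModule.induction_linear with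
  | zero => exact map_zero (specialize (V := V) hφ)
  | add v w hv hw => exact (map_add (specialize (V := V) hφ) v w).trans (congrArg₂ (· + ·) hv hw)
  | single m v =>
    refine (PolynomialModule.eval_single _ m v).trans ?_
    cases m <;> simp

lemma exact_mul_X_specialize :
    Function.Exact (mul V φ Polynomial.X) (specialize (V := V) hφ) := by
  intro v
  constructor
  · intro hv
    refine ⟨PolynomialModule.ofCoeff _ (Finsupp.comapDomain Nat.succ
      (show PolynomialModule R V from v).coeff Nat.succ_injective.injOn), ?_⟩
    refine PolynomialModule.ext (Finsupp.ext fun m => ?_)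
    cases m with
    | zero => exact (X_smul_coeff_zero _).trans ((specialize_apply hφ v).symm.trans hv).symm
    | succ m => exact (X_smul_coeff_succ _ m).trans (by simp)
  · rintro ⟨w, rfl⟩
    exact (specialize_apply hφ _).trans (X_smul_coeff_zero w)

/-- On `Ext^p(V[t], N)` multiplication by `t` is the difference of the action of `r`, nilpotent
because of `N`, and the action of the constant polynomial `r`, nilpotent because of `V`. -/
lemma isNilpotent_extPrecomp_mul_X {r : R} (hr : φ r = Polynomial.C r + Polynomial.X)
    (hV : ∃ c : ℕ, ∀ v : V, r ^ c • v = 0) (hN : ∃ a : ℕ, ∀ y : N, r ^ a • y = 0) (p : ℕ) :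
    IsNilpotent (extPrecomp (mul V φ Polynomial.X) :
      Module.End R (ExtMod R (Deformation φ V) N p)) := by
  obtain ⟨c, hc⟩ := hV
  obtain ⟨a, ha⟩ := hN
  let T : Module.End R (ExtMod R (Deformation φ V) N p) :=
    extPrecomp (mul V φ (Polynomial.C r))
  have hX : extPrecomp (mul V φ Polynomial.X) = algebraMap R (Module.End R _) r - T := by
    rw [eq_sub_of_add_eq' hr.symm, map_sub, map_sub, mul_map, map_smul]
    exact congrArg (r • · - T) extPrecomp_id
  have hT : T ^ c = 0 := by
    rw [← extPrecomp_pow, ← map_pow, ← Polynomial.C_pow,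
      show mul V φ (Polynomial.C (r ^ c)) = 0 from LinearMap.ext (C_smul_eq_zero φ hc), map_zero]
  rw [hX]
  refine Commute.isNilpotent_sub (Algebra.commutes r T) ⟨a, ?_⟩ ⟨c, hT⟩
  rw [← map_pow]
  exact LinearMap.ext (smul_eq_zero_of_right ha)

lemma extVanishes_of_succ {r : R} (hr : φ r = Polynomial.C r + Polynomial.X)
    (hφ : ∀ s, (φ s).eval 0 = s) (hV : ∃ c : ℕ, ∀ v : V, r ^ c • v = 0)
    (hN : ∃ a : ℕ, ∀ y : N, r ^ a • y = 0) {p : ℕ} (h : ExtVanishes R V N (p + 1)) :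
    ExtVanishes R (Deformation φ V) N p :=
  subsingleton_of_isNilpotent_of_surjective (isNilpotent_extPrecomp_mul_X hr hV hN p)
    (extPrecomp_surjective (mul_X_injective φ) (exact_mul_X_specialize hφ)
      (specialize_surjective hφ) h)

end Deformation

end Rigidity

section Translate

variable {K n}

/-- The substitution `X_i ↦ X_i + t`. -/
def translate (i : Fin (n + 1)) : PolyS K n →+* Polynomial (PolyS K n) :=
  MvPolynomial.eval₂Hom (Polynomial.C.comp MvPolynomial.C)
    fun j => if j = i then Polynomial.C (coords K n j) + Polynomial.X
      else Polynomial.C (coords K n j)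

lemma eval_zero_translate (i : Fin (n + 1)) (s : PolyS K n) : (translate i s).eval 0 = s := by
  have h : (Polynomial.evalRingHom (0 : PolyS K n)).comp (translate i) = RingHom.id _ := by
    refine MvPolynomial.ringHom_ext (fun r => ?_) fun j => ?_
    · simp [translate]
    · by_cases hj : j = i <;> simp [translate, hj]
  exact RingHom.congr_fun h s

lemma translate_coords_self (i : Fin (n + 1)) :
    translate i (coords K n i) = Polynomial.C (coords K n i) + Polynomial.X := by
  simp [translate]

lemma translate_coords_of_ne {i j : Fin (n + 1)} (h : j ≠ i) :
    translate i (coords K n j) = Polynomial.C (coords K n j) := by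
  simp [translate, h]

variable {N : Type} [AddCommGroup N] [Module (PolyS K n) N]

/-- Each step trades one cohomological degree for the nilpotence of one variable, by translating
along that variable. -/
lemma ActsNilpotently.not_extVanishes_of_le (hN : ActsNilpotently (coords K n) N) {p s : ℕ}
    (hps : p + s ≤ n + 1) {V : Type} [AddCommGroup V] [Module (PolyS K n) V]
    (hV : ∀ j : Fin (n + 1), s ≤ j → ∃ c : ℕ, ∀ v : V, coords K n j ^ c • v = 0)
    (h₀ : ¬ ExtVanishes (PolyS K n) V N 0) : ¬ ExtVanishes (PolyS K n) V N p := by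
  induction p generalizing s V with
  | zero => exact h₀
  | succ p ih =>
    intro h
    let i : Fin (n + 1) := ⟨s, by omega⟩
    refine ih (s := s + 1) (V := Deformation (translate i) V) (by omega) (fun j hj => ?_)
      (fun h' => h₀ (h'.quotient_left_zero
        (Deformation.specialize_surjective (eval_zero_translate i))))
      (Deformation.extVanishes_of_succ (translate_coords_self i) (eval_zero_translate i)
        (hV i le_rfl) (hN i) h)
    have hji : j ≠ i := by
      rintro rfl
      exact Nat.not_succ_le_self s hj
    refine (hV j (Nat.le_of_succ_le hj)).imp fun c hc v => ?_
    rw [Deformation.smul_def, map_pow, translate_coords_of_ne hji, ← Polynomial.C_pow]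
    exact Deformation.C_smul_eq_zero _ hc v

lemma ActsNilpotently.not_extVanishes {M : Type} [AddCommGroup M] [Module (PolyS K n) M]
    (hM : ActsNilpotently (coords K n) M) (hN : ActsNilpotently (coords K n) N) [Nontrivial M]
    [Nontrivial N] {p : ℕ} (hp : p ≤ n + 1) : ¬ ExtVanishes (PolyS K n) M N p :=
  hN.not_extVanishes_of_le (s := 0) hp (fun j _ => hM j) (hM.not_extVanishes_zero hN)

end Translate

section LocalCohomology

variable {R : Type u} [CommRing R]

lemma exists_homotopy_smul_id {X : ModuleCat.{u} R} (P : ProjectiveResolution X) {r : R}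
    (hr : ∀ x : X, r • x = 0) : Nonempty (Homotopy (r • 𝟙 P.complex) 0) := by
  refine ⟨ProjectiveResolution.liftHomotopyZero (r • 𝟙 P.complex) ?_⟩
  refine HomologicalComplex.to_single_hom_ext ?_
  have h₀ : (r • 𝟙 P.complex : P.complex ⟶ P.complex).f 0 ≫ P.π.f 0 = r • P.π.f 0 :=
    (Linear.smul_comp _ _ _ r (𝟙 (P.complex.X 0)) (P.π.f 0)).trans (by rw [Category.id_comp])
  rw [HomologicalComplex.comp_f, h₀]
  ext z
  exact hr (P.π.f 0 z)

/-- Precomposing a cocycle with the homotopy exhibits `r` times it as a coboundary. -/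
lemma smul_homology_linearYonedaObj_eq_zero {C : ChainComplex (ModuleCat.{u} R) ℕ} {r : R}
    (h : Homotopy (r • 𝟙 C) 0) (Y : ModuleCat.{u} R) {i : ℕ}
    (y : (C.linearYonedaObj R Y).homology (i + 1)) : r • y = 0 := by
  let D := C.linearYonedaObj R Y
  obtain ⟨z, rfl⟩ := (ModuleCat.epi_iff_surjective (D.homologyπ (i + 1))).1 inferInstance y
  let q : C.X (i + 1) ⟶ Y := D.iCycles (i + 1) z
  have hq : C.d (i + 1 + 1) (i + 1) ≫ q = 0 := by
    change D.d (i + 1) (i + 1 + 1) (D.iCycles (i + 1) z) = 0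
    rw [← ConcreteCategory.comp_apply, HomologicalComplex.iCycles_d]
    rfl
  have hrq : r • q = C.d (i + 1) i ≫ h.hom i (i + 1) ≫ q := by
    have hcomm := h.comm (i + 1)
    rw [Homotopy.dNext_succ_chainComplex, Homotopy.prevD_chainComplex] at hcomm
    have hr : (r • 𝟙 C : C ⟶ C).f (i + 1) ≫ q = r • q := by simp
    rw [← hr, hcomm]
    simp [hq]
  let w : D.X i := h.hom i (i + 1) ≫ q
  have hz : r • z = D.toCycles i (i + 1) w := by
    apply (ModuleCat.mono_iff_injective (D.iCycles (i + 1))).1 inferInstance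
    rw [map_smul, ← ConcreteCategory.comp_apply, HomologicalComplex.toCycles_i]
    exact hrq
  rw [← map_smul, hz, ← ConcreteCategory.comp_apply, HomologicalComplex.toCycles_comp_homologyπ]
  rfl

lemma smul_ext_eq_zero {X Y : ModuleCat.{u} R} {r : R} (hr : ∀ x : X, r • x = 0) {i : ℕ}
    (y : ((_root_.Ext R (ModuleCat.{u} R) (i + 1)).obj (Opposite.op X)).obj Y) : r • y = 0 := by
  let P := ProjectiveResolution.of X
  obtain ⟨h⟩ := exists_homotopy_smul_id P hr
  have he := (P.isoExt (R := R) (i + 1) Y).toLinearEquiv.injective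
  refine he ?_
  rw [map_smul, map_zero]
  exact smul_homology_linearYonedaObj_eq_zero h Y _

lemma exists_pow_smul_localCohomology_eq_zero {R : Type} [CommRing R] (J : Ideal R) {i : ℕ}
    {E : ModuleCat.{0} R}
    (y : (localCohomology J (i + 1)).obj E) : ∃ t, ∀ r ∈ J ^ t, r • y = 0 := by
  have := localCohomology.hasColimitDiagram.{0, 0} (localCohomology.idealPowersDiagram J) (i + 1)
  have hc := Limits.isColimitOfPreserves ((evaluation _ _).obj E) (Limits.colimit.isColimit
    (localCohomology.diagram (localCohomology.idealPowersDiagram J) (i + 1)))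
  obtain ⟨t, z, rfl⟩ := Limits.Concrete.isColimit_exists_rep _ hc y
  refine ⟨t.unop.unop, fun r hr => ?_⟩
  have hz : r • z = 0 := smul_ext_eq_zero (fun x => ?_) z
  · exact (map_smul (ModuleCat.Hom.hom _) r z).symm.trans ((congrArg _ hz).trans (map_zero _))
  · obtain ⟨x, rfl⟩ := Submodule.Quotient.mk_surjective _ x
    exact (Submodule.Quotient.mk_eq_zero _).2 (Ideal.mul_mem_right _ _ hr)

end LocalCohomology

section Hstar

variable {K n}

lemma actsNilpotently_of_forall_exists {R M ι : Type*} [CommRing R] [AddCommGroup M] [Module R M]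
    [Module.Finite R M] {x : ι → R} (h : ∀ i, ∀ y : M, ∃ t : ℕ, x i ^ t • y = 0) :
    ActsNilpotently x M := by
  intro i
  choose t ht using h i
  obtain ⟨s, hs⟩ := Module.Finite.fg_top (R := R) (M := M)
  refine ⟨s.sup t, fun z => ?_⟩
  have hker : Submodule.span R (s : Set M) ≤
      LinearMap.ker (x i ^ s.sup t • LinearMap.id : M →ₗ[R] M) :=
    Submodule.span_le.2 fun y hy => by
      change x i ^ s.sup t • y = 0
      rw [← Nat.sub_add_cancel (Finset.le_sup (f := t) hy), pow_add, mul_smul, ht, smul_zero]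
  exact hker (hs ▸ Submodule.mem_top)

lemma actsNilpotently_Hstar (i : ℕ) (E : Type) [AddCommGroup E] [Module (PolyS K n) E]
    [Module.Finite (PolyS K n) (Hstar K n i E)] :
    ActsNilpotently (coords K n) (Hstar K n i E) :=
  actsNilpotently_of_forall_exists fun a y => by
    obtain ⟨t, ht⟩ := exists_pow_smul_localCohomology_eq_zero (irrel K n)
      (E := ModuleCat.of (PolyS K n) E) y
    have ha : coords K n a ∈ irrel K n := Ideal.subset_span ⟨a, rfl⟩
    exact ⟨t, ht _ (Ideal.pow_mem_pow ha t)⟩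

end Hstar

section Tensor

variable {R : Type u} [CommRing R] {A B C N X L : Type u} [AddCommGroup A] [Module R A]
  [AddCommGroup B] [Module R B] [AddCommGroup C] [Module R C] [AddCommGroup N] [Module R N]
  [AddCommGroup X] [Module R X] [AddCommGroup L] [Module R L]

lemma exists_comp_rangeRestrict_eq {f : A →ₗ[R] B} {φ : A →ₗ[R] N}
    (hφ : LinearMap.ker f ≤ LinearMap.ker φ) :
    ∃ ψ : LinearMap.range f →ₗ[R] N, ψ ∘ₗ f.rangeRestrict = φ :=
  (LinearMap.exact_lcomp_of_exact_of_surjective N (exact_subtype_ker_rangeRestrict f)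
    f.surjective_rangeRestrict φ).1 (LinearMap.ext fun z => hφ z.2)

lemma exists_extension_of_extVanishes_of_ker_le {f : A →ₗ[R] B} {g : B →ₗ[R] C}
    (h : Function.Exact f g) (hg : Function.Surjective g) (hC : ExtVanishes R C N 1)
    {φ : A →ₗ[R] N} (hφ : LinearMap.ker f ≤ LinearMap.ker φ) : ∃ b : B →ₗ[R] N, b ∘ₗ f = φ := by
  obtain ⟨ψ, rfl⟩ := exists_comp_rangeRestrict_eq hφ
  have hr : Function.Exact (LinearMap.range f).subtype g :=
    LinearMap.exact_iff.2 ((LinearMap.exact_iff.1 h).trans (Submodule.range_subtype _).symm)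
  obtain ⟨b, rfl⟩ :=
    exists_extension_of_extVanishes (Submodule.subtype_injective _) hr hg hC ψ
  exact ⟨b, rfl⟩

lemma ExtVanishes.tensor_of_free [Module.Free R L] [Module.Finite R L] {j : ℕ}
    (h : ExtVanishes R X N j) : ExtVanishes R (X ⊗[R] L) N j := by
  let b := Module.Free.chooseBasis R L
  refine .of_sum_comp_eq_id_left Finset.univ
    (fun i => TensorProduct.rid R X ∘ₗ (b.coord i).lTensor X)
    (fun i => (LinearMap.toSpanSingleton R L (b i)).lTensor X ∘ₗ (TensorProduct.rid R X).symm) ?_ h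
  ext x l
  simp [← TensorProduct.tmul_smul, ← TensorProduct.tmul_sum, b.sum_repr]

lemma almostExact_of_exact {ι : Type*} {x : ι → R} {f : A →ₗ[R] B} {g : B →ₗ[R] C}
    (h : Function.Exact f g) : AlmostExact x f g :=
  ⟨h.linearMap_comp_eq_zero, fun i => ⟨0, fun y hy => by simpa using (h y).1 hy⟩⟩

end Tensor

section Syzygy

variable {K n} {N : Type} [AddCommGroup N] [Module (PolyS K n) N]

/-- The syzygy module `P_j(N)`, the image of `L_{j+1} → L_j`. -/
abbrev Syzygy (res : MinimalResolution K n N) (j : ℕ) : Type := LinearMap.range (res.d j)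

variable (res : MinimalResolution K n N)

instance (j : ℕ) : Module.Free (PolyS K n) (res.L j) := res.free j
instance (j : ℕ) : Module.Finite (PolyS K n) (res.L j) := res.finite j

namespace Syzygy

/-- The inclusion `P_j(N) → L_j`. -/
def incl (j : ℕ) : Syzygy res j →ₗ[PolyS K n] res.L j := (LinearMap.range (res.d j)).subtype

/-- The projection `L_{j+1} → P_j(N)`. -/
def proj (j : ℕ) : res.L (j + 1) →ₗ[PolyS K n] Syzygy res j := (res.d j).rangeRestrict

lemma incl_injective (j : ℕ) : Function.Injective (incl res j) := Submodule.subtype_injective _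

lemma proj_surjective (j : ℕ) : Function.Surjective (proj res j) :=
  LinearMap.surjective_rangeRestrict _

lemma exact_incl_proj (j : ℕ) : Function.Exact (incl res (j + 1)) (proj res j) := by
  rw [LinearMap.exact_iff, proj, LinearMap.ker_rangeRestrict, incl, Submodule.range_subtype,
    res.exact]

lemma exact_incl_aug : Function.Exact (incl res 0) res.aug := by
  rw [LinearMap.exact_iff, incl, Submodule.range_subtype, res.exact0]

/-- Multiplication by `f` is null-homotopic on the resolution. -/
lemma exists_comp_incl_eq_smul {f : PolyS K n} (hf : ∀ z : N, f • z = 0) (j : ℕ) :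
    ∃ s : res.L j →ₗ[PolyS K n] Syzygy res j, s ∘ₗ incl res j = f • LinearMap.id := by
  induction j with
  | zero =>
    refine ⟨LinearMap.codRestrict _ (f • LinearMap.id) fun c => ?_, rfl⟩
    rw [res.exact0, LinearMap.mem_ker]
    simp [hf]
  | succ j ih =>
    obtain ⟨s, hs⟩ := ih
    obtain ⟨t, ht⟩ := Module.projective_lifting_property (proj res j) s (proj_surjective res j)
    have hdt (l) : res.d j (t (res.d j l)) = f • res.d j l := congrArg Subtype.val
      ((LinearMap.congr_fun ht (res.d j l)).trans (LinearMap.congr_fun hs (proj res j l)))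
    refine ⟨LinearMap.codRestrict _ (f • LinearMap.id - t ∘ₗ res.d j) fun l => ?_, ?_⟩
    · rw [res.exact, LinearMap.mem_ker]
      simp [hdt]
    · refine LinearMap.ext fun q => Subtype.ext ?_
      have hq : res.d j (incl res (j + 1) q) = 0 := (res.exact j).le q.2
      change f • incl res (j + 1) q - t (res.d j (incl res (j + 1) q)) = f • incl res (j + 1) q
      rw [hq, map_zero, sub_zero]

variable {T : Type} [AddCommGroup T] [Module (PolyS K n) T]

lemma extVanishes_succ_iff {i j : ℕ} :
    ExtVanishes (PolyS K n) (Syzygy res j) T (i + 1) ↔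
      ExtVanishes (PolyS K n) N T (i + j + 2) := by
  induction j generalizing i with
  | zero =>
    exact ⟨fun h => .quotient_left (incl_injective res 0) (exact_incl_aug res) res.aug_surjective h
        (.of_projective (by omega)),
      fun h => .sub_left (incl_injective res 0) (exact_incl_aug res) res.aug_surjective
        (.of_projective (by omega)) h⟩
  | succ j ih =>
    rw [show i + (j + 1) + 2 = i + 1 + j + 2 by omega, ← ih]
    exact ⟨fun h => .quotient_left (incl_injective res _) (exact_incl_proj res j)
        (proj_surjective res j) h (.of_projective (by omega)),
      fun h => .sub_left (incl_injective res _) (exact_incl_proj res j)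
        (proj_surjective res j) (.of_projective (by omega)) h⟩

end Syzygy

lemma finite_of_minimalResolution (res : MinimalResolution K n N) :
    Module.Finite (PolyS K n) N :=
  Module.Finite.of_surjective res.aug res.aug_surjective

lemma ActsNilpotently.extVanishes_self (hN : ActsNilpotently (coords K n) N)
    [Module.Finite (PolyS K n) N] {j : ℕ} (hj : j ≠ n + 1) :
    ExtVanishes (PolyS K n) N (PolyS K n) j :=
  (Nat.lt_or_gt_of_ne hj).elim (fun h => depthGT_coords N hN j (by omega)) hN.extVanishes_of_lt

lemma ActsNilpotently.extVanishes_syzygy (hN : ActsNilpotently (coords K n) N) {i j : ℕ}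
    (hi : 1 ≤ i) (hj : i + j ≠ n) : ExtVanishes (PolyS K n) (Syzygy res j) (PolyS K n) i := by
  have := finite_of_minimalResolution res
  obtain ⟨i, rfl⟩ := Nat.exists_eq_add_of_le' hi
  exact (Syzygy.extVanishes_succ_iff res).2 (hN.extVanishes_self (by omega))

section Tensor

variable {X : Type} [AddCommGroup X] [Module (PolyS K n) X]

lemma ActsNilpotently.almostInjective_lTensor_incl (hN : ActsNilpotently (coords K n) N) (j : ℕ) :
    AlmostInjective (coords K n) ((Syzygy.incl res j).lTensor X) := by
  intro i
  obtain ⟨c, hc⟩ := hN i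
  obtain ⟨s, hs⟩ := Syzygy.exists_comp_incl_eq_smul res hc j
  refine ⟨c, fun z hz => ?_⟩
  have h : s.lTensor X ((Syzygy.incl res j).lTensor X z) = coords K n i ^ c • z := by
    rw [← LinearMap.lTensor_comp_apply, hs, LinearMap.lTensor_smul]
    simp
  rw [← h, hz, map_zero]

lemma Syzygy.exact_lTensor (j : ℕ) :
    Function.Exact ((incl res (j + 1)).lTensor X) ((proj res j).lTensor X) :=
  lTensor_exact X (exact_incl_proj res j) (proj_surjective res j)

lemma ActsNilpotently.extVanishes_one_tensor_syzygy (hN : ActsNilpotently (coords K n) N)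
    {p j : ℕ} (hp : p + 1 ≤ n)
    (hX : ∀ a, 1 ≤ a → a ≤ p → ExtVanishes (PolyS K n) X (PolyS K n) a)
    (h : ExtVanishes (PolyS K n) (X ⊗[PolyS K n] Syzygy res j) (PolyS K n) (p + 1)) :
    ExtVanishes (PolyS K n) (X ⊗[PolyS K n] Syzygy res (j + p)) (PolyS K n) 1 := by
  induction p generalizing j with
  | zero => exact h
  | succ p ih =>
    rw [← Nat.add_assoc, Nat.add_right_comm]
    exact ih (by omega) (fun a ha hap => hX a ha (by omega)) <|
      .sub_of_almostExact_of_surjective depthGT_coords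
        (hN.almostInjective_lTensor_incl res (j + 1))
        (almostExact_of_exact (Syzygy.exact_lTensor res j))
        (LinearMap.lTensor_surjective X (Syzygy.proj_surjective res j)) (by omega)
        (hX _ (by omega) le_rfl).tensor_of_free h

lemma ActsNilpotently.extVanishes_one_syzygy_dual (hN : ActsNilpotently (coords K n) N) {j : ℕ}
    (h : ExtVanishes (PolyS K n) (X ⊗[PolyS K n] Syzygy res j) (PolyS K n) 1) :
    ExtVanishes (PolyS K n) (Syzygy res j) (Module.Dual (PolyS K n) X) 1 := by
  refine extVanishes_one_of_forall_exists_extension (Syzygy.incl_injective res (j + 1))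
    (Syzygy.exact_incl_proj res j) (Syzygy.proj_surjective res j) fun a => ?_
  let φ : X ⊗[PolyS K n] Syzygy res (j + 1) →ₗ[PolyS K n] PolyS K n :=
    TensorProduct.lift a.flip
  have hker : LinearMap.ker ((Syzygy.incl res (j + 1)).lTensor X) ≤ LinearMap.ker φ :=
      fun z hz => by
    obtain ⟨c, hc⟩ := hN.almostInjective_lTensor_incl res (X := X) (j + 1) 0
    have hz' := congrArg φ (hc z hz)
    rw [map_smul, map_zero, smul_eq_mul] at hz'
    exact (mul_eq_zero.1 hz').resolve_left (pow_ne_zero _ (MvPolynomial.X_ne_zero _))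
  obtain ⟨b, hb⟩ := exists_extension_of_extVanishes_of_ker_le (Syzygy.exact_lTensor res j)
    (LinearMap.lTensor_surjective X (Syzygy.proj_surjective res j)) h hker
  let b' : X →ₗ[PolyS K n] res.L (j + 1) →ₗ[PolyS K n] PolyS K n := TensorProduct.curry b
  exact ⟨b'.flip, LinearMap.ext fun q => LinearMap.ext fun x =>
    LinearMap.congr_fun hb (x ⊗ₜ q)⟩

lemma ActsNilpotently.extVanishes_dual_of_tensor_syzygy (hN : ActsNilpotently (coords K n) N)
    {p j : ℕ} (hp : p + 1 ≤ n)
    (hX : ∀ a, 1 ≤ a → a ≤ p → ExtVanishes (PolyS K n) X (PolyS K n) a)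
    (h : ExtVanishes (PolyS K n) (X ⊗[PolyS K n] Syzygy res j) (PolyS K n) (p + 1)) :
    ExtVanishes (PolyS K n) N (Module.Dual (PolyS K n) X) (j + p + 2) := by
  simpa using (Syzygy.extVanishes_succ_iff res).1 <| hN.extVanishes_one_syzygy_dual res <|
    hN.extVanishes_one_tensor_syzygy res hp hX h

end Tensor

section Dual

/-- The dual `P_j(N)^∨` of a syzygy module. -/
abbrev DualSyzygy (j : ℕ) : Type := Module.Dual (PolyS K n) (Syzygy res j)

namespace DualSyzygy

lemma dualMap_proj_injective (j : ℕ) : Function.Injective (Syzygy.proj res j).dualMap :=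
  LinearMap.dualMap_injective_of_surjective (Syzygy.proj_surjective res j)

lemma exact_dualMap (j : ℕ) :
    Function.Exact (Syzygy.proj res j).dualMap (Syzygy.incl res (j + 1)).dualMap :=
  LinearMap.exact_lcomp_of_exact_of_surjective _ (Syzygy.exact_incl_proj res j)
    (Syzygy.proj_surjective res j)

lemma dualMap_incl_surjective_iff {j : ℕ} :
    Function.Surjective (Syzygy.incl res (j + 1)).dualMap ↔
      ExtVanishes (PolyS K n) (Syzygy res j) (PolyS K n) 1 :=
  ⟨extVanishes_one_of_forall_exists_extension (Syzygy.incl_injective res (j + 1))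
      (Syzygy.exact_incl_proj res j) (Syzygy.proj_surjective res j),
    exists_extension_of_extVanishes (Syzygy.incl_injective res (j + 1))
      (Syzygy.exact_incl_proj res j) (Syzygy.proj_surjective res j)⟩

end DualSyzygy

/-- The cokernel of `L_j^∨ → P_j(N)^∨`, which is `Ext^{j+1}(N, S)`. -/
abbrev DualCokernel (j : ℕ) : Type :=
  DualSyzygy res j ⧸ LinearMap.range (Syzygy.incl res j).dualMap

lemma ActsNilpotently.dualCokernel (hN : ActsNilpotently (coords K n) N) (j : ℕ) :
    ActsNilpotently (coords K n) (DualCokernel res j) := by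
  intro i
  obtain ⟨c, hc⟩ := hN i
  obtain ⟨s, hs⟩ := Syzygy.exists_comp_incl_eq_smul res hc j
  refine ⟨c, fun z => ?_⟩
  obtain ⟨φ, rfl⟩ := Submodule.Quotient.mk_surjective _ z
  rw [← Submodule.Quotient.mk_smul, Submodule.Quotient.mk_eq_zero]
  refine ⟨φ ∘ₗ s, LinearMap.ext fun q => ?_⟩
  exact (congrArg φ (LinearMap.congr_fun hs q)).trans (map_smul φ _ q)

variable {M : Type} [AddCommGroup M] [Module (PolyS K n) M]

lemma ActsNilpotently.extVanishes_dualSyzygy_succ (hM : ActsNilpotently (coords K n) M)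
    (hN : ActsNilpotently (coords K n) N) {j p : ℕ} (hj : j + 1 ≠ n) (hp : p ≤ n)
    (h : ExtVanishes (PolyS K n) M (DualSyzygy res j) (p + 1)) :
    ExtVanishes (PolyS K n) M (DualSyzygy res (j + 1)) p :=
  .quotient_right (DualSyzygy.dualMap_proj_injective res j) (DualSyzygy.exact_dualMap res j)
    ((DualSyzygy.dualMap_incl_surjective_iff res).2 (hN.extVanishes_syzygy res le_rfl (by omega)))
    (hM.extVanishes_of_free hp) h

lemma ActsNilpotently.extVanishes_dualSyzygy_of_le (hM : ActsNilpotently (coords K n) M)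
    (hN : ActsNilpotently (coords K n) N) {j p : ℕ} (hj : n ≤ j) (hp : p ≤ n) :
    ExtVanishes (PolyS K n) M (DualSyzygy res j) p := by
  induction p generalizing j with
  | zero =>
    exact .sub_right_zero (DualSyzygy.dualMap_proj_injective res j) (hM.extVanishes_of_free hp)
  | succ p ih =>
    exact .sub_right (DualSyzygy.dualMap_proj_injective res j) (DualSyzygy.exact_dualMap res j)
      ((DualSyzygy.dualMap_incl_surjective_iff res).2
        (hN.extVanishes_syzygy res le_rfl (by omega)))
      (ih (by omega) (by omega)) (hM.extVanishes_of_free hp)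

lemma ActsNilpotently.extVanishes_dualCokernel (hM : ActsNilpotently (coords K n) M)
    (hN : ActsNilpotently (coords K n) N) {j p : ℕ} (hj : j + 1 = n) (hp : p + 1 ≤ n)
    (h : ExtVanishes (PolyS K n) M (DualSyzygy res j) (p + 1 + 1)) :
    ExtVanishes (PolyS K n) M (DualCokernel res (j + 1)) p := by
  let f := (Syzygy.incl res (j + 1)).dualMap
  have hex : Function.Exact (Syzygy.proj res j).dualMap f.rangeRestrict := by
    rw [LinearMap.exact_iff, LinearMap.ker_rangeRestrict]
    exact LinearMap.exact_iff.1 (DualSyzygy.exact_dualMap res j)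
  exact .quotient_right (Submodule.subtype_injective _) (LinearMap.exact_subtype_mkQ _)
    (Submodule.mkQ_surjective _)
    (hM.extVanishes_dualSyzygy_of_le res hN (by omega) (by omega)) <|
    .quotient_right (DualSyzygy.dualMap_proj_injective res j) hex f.surjective_rangeRestrict
      (hM.extVanishes_of_free hp) h

lemma ActsNilpotently.nontrivial_dualCokernel [Nontrivial N] (hN : ActsNilpotently (coords K n) N)
    {j : ℕ} (hj : j + 1 = n) : Nontrivial (DualCokernel res (j + 1)) := by
  by_contra hc
  rw [not_nontrivial_iff_subsingleton, Submodule.Quotient.subsingleton_iff,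
    LinearMap.range_eq_top, DualSyzygy.dualMap_incl_surjective_iff,
    Syzygy.extVanishes_succ_iff, show 0 + j + 2 = n + 1 by omega] at hc
  exact not_subsingleton N (hN.subsingleton_of_extVanishes_top hc)

/-- The failure of exactness in the dual resolution happens only at `Ext^{n+1}(N, S)`; climbing to
that spot reduces the claim to `ActsNilpotently.not_extVanishes`. -/
lemma ActsNilpotently.not_extVanishes_dualSyzygy [Nontrivial M] [Nontrivial N]
    (hM : ActsNilpotently (coords K n) M) (hN : ActsNilpotently (coords K n) N) {j p : ℕ}
    (hj : j < n) (hpj : n < p + j) (hp : p ≤ n) :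
    ¬ ExtVanishes (PolyS K n) M (DualSyzygy res j) p := by
  obtain ⟨i, hi⟩ := Nat.exists_eq_add_of_lt hj
  induction i generalizing j p with
  | zero =>
    intro h
    obtain ⟨p, rfl⟩ := Nat.exists_eq_add_of_le' (show 2 ≤ p by omega)
    have := hN.nontrivial_dualCokernel res hi.symm
    exact hM.not_extVanishes (hN.dualCokernel res (j + 1)) (by omega)
      (hM.extVanishes_dualCokernel res hN hi.symm (by omega) h)
  | succ i ih =>
    intro h
    obtain ⟨p, rfl⟩ := Nat.exists_eq_add_of_le' (show 1 ≤ p by omega)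
    exact ih (by omega) (by omega) (by omega) (by omega)
      (hM.extVanishes_dualSyzygy_succ res hN (by omega) (by omega) h)

end Dual

variable {M : Type} [AddCommGroup M] [Module (PolyS K n) M]

lemma ActsNilpotently.not_extVanishes_tensor_syzygy [Nontrivial M] [Nontrivial N]
    (hM : ActsNilpotently (coords K n) M) (hN : ActsNilpotently (coords K n) N)
    (resM : MinimalResolution K n M) {k : ℕ} (hk : 2 < k) (hkn : 2 * k < n) :
    ¬ ExtVanishes (PolyS K n) (Syzygy res k ⊗[PolyS K n] Syzygy resM (n - k)) (PolyS K n)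
      (k - 1) := fun h => by
  obtain ⟨p, rfl⟩ := Nat.exists_eq_add_of_le' hk.le
  refine hM.not_extVanishes_dualSyzygy res hN (j := p + 2) (p := n - (p + 2) + p + 2) (by omega)
    (by omega) (by omega) ?_
  exact hM.extVanishes_dual_of_tensor_syzygy resM (by omega)
    (fun a ha hap => hN.extVanishes_syzygy res ha (by omega)) h

end Syzygy

section Squares

variable {R : Type u} [CommRing R] {M N T : Type u} [AddCommGroup M] [Module R M]
  [AddCommGroup N] [Module R N] [AddCommGroup T] [Module R T]

namespace ExteriorSquare

lemma update_pair_one {α : Type*} (x y z : α) : Function.update ![x, y] 1 z = ![x, z] := by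
  ext i
  fin_cases i <;> rfl

variable (R) in
/-- The exterior product `(x, y) ↦ x ∧ y` as a bilinear map. -/
def wedge : M →ₗ[R] M →ₗ[R] ⋀[R]^2 M :=
  LinearMap.mk₂ R (fun x y => exteriorPower.ιMulti R 2 ![x, y])
    (fun x x' y => AlternatingMap.map_vecCons_add _ ![y] x x')
    (fun c x y => AlternatingMap.map_vecCons_smul _ ![y] c x)
    (fun x y y' => by
      simpa only [update_pair_one] using
        (exteriorPower.ιMulti R 2).map_update_add ![x, y] 1 y y')
    (fun c x y => by
      simpa only [update_pair_one] using
        (exteriorPower.ιMulti R 2).map_update_smul ![x, y] 1 c y)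

lemma wedge_apply (x y : M) : wedge R x y = exteriorPower.ιMulti R 2 ![x, y] := rfl

@[simp] lemma wedge_self (x : M) : wedge R x x = 0 :=
  (exteriorPower.ιMulti R 2).map_eq_zero_of_eq ![x, x] (i := 0) (j := 1) rfl (by decide)

lemma wedge_swap (x y : M) : wedge R x y = -wedge R y x := by
  have h := wedge_self (R := R) (x + y)
  simp only [map_add, LinearMap.add_apply, wedge_self, zero_add, add_zero] at h
  exact eq_neg_of_add_eq_zero_right h

@[ext] lemma hom_ext {f g : ⋀[R]^2 M →ₗ[R] T}
    (h : ∀ x y, f (wedge R x y) = g (wedge R x y)) : f = g :=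
  exteriorPower.linearMap_ext <| AlternatingMap.ext fun v => by
    rw [show v = ![v 0, v 1] from List.ofFn_inj.1 rfl]
    exact h (v 0) (v 1)

/-- The linear map `x ∧ y ↦ f x y` induced by an alternating bilinear map `f`. -/
def lift (f : M →ₗ[R] M →ₗ[R] T) (hf : f.IsAlt) : ⋀[R]^2 M →ₗ[R] T :=
  exteriorPower.alternatingMapLinearEquiv
    { toFun := fun v => f (v 0) (v 1)
      map_update_add' := fun v i x y => by fin_cases i <;> simp
      map_update_smul' := fun v i c x => by fin_cases i <;> simp
      map_eq_zero_of_eq' := fun v i j h hij => by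
        fin_cases i <;> fin_cases j <;> simp_all [hf.self_eq_zero] }

@[simp] lemma lift_wedge (f : M →ₗ[R] M →ₗ[R] T) (hf : f.IsAlt) (x y : M) :
    lift f hf (wedge R x y) = f x y :=
  exteriorPower.alternatingMapLinearEquiv_apply_ιMulti _ _

@[simp] lemma map_wedge (f : M →ₗ[R] N) (x y : M) :
    exteriorPower.map 2 f (wedge R x y) = wedge R (f x) (f y) := by
  simp only [wedge_apply, exteriorPower.map_apply_ιMulti]
  congr 1
  ext i
  fin_cases i <;> rfl

lemma map_smul_id (c : R) :
    exteriorPower.map 2 (c • LinearMap.id : M →ₗ[R] M) = (c * c) • LinearMap.id := by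
  ext x y
  simp [mul_smul]

variable (R M) in
/-- The projection `M ⊗ M → Λ²M`. -/
def ofTensor : M ⊗[R] M →ₗ[R] ⋀[R]^2 M := TensorProduct.lift (wedge R)

@[simp] lemma ofTensor_tmul (x y : M) : ofTensor R M (x ⊗ₜ y) = wedge R x y := rfl

lemma ofTensor_surjective : Function.Surjective (ofTensor R M) := by
  rw [← LinearMap.range_eq_top, eq_top_iff, ← exteriorPower.ιMulti_span, Submodule.span_le]
  rintro _ ⟨v, rfl⟩
  exact ⟨v 0 ⊗ₜ v 1, congrArg (exteriorPower.ιMulti R 2) (List.ofFn_inj.1 rfl)⟩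

lemma hom_ext_basis {ι : Type*} (b : Module.Basis ι R M) {f g : ⋀[R]^2 M →ₗ[R] T}
    (h : ∀ i j, f (wedge R (b i) (b j)) = g (wedge R (b i) (b j))) : f = g :=
  (LinearMap.cancel_right ofTensor_surjective).1 <|
    TensorProduct.ext <| b.ext fun i => b.ext fun j => h i j

end ExteriorSquare

variable (R M) in
/-- The symmetric square `S²M`, as the quotient of `M ⊗ M` by the elements `x ⊗ y - y ⊗ x`. -/
abbrev SymSquare : Type u :=
  (M ⊗[R] M) ⧸ Submodule.span R (Set.range fun p : M × M => p.1 ⊗ₜ[R] p.2 - p.2 ⊗ₜ[R] p.1)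

namespace SymSquare

variable (R M) in
/-- The projection `M ⊗ M → S²M`. -/
def ofTensor : M ⊗[R] M →ₗ[R] SymSquare R M := Submodule.mkQ _

lemma ofTensor_surjective : Function.Surjective (ofTensor R M) := Submodule.mkQ_surjective _

lemma ofTensor_tmul_comm (x y : M) : ofTensor R M (x ⊗ₜ y) = ofTensor R M (y ⊗ₜ x) :=
  (Submodule.Quotient.eq _).2 (Submodule.subset_span ⟨(x, y), rfl⟩)

/-- The linear map on `S²M` induced by a symmetric bilinear map `f`. -/
def lift (f : M →ₗ[R] M →ₗ[R] T) (hf : f.flip = f) : SymSquare R M →ₗ[R] T :=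
  Submodule.liftQ _ (TensorProduct.lift f) <| by
    rw [Submodule.span_le]
    rintro _ ⟨⟨x, y⟩, rfl⟩
    simpa using sub_eq_zero.2 (LinearMap.congr_fun₂ hf y x)

@[simp] lemma lift_ofTensor (f : M →ₗ[R] M →ₗ[R] T) (hf : f.flip = f) (x y : M) :
    lift f hf (ofTensor R M (x ⊗ₜ y)) = f x y := rfl

lemma hom_ext {f g : SymSquare R M →ₗ[R] T}
    (h : ∀ x y, f (ofTensor R M (x ⊗ₜ y)) = g (ofTensor R M (x ⊗ₜ y))) : f = g :=
  (LinearMap.cancel_right ofTensor_surjective).1 (TensorProduct.ext' h)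

/-- The map `S²M → S²N`, `x * y ↦ f x * f y`. -/
def map (f : M →ₗ[R] N) : SymSquare R M →ₗ[R] SymSquare R N :=
  lift (((TensorProduct.mk R N N).compr₂ (ofTensor R N)).compl₁₂ f f)
    (LinearMap.ext₂ fun x y => ofTensor_tmul_comm (f y) (f x))

@[simp] lemma map_ofTensor (f : M →ₗ[R] N) (x y : M) :
    map f (ofTensor R M (x ⊗ₜ y)) = ofTensor R N (f x ⊗ₜ f y) := rfl

end SymSquare

section Koszul

open ExteriorSquare

/-- The Koszul map `Λ²M → M ⊗ N`, `x ∧ y ↦ x ⊗ φ y - y ⊗ φ x`. -/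
def koszulExterior (φ : M →ₗ[R] N) : ⋀[R]^2 M →ₗ[R] M ⊗[R] N :=
  ExteriorSquare.lift
    ((TensorProduct.mk R M N).compl₂ φ - ((TensorProduct.mk R M N).compl₂ φ).flip)
    fun x => by simp

@[simp] lemma koszulExterior_wedge (φ : M →ₗ[R] N) (x y : M) :
    koszulExterior φ (wedge R x y) = x ⊗ₜ φ y - y ⊗ₜ φ x :=
  lift_wedge _ _ x y

/-- The Koszul map `M ⊗ N → S²N`, `x ⊗ y ↦ φ x * y`. -/
def koszulSym (φ : M →ₗ[R] N) : M ⊗[R] N →ₗ[R] SymSquare R N :=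
  SymSquare.ofTensor R N ∘ₗ φ.rTensor N

@[simp] lemma koszulSym_tmul (φ : M →ₗ[R] N) (x : M) (y : N) :
    koszulSym φ (x ⊗ₜ y) = SymSquare.ofTensor R N (φ x ⊗ₜ y) := rfl

variable (R M)

lemma exists_leftInverse_koszulExterior_id [Module.Free R M] :
    ∃ τ : M ⊗[R] M →ₗ[R] ⋀[R]^2 M, τ ∘ₗ koszulExterior LinearMap.id = LinearMap.id := by
  classical
  let b := Module.Free.chooseBasis R M
  let := linearOrderOfSTO (α := Module.Free.ChooseBasisIndex R M) WellOrderingRel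
  refine ⟨TensorProduct.lift (b.constr R fun i => b.constr R fun j =>
    if i < j then wedge R (b i) (b j) else 0), hom_ext_basis b fun i j => ?_⟩
  rcases lt_trichotomy i j with h | rfl | h
  · simp [h, h.not_gt]
  · simp
  · simp [h, h.not_gt, ← wedge_swap]

lemma exists_section_symSquare [Module.Free R M] :
    ∃ (σ : SymSquare R M →ₗ[R] M ⊗[R] M) (ω : M ⊗[R] M →ₗ[R] ⋀[R]^2 M),
      SymSquare.ofTensor R M ∘ₗ σ = LinearMap.id ∧
      koszulExterior LinearMap.id ∘ₗ ω + σ ∘ₗ SymSquare.ofTensor R M = LinearMap.id := by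
  classical
  let b := Module.Free.chooseBasis R M
  let := linearOrderOfSTO (α := Module.Free.ChooseBasisIndex R M) WellOrderingRel
  let s : M →ₗ[R] M →ₗ[R] M ⊗[R] M :=
    b.constr R fun i => b.constr R fun j => b (min i j) ⊗ₜ b (max i j)
  have hs : s.flip = s := b.ext fun i => b.ext fun j => by simp [s, min_comm, max_comm]
  refine ⟨SymSquare.lift s hs, TensorProduct.lift (b.constr R fun i => b.constr R fun j =>
      if j < i then wedge R (b i) (b j) else 0),
    (LinearMap.cancel_right SymSquare.ofTensor_surjective).1 ?_, ?_⟩ <;>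
  refine TensorProduct.ext <| b.ext fun i => b.ext fun j => ?_ <;>
  rcases le_or_gt i j with h | h
  · simp [s, h]
  · simp [s, h.le, SymSquare.ofTensor_tmul_comm]
  · simp [s, h, h.not_gt]
  · simp [s, h, h.le]

instance [Module.Free R M] : Module.Projective R (SymSquare R M) :=
  have ⟨σ, _, h, _⟩ := exists_section_symSquare R M
  .of_split σ _ h

end Koszul

end Squares

section AlmostSplit

variable {R : Type u} [CommRing R] {ι : Type*} (x : ι → R) {A B : Type u} [AddCommGroup A]
  [Module R A] [AddCommGroup B] [Module R B]

/-- `α` is a split injection up to multiplication by powers of the `x i`; for the coordinates this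
says that `α` is locally split away from the irrelevant ideal. -/
def AlmostSplitInjective (α : A →ₗ[R] B) : Prop :=
  ∀ i, ∃ (c : ℕ) (r : B →ₗ[R] A), r ∘ₗ α = x i ^ c • LinearMap.id

/-- `β` is a split surjection up to multiplication by powers of the `x i`. -/
def AlmostSplitSurjective (β : A →ₗ[R] B) : Prop :=
  ∀ i, ∃ (c : ℕ) (s : B →ₗ[R] A), β ∘ₗ s = x i ^ c • LinearMap.id

variable {x}

lemma AlmostSplitSurjective.almostSurjective {β : A →ₗ[R] B} (h : AlmostSplitSurjective x β) :
    AlmostSurjective x β := fun i =>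
  have ⟨c, s, hs⟩ := h i
  ⟨c, fun y => ⟨s y, LinearMap.congr_fun hs y⟩⟩

end AlmostSplit

section Monad

open ExteriorSquare

variable {R : Type u} [CommRing R] {A B E M P : Type u} [AddCommGroup A] [Module R A]
  [AddCommGroup B] [Module R B] [AddCommGroup E] [Module R E] [AddCommGroup M] [Module R M]
  [AddCommGroup P] [Module R P] {ι : Type*} {x : ι → R} {n j : ℕ}

section Kernel

variable {X : Type u} [AddCommGroup X] [Module R X] {i : X →ₗ[R] P} {ρ : P →ₗ[R] X}
  {β : P →ₗ[R] B} {s : B →ₗ[R] P} {f : R}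

lemma smul_eq_zero_of_map_eq_zero (hρ : ρ ∘ₗ i = f • LinearMap.id) {z : ⋀[R]^2 X}
    (hz : exteriorPower.map 2 i z = 0) : (f * f) • z = 0 := by
  have hz' : exteriorPower.map 2 (f • LinearMap.id : X →ₗ[R] X) z = 0 := by
    rw [← hρ, exteriorPower.map_comp, LinearMap.comp_apply, hz, map_zero]
  rwa [map_smul_id] at hz'

lemma koszulExterior_comp_map (hβi : β ∘ₗ i = 0) :
    koszulExterior β ∘ₗ exteriorPower.map 2 i = 0 := by
  ext x y
  simp [show ∀ x, β (i x) = 0 from LinearMap.congr_fun hβi]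

lemma koszulSym_comp_koszulExterior : koszulSym β ∘ₗ koszulExterior β = 0 := by
  ext x y
  simp [SymSquare.ofTensor_tmul_comm (β y)]

lemma exists_koszulSym_eq_smul (hs : β ∘ₗ s = f • LinearMap.id) (z : SymSquare R B) :
    ∃ y, koszulSym β y = f • z := by
  obtain ⟨z, rfl⟩ := SymSquare.ofTensor_surjective z
  have h : koszulSym β ∘ₗ s.rTensor B = f • SymSquare.ofTensor R B :=
    TensorProduct.ext' fun b b' => by
      simp [show β (s b) = f • b from LinearMap.congr_fun hs b, ← TensorProduct.smul_tmul']
  exact ⟨_, LinearMap.congr_fun h z⟩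

variable [Module.Free R B]

lemma exists_map_eq_smul (hρ : i ∘ₗ ρ = f • LinearMap.id - s ∘ₗ β) {z : ⋀[R]^2 P}
    (hz : koszulExterior β z = 0) : ∃ y, exteriorPower.map 2 i y = (f * f) • z := by
  obtain ⟨τ, hτ⟩ := exists_leftInverse_koszulExterior_id R B
  have key : exteriorPower.map 2 i ∘ₗ exteriorPower.map 2 ρ +
      (ofTensor R P ∘ₗ TensorProduct.map (i ∘ₗ ρ) s +
        exteriorPower.map 2 s ∘ₗ τ ∘ₗ β.rTensor B) ∘ₗ koszulExterior β =
      (f * f) • LinearMap.id := by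
    rw [← exteriorPower.map_comp, hρ]
    refine ExteriorSquare.hom_ext fun p q => ?_
    have h := congrArg (exteriorPower.map 2 s) (LinearMap.congr_fun hτ (wedge R (β p) (β q)))
    simp only [LinearMap.comp_apply, koszulExterior_wedge, LinearMap.id_apply, map_sub,
      map_wedge, sub_eq_iff_eq_add] at h
    simp only [LinearMap.add_apply, LinearMap.comp_apply, koszulExterior_wedge, map_wedge, map_sub,
      TensorProduct.map_tmul, ofTensor_tmul, LinearMap.rTensor_tmul, h, LinearMap.sub_apply,
      LinearMap.smul_apply, LinearMap.id_apply, map_smul]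
    rw [wedge_swap q (s (β p)), wedge_swap (s (β q)) (s (β p))]
    module
  have hz' := LinearMap.congr_fun key z
  rw [LinearMap.add_apply, LinearMap.comp_apply _ (koszulExterior β), hz, map_zero, add_zero] at hz'
  exact ⟨_, hz'⟩

lemma exists_koszulExterior_eq_smul (hs : β ∘ₗ s = f • LinearMap.id) {z : P ⊗[R] B}
    (hz : koszulSym β z = 0) : ∃ y, koszulExterior β y = (f * f) • z := by
  obtain ⟨σ, ω, _, hσ⟩ := exists_section_symSquare R B
  have hs' (b) : β (s b) = f • b := LinearMap.congr_fun hs b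
  have hsκ : koszulExterior β ∘ₗ exteriorPower.map 2 s =
      f • s.rTensor B ∘ₗ koszulExterior LinearMap.id := by
    ext b b'
    simp [hs', smul_sub]
  have hsκ' (z) : koszulExterior β (exteriorPower.map 2 s z) =
    f • s.rTensor B (koszulExterior LinearMap.id z) := LinearMap.congr_fun hsκ z
  have key : koszulExterior β ∘ₗ (f • ofTensor R P ∘ₗ s.lTensor P +
      exteriorPower.map 2 s ∘ₗ ω ∘ₗ (TensorProduct.comm R B B).toLinearMap ∘ₗ β.rTensor B) +
      f • s.rTensor B ∘ₗ σ ∘ₗ koszulSym β = (f * f) • LinearMap.id := by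
    refine TensorProduct.ext' fun p b => ?_
    have h := congrArg (s.rTensor B) (LinearMap.congr_fun hσ (b ⊗ₜ[R] β p))
    simp only [LinearMap.add_apply, LinearMap.comp_apply, LinearMap.id_apply, map_add,
      LinearMap.rTensor_tmul] at h
    simp only [LinearMap.add_apply, LinearMap.comp_apply, LinearMap.smul_apply,
      LinearMap.id_apply, LinearMap.lTensor_tmul, LinearMap.rTensor_tmul, ofTensor_tmul, map_smul,
      map_add, hsκ', koszulExterior_wedge, hs', koszulSym_tmul, LinearEquiv.coe_coe,
      TensorProduct.comm_tmul]
    rw [SymSquare.ofTensor_tmul_comm (β p) b, add_assoc, ← smul_add, h, TensorProduct.tmul_smul,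
      smul_sub, mul_smul, sub_add_cancel]
  have hz' := LinearMap.congr_fun key z
  simp only [LinearMap.add_apply, LinearMap.comp_apply, LinearMap.smul_apply, hz, map_zero,
    smul_zero, add_zero] at hz'
  exact ⟨_, hz'⟩

end Kernel

section Cokernel

/-- The map `M ⊗ A → Λ²M`, `m ⊗ a ↦ m ∧ α a`. -/
def wedgeRight (α : A →ₗ[R] M) : M ⊗[R] A →ₗ[R] ⋀[R]^2 M := ofTensor R M ∘ₗ α.lTensor M

@[simp] lemma wedgeRight_tmul (α : A →ₗ[R] M) (m : M) (a : A) :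
    wedgeRight α (m ⊗ₜ a) = wedge R m (α a) := rfl

/-- The kernel of `A ⊗ A → Λ²A`, which for free `A` is the divided square of `A`. -/
abbrev DividedSquare (R A : Type u) [CommRing R] [AddCommGroup A] [Module R A] : Type u :=
  LinearMap.ker (ofTensor R A)

/-- The map `D²A → A ⊗ A → M ⊗ A` induced by `α`. -/
def dividedSquareMap (α : A →ₗ[R] M) : DividedSquare R A →ₗ[R] M ⊗[R] A :=
  α.rTensor A ∘ₗ (LinearMap.ker (ofTensor R A)).subtype

variable {α : A →ₗ[R] M} {r : M →ₗ[R] A} {f : R}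

lemma wedgeRight_comp_dividedSquareMap : wedgeRight α ∘ₗ dividedSquareMap α = 0 := by
  have h : wedgeRight α ∘ₗ α.rTensor A = exteriorPower.map 2 α ∘ₗ ofTensor R A :=
    TensorProduct.ext' fun a b => by simp
  refine LinearMap.ext fun z => (LinearMap.congr_fun h z.1).trans ?_
  rw [LinearMap.comp_apply, z.2, map_zero, LinearMap.zero_apply]

lemma smul_eq_zero_of_dividedSquareMap_eq_zero (hr : r ∘ₗ α = f • LinearMap.id)
    {z : DividedSquare R A} (hz : dividedSquareMap α z = 0) : f • z = 0 := by
  refine Subtype.ext ?_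
  have h : r.rTensor A ∘ₗ α.rTensor A = f • LinearMap.id := by
    rw [← LinearMap.rTensor_comp, hr, LinearMap.rTensor_smul, LinearMap.rTensor_id]
  have hz' : α.rTensor A z.1 = 0 := hz
  exact (LinearMap.congr_fun h z.1).symm.trans <| by rw [LinearMap.comp_apply, hz', map_zero]; rfl

lemma exists_dividedSquareMap_eq_smul (hr : r ∘ₗ α = f • LinearMap.id) {z : M ⊗[R] A}
    (hz : wedgeRight α z = 0) : ∃ y, dividedSquareMap α y = (f * f) • z := by
  let w : M ⊗[R] A →ₗ[R] A ⊗[R] A := (TensorProduct.comm R A A).toLinearMap ∘ₗ r.rTensor A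
  have hr' (a) : r (α a) = f • a := LinearMap.congr_fun hr a
  have hw : f • ofTensor R A ∘ₗ w = -(exteriorPower.map 2 r ∘ₗ wedgeRight α) :=
    TensorProduct.ext' fun m a => by simp [w, hr', wedge_swap a]
  have hαw : r.lTensor M ∘ₗ koszulExterior LinearMap.id ∘ₗ wedgeRight α =
      f • LinearMap.id - α.rTensor A ∘ₗ w :=
    TensorProduct.ext' fun m a => by simp [w, hr']
  have hw' : f • ofTensor R A (w z) = 0 := by simpa [hz] using LinearMap.congr_fun hw z
  have hαw' : α.rTensor A (w z) = f • z :=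
    (sub_eq_zero.1 (by simpa [hz] using (LinearMap.congr_fun hαw z).symm)).symm
  refine ⟨⟨f • w z, by rw [LinearMap.mem_ker, map_smul, hw']⟩, ?_⟩
  change α.rTensor A (f • w z) = _
  rw [map_smul, hαw', mul_smul]

variable {g : M →ₗ[R] E}

lemma map_comp_wedgeRight (hgα : g ∘ₗ α = 0) : exteriorPower.map 2 g ∘ₗ wedgeRight α = 0 :=
  TensorProduct.ext' fun m a => by simp [show g (α a) = 0 from LinearMap.congr_fun hgα a]

lemma exists_wedgeRight_eq_smul {h : E →ₗ[R] M} (hh : h ∘ₗ g = f • LinearMap.id - α ∘ₗ r)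
    {z : ⋀[R]^2 M} (hz : exteriorPower.map 2 g z = 0) : ∃ y, wedgeRight α y = (f * f) • z := by
  obtain ⟨z, rfl⟩ := ofTensor_surjective z
  let T : M ⊗[R] M →ₗ[R] M ⊗[R] A := TensorProduct.map (h ∘ₗ g) r
  have hh' (m) : h (g m) = f • m - α (r m) := LinearMap.congr_fun hh m
  have key : exteriorPower.map 2 h ∘ₗ exteriorPower.map 2 g ∘ₗ ofTensor R M +
      wedgeRight α ∘ₗ (T - T ∘ₗ (TensorProduct.comm R M M).toLinearMap +
        TensorProduct.map (α ∘ₗ r) r) = (f * f) • ofTensor R M := by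
    refine TensorProduct.ext' fun m m' => ?_
    simp only [T, LinearMap.add_apply, LinearMap.sub_apply, LinearMap.comp_apply,
      LinearMap.smul_apply, ofTensor_tmul, map_wedge, map_add, map_sub, map_smul,
      TensorProduct.map_tmul, LinearEquiv.coe_coe, TensorProduct.comm_tmul, wedgeRight_tmul, hh']
    rw [wedge_swap (α (r m)) m', wedge_swap (α (r m)) (α (r m'))]
    module
  have hz' := LinearMap.congr_fun key z
  simp only [LinearMap.add_apply, LinearMap.comp_apply _ (ofTensor R M),
    LinearMap.comp_apply _ (exteriorPower.map 2 g ∘ₗ _), LinearMap.comp_apply,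
    LinearMap.smul_apply, hz, map_zero, zero_add] at hz'
  exact ⟨_, hz'⟩

lemma exists_quasi_inverse {t : R} {c d e : ℕ} (hgα : g ∘ₗ α = 0)
    (hr : r ∘ₗ α = t ^ e • LinearMap.id) (hker : ∀ z, g z = 0 → ∃ a, α a = t ^ c • z)
    (hsurj : ∀ y, ∃ z, g z = t ^ d • y) :
    ∃ (m : ℕ) (r' : M →ₗ[R] A) (h : E →ₗ[R] M),
      h ∘ₗ g = t ^ m • LinearMap.id - α ∘ₗ r' ∧ g ∘ₗ h = t ^ m • LinearMap.id := by
  have hr' (a) : r (α a) = t ^ e • a := LinearMap.congr_fun hr a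
  have hgα' (a) : g (α a) = 0 := LinearMap.congr_fun hgα a
  obtain ⟨ψ, hψ⟩ : ∃ ψ : LinearMap.range g →ₗ[R] M,
      ψ ∘ₗ g.rangeRestrict = t ^ c • (t ^ e • LinearMap.id - α ∘ₗ r) := by
    refine exists_comp_rangeRestrict_eq fun z hz => ?_
    obtain ⟨a, ha⟩ := hker z hz
    have hz' : t ^ c • α (r z) = t ^ e • t ^ c • z := by
      rw [← map_smul, ← map_smul, ← ha, hr', map_smul]
    simp [smul_sub, hz', smul_comm (t ^ c)]
  have hψ' (z) : ψ (g.rangeRestrict z) = t ^ c • (t ^ e • z - α (r z)) := LinearMap.congr_fun hψ z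
  let q : E →ₗ[R] LinearMap.range g := LinearMap.codRestrict _ (t ^ d • LinearMap.id) hsurj
  refine ⟨c + e + d, t ^ (c + d) • r, ψ ∘ₗ q, LinearMap.ext fun z => ?_, LinearMap.ext fun y => ?_⟩
  · have hq : q (g z) = g.rangeRestrict (t ^ d • z) := Subtype.ext (map_smul g _ z).symm
    simp only [LinearMap.comp_apply, hq, hψ', LinearMap.sub_apply, LinearMap.smul_apply,
      LinearMap.id_apply, map_smul]
    module
  · obtain ⟨z, hz⟩ := hsurj y
    have hq : q y = g.rangeRestrict z := Subtype.ext hz.symm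
    simp only [LinearMap.comp_apply, hq, hψ', map_smul, map_sub, hgα', hz, LinearMap.smul_apply,
      LinearMap.id_apply]
    module

end Cokernel

/-- Uses the almost exact sequence `0 → Λ²(ker β) → Λ²P → P ⊗ B → S²B → 0`. -/
lemma ExtVanishes.exteriorSquare_of_ker [Module.Free R B] [Module.Finite R B]
    (hD : DepthGT x n) {β : P →ₗ[R] B} (hβ : AlmostSplitSurjective x β) (hj : 1 ≤ j)
    (hjn : j + 2 ≤ n) (hP : ExtVanishes R P R j)
    (hK : ExtVanishes R (⋀[R]^2 (LinearMap.ker β)) R j) : ExtVanishes R (⋀[R]^2 P) R j := by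
  have hrange : ExtVanishes R (LinearMap.range (koszulExterior β)) R j := by
    refine .sub_of_almostExact hD (.of_injective (Submodule.subtype_injective _)) (b := koszulSym β)
      ⟨LinearMap.ext ?_, fun i => ?_⟩ (fun i => ?_) hjn hP.tensor_of_free
      (.of_projective (Nat.le_succ_of_le hj))
    · rintro ⟨_, z, rfl⟩
      exact LinearMap.congr_fun koszulSym_comp_koszulExterior z
    · obtain ⟨c, s, hs⟩ := hβ i
      refine ⟨c + c, fun z hz => ?_⟩
      obtain ⟨y, hy⟩ := exists_koszulExterior_eq_smul hs hz
      exact ⟨⟨_, y, rfl⟩, by rw [pow_add]; exact hy⟩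
    · obtain ⟨c, s, hs⟩ := hβ i
      exact ⟨c, exists_koszulSym_eq_smul hs⟩
  have hincl (i : ι) : ∃ (c : ℕ) (s : B →ₗ[R] P) (ρ : P →ₗ[R] LinearMap.ker β),
      (LinearMap.ker β).subtype ∘ₗ ρ = x i ^ c • LinearMap.id - s ∘ₗ β ∧
      ρ ∘ₗ (LinearMap.ker β).subtype = x i ^ c • LinearMap.id := by
    obtain ⟨c, s, hs⟩ := hβ i
    refine ⟨c, s, LinearMap.codRestrict _ (x i ^ c • LinearMap.id - s ∘ₗ β) fun p => ?_, rfl, ?_⟩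
    · simp [show β (s (β p)) = x i ^ c • β p from LinearMap.congr_fun hs _]
    · ext k
      simp
  refine .middle_of_almostExact hD (a := exteriorPower.map 2 (LinearMap.ker β).subtype)
    (b := (koszulExterior β).rangeRestrict) (fun i => ?_) ⟨LinearMap.ext fun z => Subtype.ext <|
      LinearMap.congr_fun (koszulExterior_comp_map β.comp_ker_subtype) z, fun i => ?_⟩
    (.of_surjective (LinearMap.surjective_rangeRestrict _)) (by omega) hK hrange
  · obtain ⟨c, -, ρ, -, hρ⟩ := hincl i
    exact ⟨c + c, fun z hz => by rw [pow_add, smul_eq_zero_of_map_eq_zero hρ hz]⟩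
  · obtain ⟨c, s, ρ, hρ, -⟩ := hincl i
    exact ⟨c + c, fun z hz => by
      rw [pow_add]; exact exists_map_eq_smul hρ (congrArg Subtype.val hz)⟩

/-- Uses the almost exact sequence `0 → D²A → M ⊗ A → Λ²M → Λ²E → 0`. -/
lemma ExtVanishes.exteriorSquare_of_quotient [Module.Free R A] [Module.Finite R A]
    (hD : DepthGT x n) {α : A →ₗ[R] M} {g : M →ₗ[R] E} (hα : AlmostSplitInjective x α)
    (hαg : AlmostExact x α g) (hg : AlmostSurjective x g) (hj : 1 ≤ j) (hjn : j + 2 ≤ n)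
    (hM : ExtVanishes R M R (j + 1)) (hE : ExtVanishes R (⋀[R]^2 E) R (j + 1)) :
    ExtVanishes R (⋀[R]^2 M) R (j + 1) := by
  have hdiv : ExtVanishes R (DividedSquare R A) R j :=
    .sub_left (Submodule.subtype_injective _) (LinearMap.exact_subtype_ker_map _)
      ofTensor_surjective (.of_projective (by omega)) (.of_projective (by omega))
  have hrange : ExtVanishes R (LinearMap.range (wedgeRight α)) R (j + 1) := by
    refine .range_of_almostExact hD (a := dividedSquareMap α) (fun i => ?_)
      ⟨wedgeRight_comp_dividedSquareMap, fun i => ?_⟩ (by omega) hdiv hM.tensor_of_free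
    · obtain ⟨c, r, hr⟩ := hα i
      exact ⟨c, fun z hz => smul_eq_zero_of_dividedSquareMap_eq_zero hr hz⟩
    · obtain ⟨c, r, hr⟩ := hα i
      exact ⟨c + c, fun z hz => by rw [pow_add]; exact exists_dividedSquareMap_eq_smul hr hz⟩
  have hinv (i : ι) : ∃ (m : ℕ) (r' : M →ₗ[R] A) (h : E →ₗ[R] M),
      h ∘ₗ g = x i ^ m • LinearMap.id - α ∘ₗ r' ∧ g ∘ₗ h = x i ^ m • LinearMap.id := by
    obtain ⟨c, hc⟩ := hαg.2 i
    obtain ⟨d, hd⟩ := hg i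
    obtain ⟨e, r, hr⟩ := hα i
    exact exists_quasi_inverse hαg.1 hr hc hd
  refine .middle_of_almostExact hD (.of_injective (Submodule.subtype_injective _))
    (b := exteriorPower.map 2 g) ⟨LinearMap.ext ?_, fun i => ?_⟩ (fun i => ?_) hjn hrange hE
  · rintro ⟨_, z, rfl⟩
    exact LinearMap.congr_fun (map_comp_wedgeRight hαg.1) z
  · obtain ⟨m, r, h, hh, -⟩ := hinv i
    refine ⟨m + m, fun z hz => ?_⟩
    obtain ⟨y, hy⟩ := exists_wedgeRight_eq_smul hh hz
    exact ⟨⟨_, y, rfl⟩, by rw [pow_add]; exact hy⟩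
  · obtain ⟨m, r, h, -, hh⟩ := hinv i
    exact ⟨m + m, fun z => ⟨exteriorPower.map 2 h z, by
      rw [← LinearMap.comp_apply, ← exteriorPower.map_comp, hh, map_smul_id, pow_add]; rfl⟩⟩

theorem ExtVanishes.exteriorSquare_of_monad [Module.Free R A] [Module.Finite R A]
    [Module.Free R B] [Module.Finite R B] (hD : DepthGT x n) {β : P →ₗ[R] B}
    {α : A →ₗ[R] LinearMap.ker β} {g : LinearMap.ker β →ₗ[R] E}
    (hβ : AlmostSplitSurjective x β) (hα : AlmostSplitInjective x α) (hαg : AlmostExact x α g)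
    (hg : AlmostSurjective x g) (hj : 2 ≤ j) (hjn : j + 2 ≤ n) (hP : ExtVanishes R P R j)
    (hE : ExtVanishes R (⋀[R]^2 E) R j) : ExtVanishes R (⋀[R]^2 P) R j := by
  have hK : ExtVanishes R (LinearMap.ker β) R j :=
    .sub_of_almostExact hD (.of_injective (Submodule.subtype_injective _))
      (almostExact_of_exact (LinearMap.exact_subtype_ker_map β)) hβ.almostSurjective hjn hP
      (.of_projective (by omega))
  obtain ⟨j, rfl⟩ := Nat.exists_eq_add_of_le' (show 1 ≤ j by omega)
  exact .exteriorSquare_of_ker hD hβ (by omega) hjn hP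
    (.exteriorSquare_of_quotient hD hα hαg hg (by omega) (by omega) hK hE)

end Monad

section SquareComplex

open ExteriorSquare

variable {R : Type u} [CommRing R] {X L₂ L₁ L₀ : Type u} [AddCommGroup X] [Module R X]
  [AddCommGroup L₂] [Module R L₂] [AddCommGroup L₁] [Module R L₁] [AddCommGroup L₀] [Module R L₀]
  {i : X →ₗ[R] L₂} {d : L₂ →ₗ[R] L₁} {e : L₁ →ₗ[R] L₀} {f : R}

/-- A homotopy between multiplication by `f` and zero on the complex `0 → X → L₂ → L₁ → L₀ → 0`
with differentials `i`, `d` and `e`. -/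
structure ContractionUpTo (i : X →ₗ[R] L₂) (d : L₂ →ₗ[R] L₁) (e : L₁ →ₗ[R] L₀) (f : R) where
  s₀ : L₀ →ₗ[R] L₁
  s₁ : L₁ →ₗ[R] L₂
  s₂ : L₂ →ₗ[R] X
  comp_s₀ : e ∘ₗ s₀ = f • LinearMap.id
  comp_s₁ : d ∘ₗ s₁ = f • LinearMap.id - s₀ ∘ₗ e
  comp_s₂ : i ∘ₗ s₂ = f • LinearMap.id - s₁ ∘ₗ d
  s₂_comp : s₂ ∘ₗ i = f • LinearMap.id

/-- The map `S²L₁ → L₁ ⊗ L₀`, `x * y ↦ x ⊗ e y + y ⊗ e x`. -/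
def polarize (e : L₁ →ₗ[R] L₀) : SymSquare R L₁ →ₗ[R] L₁ ⊗[R] L₀ :=
  SymSquare.lift ((TensorProduct.mk R L₁ L₀).compl₂ e + ((TensorProduct.mk R L₁ L₀).compl₂ e).flip)
    (LinearMap.ext₂ fun x y => by simp [add_comm])

@[simp] lemma polarize_ofTensor (e : L₁ →ₗ[R] L₀) (x y : L₁) :
    polarize e (SymSquare.ofTensor R L₁ (x ⊗ₜ y)) = x ⊗ₜ e y + y ⊗ₜ e x := rfl

/- Together with `Λ²X → Λ²L₂ → L₂ ⊗ L₁`, the following maps form a complex resolving the degree zero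
part `L₀ ⊗ L₀ / S²L₀` of the exterior square of `L₂ → L₁ → L₀`. Replacing `Λ²L₀` by the pair
`S²L₀ → L₀ ⊗ L₀` is what makes it contractible up to powers also in characteristic two. -/

/-- The differential `L₂ ⊗ L₁ → S²L₁ × (L₂ ⊗ L₀)`. -/
def squareD₃ (d : L₂ →ₗ[R] L₁) (e : L₁ →ₗ[R] L₀) :
    L₂ ⊗[R] L₁ →ₗ[R] SymSquare R L₁ × (L₂ ⊗[R] L₀) :=
  (koszulSym d).prod (-e.lTensor L₂)

/-- The differential `S²L₁ × (L₂ ⊗ L₀) → (L₁ ⊗ L₀) × S²L₀`. -/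
def squareD₂ (d : L₂ →ₗ[R] L₁) (e : L₁ →ₗ[R] L₀) :
    SymSquare R L₁ × (L₂ ⊗[R] L₀) →ₗ[R] (L₁ ⊗[R] L₀) × SymSquare R L₀ :=
  ((polarize e).prod (SymSquare.map e)).coprod ((d.rTensor L₀).prod 0)

/-- The differential `(L₁ ⊗ L₀) × S²L₀ → L₀ ⊗ L₀`. -/
def squareD₁ (e : L₁ →ₗ[R] L₀) : (L₁ ⊗[R] L₀) × SymSquare R L₀ →ₗ[R] L₀ ⊗[R] L₀ :=
  (e.rTensor L₀).coprod (-polarize LinearMap.id)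

lemma squareD₃_apply (z : L₂ ⊗[R] L₁) : squareD₃ d e z = (koszulSym d z, -e.lTensor L₂ z) := rfl

lemma squareD₂_apply (z : SymSquare R L₁) (w : L₂ ⊗[R] L₀) :
    squareD₂ d e (z, w) = (polarize e z + d.rTensor L₀ w, SymSquare.map e z) := by
  simp [squareD₂]

lemma squareD₁_apply (z : L₁ ⊗[R] L₀) (w : SymSquare R L₀) :
    squareD₁ e (z, w) = e.rTensor L₀ z - polarize LinearMap.id w := by
  simp [squareD₁, sub_eq_add_neg]

lemma squareD₃_comp_koszulExterior (hed : e ∘ₗ d = 0) : squareD₃ d e ∘ₗ koszulExterior d = 0 := by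
  have hed' (x) : e (d x) = 0 := LinearMap.congr_fun hed x
  refine ExteriorSquare.hom_ext fun x y => ?_
  simp [squareD₃_apply, hed', SymSquare.ofTensor_tmul_comm (d y)]

lemma squareD₂_comp_squareD₃ (hed : e ∘ₗ d = 0) : squareD₂ d e ∘ₗ squareD₃ d e = 0 := by
  have hed' (x) : e (d x) = 0 := LinearMap.congr_fun hed x
  refine TensorProduct.ext' fun x y => ?_
  simp [squareD₃_apply, squareD₂_apply, hed']

lemma squareD₁_comp_squareD₂ (hed : e ∘ₗ d = 0) : squareD₁ e ∘ₗ squareD₂ d e = 0 := by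
  have hed' (x) : e (d x) = 0 := LinearMap.congr_fun hed x
  refine LinearMap.prod_ext (SymSquare.hom_ext fun x y => ?_) (TensorProduct.ext' fun x y => ?_) <;>
  simp [squareD₂_apply, squareD₁_apply, hed']

namespace ContractionUpTo

lemma exists_squareD₁_eq_smul (h : ContractionUpTo i d e f) (z : L₀ ⊗[R] L₀) :
    ∃ y, squareD₁ e y = f • z := by
  refine ⟨(h.s₀.rTensor L₀ z, 0), ?_⟩
  rw [squareD₁_apply, map_zero, sub_zero, ← LinearMap.comp_apply, ← LinearMap.rTensor_comp,
    h.comp_s₀, LinearMap.rTensor_smul, LinearMap.rTensor_id]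
  rfl

/-- The homotopy `(L₁ ⊗ L₀) × S²L₀ → S²L₁ × (L₂ ⊗ L₀)` induced by a contraction. -/
def squareS₁ (h : ContractionUpTo i d e f) :
    (L₁ ⊗[R] L₀) × SymSquare R L₀ →ₗ[R] SymSquare R L₁ × (L₂ ⊗[R] L₀) :=
  (SymSquare.map h.s₀ ∘ₗ LinearMap.snd R _ _).prod (f • h.s₁.rTensor L₀ ∘ₗ LinearMap.fst R _ _)

lemma squareD₂_comp_squareS₁ (h : ContractionUpTo i d e f) :
    squareD₂ d e ∘ₗ h.squareS₁ + LinearMap.inl R _ _ ∘ₗ (f • h.s₀.rTensor L₀) ∘ₗ squareD₁ e =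
      (f * f) • LinearMap.id := by
  have hs₀ (l) : e (h.s₀ l) = f • l := LinearMap.congr_fun h.comp_s₀ l
  have hs₁ (l) : d (h.s₁ l) = f • l - h.s₀ (e l) := LinearMap.congr_fun h.comp_s₁ l
  refine LinearMap.prod_ext (TensorProduct.ext' fun x y => ?_) (SymSquare.hom_ext fun x y => ?_)
  · simp [squareS₁, squareD₂_apply, squareD₁_apply, hs₁, TensorProduct.sub_tmul,
      ← TensorProduct.smul_tmul', smul_sub, mul_smul]
  · simp [squareS₁, squareD₂_apply, squareD₁_apply, hs₀, mul_smul, ← TensorProduct.smul_tmul']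

lemma exists_squareD₂_eq_smul (h : ContractionUpTo i d e f)
    {z : (L₁ ⊗[R] L₀) × SymSquare R L₀} (hz : squareD₁ e z = 0) :
    ∃ y, squareD₂ d e y = (f * f) • z :=
  ⟨h.squareS₁ z, by
    simpa [hz, ← Prod.zero_eq_mk] using LinearMap.congr_fun h.squareD₂_comp_squareS₁ z⟩

/-- The homotopy `S²L₁ × (L₂ ⊗ L₀) → L₂ ⊗ L₁` induced by a contraction, lifted to
`(L₁ ⊗ L₁) × (L₂ ⊗ L₀)` because it does not respect the symmetry of `S²L₁`. -/
def squareS₂ (h : ContractionUpTo i d e f) : (L₁ ⊗[R] L₁) × (L₂ ⊗[R] L₀) →ₗ[R] L₂ ⊗[R] L₁ :=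
  (f • h.s₁.rTensor L₁ +
    TensorProduct.map h.s₁ h.s₀ ∘ₗ (TensorProduct.comm R L₀ L₁).toLinearMap ∘ₗ e.rTensor L₁).coprod
  (-TensorProduct.map (i ∘ₗ h.s₂) h.s₀)

lemma squareD₃_comp_squareS₂ (h : ContractionUpTo i d e f) (hdi : d ∘ₗ i = 0) :
    squareD₃ d e ∘ₗ h.squareS₂ +
        h.squareS₁ ∘ₗ squareD₂ d e ∘ₗ (SymSquare.ofTensor R L₁).prodMap LinearMap.id =
      (f * f) • (SymSquare.ofTensor R L₁).prodMap LinearMap.id := by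
  have hdi' (x) : d (i x) = 0 := LinearMap.congr_fun hdi x
  have hs₀ (l) : e (h.s₀ l) = f • l := LinearMap.congr_fun h.comp_s₀ l
  have hs₁ (l) : d (h.s₁ l) = f • l - h.s₀ (e l) := LinearMap.congr_fun h.comp_s₁ l
  have hs₂ (l) : i (h.s₂ l) = f • l - h.s₁ (d l) := LinearMap.congr_fun h.comp_s₂ l
  refine LinearMap.prod_ext (TensorProduct.ext' fun x y => Prod.ext ?_ ?_)
    (TensorProduct.ext' fun x y => Prod.ext ?_ ?_)
  · simp [squareS₂, squareS₁, squareD₃_apply, squareD₂_apply, hs₁,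
      TensorProduct.sub_tmul, ← TensorProduct.smul_tmul',
      SymSquare.ofTensor_tmul_comm y (h.s₀ (e x)), SymSquare.ofTensor_tmul_comm (h.s₀ (e y))]
    module
  · simp [squareS₂, squareS₁, squareD₃_apply, squareD₂_apply, hs₀]
  · simp [squareS₂, squareS₁, squareD₃_apply, squareD₂_apply, hdi']
  · simp [squareS₂, squareS₁, squareD₃_apply, squareD₂_apply, hs₀, hs₂,
      TensorProduct.sub_tmul, ← TensorProduct.smul_tmul']
    module

lemma exists_squareD₃_eq_smul (h : ContractionUpTo i d e f) (hdi : d ∘ₗ i = 0)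
    {z : SymSquare R L₁ × (L₂ ⊗[R] L₀)} (hz : squareD₂ d e z = 0) :
    ∃ y, squareD₃ d e y = (f * f) • z := by
  obtain ⟨u, rfl⟩ :=
    Function.Surjective.prodMap (SymSquare.ofTensor_surjective (R := R)) Function.surjective_id z
  refine ⟨h.squareS₂ u, ?_⟩
  have hu : squareD₂ d e ((SymSquare.ofTensor R L₁).prodMap LinearMap.id u) = 0 := hz
  have key := LinearMap.congr_fun (h.squareD₃_comp_squareS₂ hdi) u
  rw [LinearMap.add_apply, LinearMap.comp_apply h.squareS₁, LinearMap.comp_apply (squareD₂ d e),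
    hu, map_zero, add_zero] at key
  exact key

lemma koszulExterior_comp_map_s₁ (h : ContractionUpTo i d e f) :
    koszulExterior d ∘ₗ exteriorPower.map 2 h.s₁ =
      TensorProduct.map h.s₁ (d ∘ₗ h.s₁) ∘ₗ koszulExterior LinearMap.id :=
  ExteriorSquare.hom_ext fun x y => by simp

lemma exists_koszulExterior_eq_smul [Module.Free R L₁] (h : ContractionUpTo i d e f)
    (hdi : d ∘ₗ i = 0) {z : L₂ ⊗[R] L₁} (hz : squareD₃ d e z = 0) :
    ∃ y, koszulExterior d y = (f * f) • z := by
  obtain ⟨σ, ω, -, hσ⟩ := exists_section_symSquare R L₁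
  have hdi' (x) : d (i x) = 0 := LinearMap.congr_fun hdi x
  have hs₁ (l) : d (h.s₁ l) = f • l - h.s₀ (e l) := LinearMap.congr_fun h.comp_s₁ l
  have hs₂ (l) : i (h.s₂ l) = f • l - h.s₁ (d l) := LinearMap.congr_fun h.comp_s₂ l
  have hmap (w) : koszulExterior d (exteriorPower.map 2 h.s₁ w) =
      TensorProduct.map h.s₁ (d ∘ₗ h.s₁) (koszulExterior LinearMap.id w) :=
    LinearMap.congr_fun h.koszulExterior_comp_map_s₁ w
  have homotopy : koszulExterior d ∘ₗ (ofTensor R L₂ ∘ₗ TensorProduct.map (i ∘ₗ h.s₂) h.s₁ +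
        exteriorPower.map 2 h.s₁ ∘ₗ ω ∘ₗ d.rTensor L₁) +
      TensorProduct.map h.s₁ (d ∘ₗ h.s₁) ∘ₗ σ ∘ₗ koszulSym d +
      f • h.s₀.lTensor L₂ ∘ₗ e.lTensor L₂ = (f * f) • LinearMap.id := by
    refine TensorProduct.ext' fun x y => ?_
    have hσ' := congrArg (TensorProduct.map h.s₁ (d ∘ₗ h.s₁)) (LinearMap.congr_fun hσ (d x ⊗ₜ y))
    simp only [LinearMap.add_apply, LinearMap.comp_apply, LinearMap.id_apply, map_add] at hσ'
    simp only [LinearMap.add_apply, LinearMap.comp_apply, LinearMap.smul_apply, map_add,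
      LinearMap.id_apply, LinearMap.lTensor_tmul, LinearMap.rTensor_tmul, TensorProduct.map_tmul,
      ofTensor_tmul, koszulExterior_wedge, koszulSym_tmul, hmap, hdi', TensorProduct.tmul_zero,
      sub_zero]
    rw [add_assoc (_ ⊗ₜ _), hσ', TensorProduct.map_tmul, LinearMap.comp_apply, hs₁, hs₂,
      TensorProduct.sub_tmul, sub_add_cancel, TensorProduct.tmul_sub, ← TensorProduct.smul_tmul',
      ← TensorProduct.smul_tmul', sub_add_cancel, TensorProduct.tmul_smul, mul_smul]
  rw [squareD₃_apply, Prod.mk_eq_zero, neg_eq_zero] at hz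
  have hz' := LinearMap.congr_fun homotopy z
  simp only [LinearMap.add_apply, LinearMap.comp_apply, LinearMap.smul_apply, hz, map_zero,
    smul_zero, add_zero] at hz'
  exact ⟨_, hz'⟩

end ContractionUpTo

end SquareComplex

section ContractibleSquare

open ExteriorSquare

variable {R : Type u} [CommRing R] {ι : Type*} {x : ι → R} {n j : ℕ} {X L₂ L₁ L₀ : Type u}
  [AddCommGroup X] [Module R X] [AddCommGroup L₂] [Module R L₂] [AddCommGroup L₁] [Module R L₁]
  [AddCommGroup L₀] [Module R L₀] {i : X →ₗ[R] L₂} {d : L₂ →ₗ[R] L₁} {e : L₁ →ₗ[R] L₀}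

/-- For every `a`, some power of `x a` is null-homotopic on `0 → X → L₂ → L₁ → L₀ → 0`. -/
def AlmostContractible (x : ι → R) (i : X →ₗ[R] L₂) (d : L₂ →ₗ[R] L₁) (e : L₁ →ₗ[R] L₀) : Prop :=
  ∀ a, ∃ c : ℕ, Nonempty (ContractionUpTo i d e (x a ^ c))

namespace AlmostContractible

lemma almostSurjective_squareD₁ (h : AlmostContractible x i d e) :
    AlmostSurjective x (squareD₁ e) := fun a =>
  (h a).imp fun _ ⟨s⟩ => s.exists_squareD₁_eq_smul

lemma almostExact_squareD₂_squareD₁ (h : AlmostContractible x i d e) (hed : e ∘ₗ d = 0) :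
    AlmostExact x (squareD₂ d e) (squareD₁ e) :=
  ⟨squareD₁_comp_squareD₂ hed, fun a =>
    have ⟨c, ⟨s⟩⟩ := h a
    ⟨c + c, fun _ hz => pow_add (x a) c c ▸ s.exists_squareD₂_eq_smul hz⟩⟩

lemma almostExact_squareD₃_squareD₂ (h : AlmostContractible x i d e) (hdi : d ∘ₗ i = 0)
    (hed : e ∘ₗ d = 0) : AlmostExact x (squareD₃ d e) (squareD₂ d e) :=
  ⟨squareD₂_comp_squareD₃ hed, fun a =>
    have ⟨c, ⟨s⟩⟩ := h a
    ⟨c + c, fun _ hz => pow_add (x a) c c ▸ s.exists_squareD₃_eq_smul hdi hz⟩⟩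

lemma almostExact_koszulExterior_squareD₃ [Module.Free R L₁] (h : AlmostContractible x i d e)
    (hdi : d ∘ₗ i = 0) (hed : e ∘ₗ d = 0) :
    AlmostExact x (koszulExterior d) (squareD₃ d e) :=
  ⟨squareD₃_comp_koszulExterior hed, fun a =>
    have ⟨c, ⟨s⟩⟩ := h a
    ⟨c + c, fun _ hz => pow_add (x a) c c ▸ s.exists_koszulExterior_eq_smul hdi hz⟩⟩

lemma almostExact_map_koszulExterior [Module.Free R L₁] (h : AlmostContractible x i d e)
    (hdi : d ∘ₗ i = 0) : AlmostExact x (exteriorPower.map 2 i) (koszulExterior d) :=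
  ⟨koszulExterior_comp_map hdi, fun a =>
    have ⟨c, ⟨s⟩⟩ := h a
    ⟨c + c, fun _ hz => pow_add (x a) c c ▸ exists_map_eq_smul s.comp_s₂ hz⟩⟩

lemma almostInjective_map (h : AlmostContractible x i d e) :
    AlmostInjective x (exteriorPower.map 2 i) := fun a =>
  have ⟨c, ⟨s⟩⟩ := h a
  ⟨c + c, fun _ hz => pow_add (x a) c c ▸ smul_eq_zero_of_map_eq_zero s.s₂_comp hz⟩

variable [Module.Free R L₂] [Module.Free R L₁] [Module.Free R L₀]

lemma extVanishes_range_squareD₂ (h : AlmostContractible x i d e) (hdi : d ∘ₗ i = 0)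
    (hed : e ∘ₗ d = 0) (hD : DepthGT x n) (hj : j + 2 ≤ n) (hX : ExtVanishes R (⋀[R]^2 X) R j) :
    ExtVanishes R (LinearMap.range (squareD₂ d e)) R (j + 3) := by
  have vanishes_koszul : ExtVanishes R (LinearMap.range (koszulExterior d)) R (j + 1) :=
    .range_of_almostExact hD h.almostInjective_map (h.almostExact_map_koszulExterior hdi)
      (by omega) hX (.of_projective (by omega))
  have vanishes_D₃ : ExtVanishes R (LinearMap.range (squareD₃ d e)) R (j + 2) :=
    .range_of_almostExact hD (.of_injective (Submodule.subtype_injective _))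
      (h.almostExact_koszulExterior_squareD₃ hdi hed).subtype_range (by omega) vanishes_koszul
      (.of_projective (by omega))
  exact .range_of_almostExact hD (.of_injective (Submodule.subtype_injective _))
    (h.almostExact_squareD₃_squareD₂ hdi hed).subtype_range hj vanishes_D₃
    (.of_projective (by omega))

lemma extVanishes_range_squareD₁ (h : AlmostContractible x i d e) (hdi : d ∘ₗ i = 0)
    (hed : e ∘ₗ d = 0) (hD : DepthGT x n) (hj : j + 3 ≤ n) (hX : ExtVanishes R (⋀[R]^2 X) R j) :
    ExtVanishes R (LinearMap.range (squareD₁ e)) R (j + 4) :=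
  .range_of_almostExact hD (.of_injective (Submodule.subtype_injective _))
    (h.almostExact_squareD₂_squareD₁ hed).subtype_range hj
    (h.extVanishes_range_squareD₂ hdi hed hD (by omega) hX) (.of_projective (by omega))

end AlmostContractible

end ContractibleSquare

section SquareTopDegree

variable {K n}

lemma AlmostSurjective.surjective_of_extVanishes {A B : Type} [AddCommGroup A]
    [Module (PolyS K n) A] [AddCommGroup B] [Module (PolyS K n) B] {f : A →ₗ[PolyS K n] B}
    (hs : AlmostSurjective (coords K n) f) (hf : Function.Injective f)
    (hA : ExtVanishes (PolyS K n) A (PolyS K n) n)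
    (hB : ExtVanishes (PolyS K n) B (PolyS K n) (n + 1)) : Function.Surjective f :=
  LinearMap.range_eq_top.1 <| Submodule.Quotient.subsingleton_iff.1 <|
    hs.actsNilpotently_quotient_range.subsingleton_of_extVanishes_top <|
      .quotient_left hf (LinearMap.exact_map_mkQ_range f) (Submodule.mkQ_surjective _) hA hB

lemma projective_ker_of_surjective {R M P : Type*} [Ring R] [AddCommGroup M] [Module R M]
    [AddCommGroup P] [Module R P] [Module.Projective R M] [Module.Projective R P]
    {f : M →ₗ[R] P} (hf : Function.Surjective f) : Module.Projective R (LinearMap.ker f) := by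
  obtain ⟨s, hs⟩ := LinearMap.exists_rightInverse_of_surjective f (LinearMap.range_eq_top.2 hf)
  have hs' (z) : f (s z) = z := LinearMap.congr_fun hs z
  refine .of_split (LinearMap.ker f).subtype
    ((LinearMap.id - s ∘ₗ f).codRestrict _ fun z => by simp [hs']) ?_
  exact LinearMap.ext fun z => Subtype.ext (by simp [LinearMap.mem_ker.1 z.2])

variable {X L₂ L₁ L₀ : Type} [AddCommGroup X] [Module (PolyS K n) X] [AddCommGroup L₂]
  [Module (PolyS K n) L₂] [AddCommGroup L₁] [Module (PolyS K n) L₁] [AddCommGroup L₀]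
  [Module (PolyS K n) L₀] {i : X →ₗ[PolyS K n] L₂} {d : L₂ →ₗ[PolyS K n] L₁}
  {e : L₁ →ₗ[PolyS K n] L₀} [Module.Free (PolyS K n) L₂] [Module.Free (PolyS K n) L₁]
  [Module.Free (PolyS K n) L₀]

lemma AlmostContractible.squareD₁_surjective (h : AlmostContractible (coords K n) i d e)
    (hdi : d ∘ₗ i = 0) (hed : e ∘ₗ d = 0) (hn : 4 ≤ n)
    (hX : ExtVanishes (PolyS K n) (⋀[PolyS K n]^2 X) (PolyS K n) (n - 4)) :
    Function.Surjective (squareD₁ e) := by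
  have hrange : ExtVanishes (PolyS K n) (LinearMap.range (squareD₁ e)) (PolyS K n) n := by
    have := h.extVanishes_range_squareD₁ hdi hed depthGT_coords (by omega) hX
    rwa [Nat.sub_add_cancel hn] at this
  have := h.almostSurjective_squareD₁.subtype_range.surjective_of_extVanishes
    (Submodule.subtype_injective _) hrange (.of_projective (by omega))
  exact fun z => (this z).elim fun y hy => hy ▸ y.2

lemma AlmostContractible.exact_squareD₂_squareD₁ (h : AlmostContractible (coords K n) i d e)
    (hdi : d ∘ₗ i = 0) (hed : e ∘ₗ d = 0) (hn : 3 ≤ n) (hs : Function.Surjective (squareD₁ e))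
    (hX : ExtVanishes (PolyS K n) (⋀[PolyS K n]^2 X) (PolyS K n) (n - 3)) :
    Function.Exact (squareD₂ d e) (squareD₁ e) := by
  have hrange : ExtVanishes (PolyS K n) (LinearMap.range (squareD₂ d e)) (PolyS K n) n := by
    have := h.extVanishes_range_squareD₂ hdi hed depthGT_coords (by omega) hX
    rwa [Nat.sub_add_cancel hn] at this
  have := projective_ker_of_surjective hs
  have hexact := h.almostExact_squareD₂_squareD₁ hed
  have hsurj := hexact.inclusion_range_ker.surjective_of_extVanishes
    (Submodule.inclusion_injective _) hrange (.of_projective (by omega))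
  refine LinearMap.exact_iff.2 (le_antisymm (fun z hz => ?_) hexact.range_le_ker)
  obtain ⟨⟨_, y, rfl⟩, hy⟩ := hsurj ⟨z, hz⟩
  exact ⟨y, congrArg Subtype.val hy⟩

end SquareTopDegree

section SquareAlgebra

open ExteriorSquare

variable {R : Type u} [CommRing R] {I : Ideal R} {L₂ L₁ L₀ : Type u}
  [AddCommGroup L₂] [Module R L₂] [AddCommGroup L₁] [Module R L₁] [AddCommGroup L₀] [Module R L₀]
  {d : L₂ →ₗ[R] L₁} {e : L₁ →ₗ[R] L₀}

lemma eq_zero_of_squareD₁_surjective {Q : Type u} [AddCommGroup Q] [Module R Q]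
    (hs : Function.Surjective (squareD₁ e)) {ψ : L₀ ⊗[R] L₀ →ₗ[R] Q}
    (hψe : ∀ a c, ψ (e a ⊗ₜ c) = 0) (hψ : ∀ c c', ψ (c ⊗ₜ c') + ψ (c' ⊗ₜ c) = 0) : ψ = 0 := by
  refine (LinearMap.cancel_right hs).1 (LinearMap.prod_ext ?_ ?_)
  · exact TensorProduct.ext' fun a c => by simp [squareD₁_apply, hψe]
  · exact SymSquare.hom_ext fun c c' => by
      rw [LinearMap.comp_assoc, LinearMap.comp_apply, LinearMap.comp_apply, LinearMap.inr_apply,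
        squareD₁_apply, map_zero, zero_sub, map_neg, polarize_ofTensor, map_add]
      exact neg_eq_zero.2 (hψ c c')

lemma mem_of_range_le_smul_top {M N : Type*} [AddCommGroup M] [Module R M] [AddCommGroup N]
    [Module R N] {e : M →ₗ[R] N} (he : LinearMap.range e ≤ I • ⊤) (φ : N →ₗ[R] R) (a : M) :
    φ (e a) ∈ I := by
  simpa using Submodule.smul_top_le_comap_smul_top I φ (he ⟨a, rfl⟩)

/-- The form `c ⊗ c' ↦ φ c * φ' c'` modulo `I`. -/
def mulMod (I : Ideal R) (φ φ' : L₀ →ₗ[R] R) : L₀ ⊗[R] L₀ →ₗ[R] R ⧸ I :=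
  I.mkQ ∘ₗ LinearMap.mul' R R ∘ₗ TensorProduct.map φ φ'

lemma mulMod_tmul (φ φ' : L₀ →ₗ[R] R) (c c' : L₀) :
    mulMod I φ φ' (c ⊗ₜ c') = Ideal.Quotient.mk I (φ c * φ' c') := rfl

lemma mulMod_tmul_eq_zero (he : LinearMap.range e ≤ I • ⊤) (φ φ' : L₀ →ₗ[R] R) (a : L₁) (c : L₀) :
    mulMod I φ φ' (e a ⊗ₜ c) = 0 :=
  Ideal.Quotient.eq_zero_iff_mem.2 (I.mul_mem_right _ (mem_of_range_le_smul_top he φ a))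

lemma subsingleton_of_squareD₁_surjective (hI : I ≠ ⊤) (hs : Function.Surjective (squareD₁ e))
    (he : LinearMap.range e ≤ I • ⊤) {κ : Type*} (b : Module.Basis κ R L₀) : Subsingleton κ := by
  refine ⟨fun p q => by_contra fun hpq => hI ((Ideal.eq_top_iff_one I).2 ?_)⟩
  have hψ : mulMod I (b.coord p) (b.coord q) - mulMod I (b.coord q) (b.coord p) = 0 :=
    eq_zero_of_squareD₁_surjective hs
      (fun a c => by simp [mulMod_tmul_eq_zero he])
      (fun c c' => by simp only [LinearMap.sub_apply, mulMod_tmul, map_mul]; ring)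
  have hψpq := LinearMap.congr_fun hψ (b p ⊗ₜ b q)
  simpa [mulMod_tmul, hpq, Ne.symm hpq, ← Ideal.Quotient.eq_zero_iff_mem] using hψpq

lemma two_notMem_of_squareD₁_surjective (hI : I ≠ ⊤) (hs : Function.Surjective (squareD₁ e))
    (he : LinearMap.range e ≤ I • ⊤) {κ : Type*} (b : Module.Basis κ R L₀) (p : κ) :
    (2 : R) ∉ I := by
  refine fun h2 => hI ((Ideal.eq_top_iff_one I).2 ?_)
  have hψ : mulMod I (b.coord p) (b.coord p) = 0 :=
    eq_zero_of_squareD₁_surjective hs (mulMod_tmul_eq_zero he _ _) fun c c' => by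
      rw [mulMod_tmul, mulMod_tmul, ← map_add, mul_comm, ← two_mul, Ideal.Quotient.eq_zero_iff_mem]
      exact I.mul_mem_right _ h2
  have hψp := LinearMap.congr_fun hψ (b p ⊗ₜ b p)
  simpa [mulMod_tmul, ← Ideal.Quotient.eq_zero_iff_mem] using hψp

/- If `b` generates `L₀` then `(2 a ⊗ b, e a * b)` is a cycle, and comparing it with a boundary
writes `2 φ(e a)` as a sum of products of two elements of the ideal `φ(e L₁)`. -/
lemma range_le_mul_self_of_exact (hexact : Function.Exact (squareD₂ d e) (squareD₁ e))
    (hed : e ∘ₗ d = 0) (h2 : IsUnit (2 : R)) {b : L₀} {φ : L₀ →ₗ[R] R} (hb : ∀ l, φ l • b = l)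
    (hφ : φ b = 1) :
    LinearMap.range (φ ∘ₗ e) ≤ LinearMap.range (φ ∘ₗ e) * LinearMap.range (φ ∘ₗ e) := by
  set J : Ideal R := LinearMap.range (φ ∘ₗ e)
  rintro _ ⟨a, rfl⟩
  have hswap : b ⊗ₜ[R] e a = e a ⊗ₜ b := by
    rw [← hb (e a), TensorProduct.tmul_smul, TensorProduct.smul_tmul']
  obtain ⟨⟨y, w⟩, hyw⟩ := (hexact ((2 : R) • a ⊗ₜ b, SymSquare.ofTensor R L₀ (e a ⊗ₜ b))).1 (by
    simp [squareD₁_apply, hswap, two_smul])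
  rw [squareD₂_apply, Prod.mk.injEq] at hyw
  let θ : L₁ ⊗[R] L₀ →ₗ[R] R := LinearMap.mul' R R ∘ₗ TensorProduct.map (φ ∘ₗ e) φ
  have hθd : θ ∘ₗ d.rTensor L₀ = 0 := TensorProduct.ext' fun u c => by
    simp [θ, show e (d u) = 0 from LinearMap.congr_fun hed u]
  have hθ : (J * J).mkQ ∘ₗ θ ∘ₗ polarize e = 0 := SymSquare.hom_ext fun u v =>
    (Submodule.Quotient.mk_eq_zero _).2 <| by
      simpa [θ] using add_mem
        (Ideal.mul_mem_mul ⟨u, rfl⟩ ⟨v, rfl⟩ : (φ ∘ₗ e) u * (φ ∘ₗ e) v ∈ J * J)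
        (Ideal.mul_mem_mul ⟨v, rfl⟩ ⟨u, rfl⟩)
  have hθy : θ (polarize e y) = 2 * φ (e a) := by
    have := congrArg θ hyw.1
    rwa [map_add, ← LinearMap.comp_apply θ (d.rTensor L₀), hθd, LinearMap.zero_apply, add_zero,
      map_smul, show θ (a ⊗ₜ b) = φ (e a) by simp [θ, hφ], smul_eq_mul] at this
  rw [LinearMap.comp_apply, ← Ideal.unit_mul_mem_iff_mem _ h2, ← hθy]
  exact (Submodule.Quotient.mk_eq_zero _).1 (LinearMap.congr_fun hθ y)

end SquareAlgebra

section SecondSyzygy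

variable {K n}

lemma not_exact_squareD₂_squareD₁ {L₂ L₁ L₀ : Type} [AddCommGroup L₂] [Module (PolyS K n) L₂]
    [AddCommGroup L₁] [Module (PolyS K n) L₁] [AddCommGroup L₀] [Module (PolyS K n) L₀]
    [Module.Free (PolyS K n) L₀] [Nontrivial L₀] {d : L₂ →ₗ[PolyS K n] L₁}
    {e : L₁ →ₗ[PolyS K n] L₀} (hed : e ∘ₗ d = 0) (he : LinearMap.range e ≤ irrel K n • ⊤)
    (hcoker : AlmostSurjective (coords K n) e) (hs : Function.Surjective (squareD₁ e)) :
    ¬ Function.Exact (squareD₂ d e) (squareD₁ e) := by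
  intro hexact
  have hI : irrel K n ≠ ⊤ := Ideal.IsMaximal.ne_top inferInstance
  let b := Module.Free.chooseBasis (PolyS K n) L₀
  obtain ⟨p⟩ : Nonempty (Module.Free.ChooseBasisIndex (PolyS K n) L₀) := b.index_nonempty
  have := subsingleton_of_squareD₁_surjective hI hs he b
  have h2 : IsUnit (2 : PolyS K n) := by
    have hK : (2 : K) ≠ 0 := fun h => two_notMem_of_squareD₁_surjective hI hs he b p <| by
      rw [← map_ofNat (MvPolynomial.C : K →+* PolyS K n), h, map_zero]
      exact zero_mem _
    exact map_ofNat (MvPolynomial.C : K →+* PolyS K n) 2 ▸ hK.isUnit.map MvPolynomial.C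
  have hb (l) : b.coord p l • b p = l :=
    b.ext_elem fun q => by simp [Subsingleton.elim q p]
  have hJ := range_le_mul_self_of_exact hexact hed h2 hb (by simp)
  rcases (Ideal.isIdempotentElem_iff_eq_bot_or_top _ (IsNoetherian.noetherian _)).1
    (le_antisymm Ideal.mul_le_left hJ) with h | h
  · obtain ⟨c, hc⟩ := hcoker 0
    obtain ⟨a, ha⟩ := hc (b p)
    have : (b.coord p ∘ₗ e) a = 0 := LinearMap.congr_fun (LinearMap.range_eq_bot.1 h) a
    simp [ha] at this
  · obtain ⟨a, ha⟩ : (1 : PolyS K n) ∈ LinearMap.range (b.coord p ∘ₗ e) := h ▸ trivial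
    exact hI ((Ideal.eq_top_iff_one _).2 (ha ▸ mem_of_range_le_smul_top he (b.coord p) a))

variable {N : Type} [AddCommGroup N] [Module (PolyS K n) N] (res : MinimalResolution K n N)

lemma Syzygy.d_comp_d (j : ℕ) : res.d j ∘ₗ res.d (j + 1) = 0 :=
  LinearMap.range_le_ker_iff.1 (res.exact j).le

lemma Syzygy.d_comp_incl (j : ℕ) : res.d j ∘ₗ Syzygy.incl res (j + 1) = 0 :=
  LinearMap.ext fun ⟨_, hz⟩ => (res.exact j).le hz

lemma Syzygy.exists_d_comp_eq (j : ℕ) {g : res.L (j + 1) →ₗ[PolyS K n] res.L (j + 1)}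
    (hg : res.d j ∘ₗ g = 0) : ∃ s, res.d (j + 1) ∘ₗ s = g := by
  obtain ⟨s, hs⟩ := Module.projective_lifting_property (Syzygy.proj res (j + 1))
    (g.codRestrict (LinearMap.range (res.d (j + 1))) fun l =>
      (res.exact j).ge (LinearMap.congr_fun hg l)) (Syzygy.proj_surjective res (j + 1))
  exact ⟨s, LinearMap.ext fun l => congrArg Subtype.val (LinearMap.congr_fun hs l)⟩

lemma ActsNilpotently.almostContractible (hN : ActsNilpotently (coords K n) N) :
    AlmostContractible (coords K n) (Syzygy.incl res 2) (res.d 1) (res.d 0) := by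
  intro a
  obtain ⟨c, hc⟩ := hN a
  set f := coords K n a ^ c
  obtain ⟨s₀, hs₀⟩ := Module.projective_lifting_property (Syzygy.proj res 0)
    ((f • LinearMap.id).codRestrict (LinearMap.range (res.d 0)) fun l => by
      rw [res.exact0, LinearMap.mem_ker, LinearMap.smul_apply, map_smul, hc])
    (Syzygy.proj_surjective res 0)
  have hs₀' : res.d 0 ∘ₗ s₀ = f • LinearMap.id :=
    LinearMap.ext fun l => congrArg Subtype.val (LinearMap.congr_fun hs₀ l)
  obtain ⟨s₁, hs₁⟩ := Syzygy.exists_d_comp_eq res 0 (g := f • LinearMap.id - s₀ ∘ₗ res.d 0) (by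
    rw [LinearMap.comp_sub, ← LinearMap.comp_assoc, hs₀', LinearMap.comp_smul,
      LinearMap.smul_comp, LinearMap.comp_id, LinearMap.id_comp, sub_self])
  let s₂ : res.L 2 →ₗ[PolyS K n] Syzygy res 2 :=
    (f • LinearMap.id - s₁ ∘ₗ res.d 1).codRestrict _ fun l => by
      have h₁ := LinearMap.congr_fun hs₁ (res.d 1 l)
      have h₀ : res.d 0 (res.d 1 l) = 0 := LinearMap.congr_fun (Syzygy.d_comp_d res 0) l
      rw [res.exact 1, LinearMap.mem_ker]
      simpa [h₀, sub_eq_zero] using h₁.symm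
  refine ⟨c, ⟨⟨s₀, s₁, s₂, hs₀', hs₁, rfl, LinearMap.ext fun l => ?_⟩⟩⟩
  have hl : res.d 1 (Syzygy.incl res 2 l) = 0 :=
    LinearMap.congr_fun (Syzygy.d_comp_incl res 1) l
  refine Syzygy.incl_injective res 2 ?_
  change f • Syzygy.incl res 2 l - s₁ (res.d 1 (Syzygy.incl res 2 l)) = _
  rw [hl, map_zero, sub_zero]
  rfl

theorem ActsNilpotently.not_extVanishes_exteriorSquare_syzygy_two [Nontrivial N]
    (hN : ActsNilpotently (coords K n) N) (hn : 4 ≤ n)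
    (h₄ : ExtVanishes (PolyS K n) (⋀[PolyS K n]^2 (Syzygy res 2)) (PolyS K n) (n - 4)) :
    ¬ ExtVanishes (PolyS K n) (⋀[PolyS K n]^2 (Syzygy res 2)) (PolyS K n) (n - 3) := by
  intro h₃
  have := res.aug_surjective.nontrivial
  have h := hN.almostContractible res
  have hdi := Syzygy.d_comp_incl res 1
  have hed := Syzygy.d_comp_d res 0
  have hs := h.squareD₁_surjective hdi hed hn h₄
  have hcoker : AlmostSurjective (coords K n) (res.d 0) := fun a => (h a).imp fun _ ⟨s⟩ y =>
    ⟨s.s₀ y, LinearMap.congr_fun s.comp_s₀ y⟩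
  exact not_exact_squareD₂_squareD₁ hed (res.minimal 0) hcoker hs
    (h.exact_squareD₂_squareD₁ hdi hed (by omega) hs h₃)

end SecondSyzygy

section Localization

variable {R : Type*} [CommRing R] (C : Submonoid R) {A M N M' N' : Type*} [AddCommGroup A]
  [Module R A] [AddCommGroup M] [Module R M] [AddCommGroup N] [Module R N] [AddCommGroup M']
  [Module R M'] [AddCommGroup N'] [Module R N']

lemma exists_smul_comp_eq_smul_id [Module.FinitePresentation R M] (f : M →ₗ[R] M')
    [IsLocalizedModule C f] {h : M →ₗ[R] M} {s : C} (hs : f ∘ₗ h = s • f) :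
    ∃ t : C, (t : R) • h = (t * s : R) • LinearMap.id := by
  obtain ⟨t, ht⟩ := Module.Finite.exists_smul_of_comp_eq_of_isLocalizedModule C f h
    ((s : R) • LinearMap.id) (by rw [hs, LinearMap.comp_smul, LinearMap.comp_id]; rfl)
  exact ⟨t, ht.trans (smul_smul (t : R) (s : R) LinearMap.id)⟩

lemma exists_comp_eq_smul_id_of_linearEquiv [Module.FinitePresentation R M]
    [Module.FinitePresentation R N] (f : M →ₗ[R] M') [IsLocalizedModule C f] (g : N →ₗ[R] N')
    [IsLocalizedModule C g] (e : M' ≃ₗ[R] N') :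
    ∃ (a : M →ₗ[R] N) (b : N →ₗ[R] M), ∃ s ∈ C,
      b ∘ₗ a = s • LinearMap.id ∧ a ∘ₗ b = s • LinearMap.id := by
  obtain ⟨a, s₁, ha⟩ := Module.FinitePresentation.exists_lift_of_isLocalizedModule C g (e ∘ₗ f)
  obtain ⟨b, s₂, hb⟩ :=
    Module.FinitePresentation.exists_lift_of_isLocalizedModule C f (e.symm ∘ₗ g)
  obtain ⟨t₁, ht₁⟩ := exists_smul_comp_eq_smul_id C f (h := b ∘ₗ a) (s := s₁ * s₂) <| by
    rw [← LinearMap.comp_assoc, hb, LinearMap.smul_comp, LinearMap.comp_assoc, ha, mul_comm,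
      mul_smul, LinearMap.comp_smul, ← LinearMap.comp_assoc]
    simp
  obtain ⟨t₂, ht₂⟩ := exists_smul_comp_eq_smul_id C g (h := a ∘ₗ b) (s := s₁ * s₂) <| by
    rw [← LinearMap.comp_assoc, ha, LinearMap.smul_comp, LinearMap.comp_assoc, hb,
      mul_smul, LinearMap.comp_smul, ← LinearMap.comp_assoc]
    simp
  refine ⟨(t₁ * t₂ : R) • a, b, t₁ * t₂ * (s₁ * s₂ : C),
    C.mul_mem (C.mul_mem t₁.2 t₂.2) (s₁ * s₂).2, ?_, ?_⟩
  · rw [LinearMap.comp_smul, mul_comm (t₁ : R), mul_smul, ht₁, smul_smul, mul_assoc]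
  · rw [LinearMap.smul_comp, mul_smul, ht₂, smul_smul, mul_assoc]

lemma exists_comp_eq_smul_id_of_projective [Module.FinitePresentation R N]
    [Module.Projective (Localization C) (LocalizedModule C N)] {π : M →ₗ[R] N}
    (hπ : Function.Surjective π) :
    ∃ (h : N →ₗ[R] M), ∃ s ∈ C, π ∘ₗ h = s • LinearMap.id := by
  obtain ⟨σ, hσ⟩ := LinearMap.exists_rightInverse_of_surjective (LocalizedModule.map C π)
    (LinearMap.range_eq_top.2 (LocalizedModule.map_surjective C π hπ))
  obtain ⟨h, s, hs⟩ := Module.FinitePresentation.exists_lift_of_isLocalizedModule C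
    (LocalizedModule.mkLinearMap C M)
    (σ.restrictScalars R ∘ₗ LocalizedModule.mkLinearMap C N)
  obtain ⟨t, ht⟩ := exists_smul_comp_eq_smul_id C (LocalizedModule.mkLinearMap C N)
    (h := π ∘ₗ h) (s := s) <| LinearMap.ext fun y => by
      have hmap (z : M) : LocalizedModule.mkLinearMap C N (π z) =
          LocalizedModule.map C π (LocalizedModule.mkLinearMap C M z) := by
        simp [LocalizedModule.map_mk]
      have hsy := LinearMap.congr_fun hs y
      simp only [LinearMap.comp_apply, LinearMap.smul_apply, Submonoid.smul_def] at hsy ⊢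
      rw [hmap, hsy, LinearMap.restrictScalars_apply, LinearMap.map_smul_of_tower]
      exact congrArg _ (LinearMap.congr_fun hσ _)
  exact ⟨(t : R) • h, t * s, C.mul_mem t.2 s.2, by rw [LinearMap.comp_smul, ht]⟩

lemma exists_retraction_eq_smul_id {α : A →ₗ[R] M} (hα : Function.Injective α) {s : R}
    {h : M ⧸ LinearMap.range α →ₗ[R] M} (hs : (LinearMap.range α).mkQ ∘ₗ h = s • LinearMap.id) :
    ∃ r : M →ₗ[R] A, r ∘ₗ α = s • LinearMap.id := by
  have hrange (y : M) :
      (s • LinearMap.id - h ∘ₗ (LinearMap.range α).mkQ : M →ₗ[R] M) y ∈ LinearMap.range α := by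
    have hy := LinearMap.congr_fun hs ((LinearMap.range α).mkQ y)
    exact (Submodule.Quotient.mk_eq_zero _).1 (sub_eq_zero.2 hy.symm)
  refine ⟨.codRestrictOfInjective _ α hα hrange, LinearMap.ext fun a => hα ?_⟩
  refine (LinearMap.congr_fun (LinearMap.codRestrictOfInjective_comp _ α hα hrange) _).trans ?_
  simp [(Submodule.Quotient.mk_eq_zero _).2 (LinearMap.mem_range_self α a)]

end Localization

section Determinant

open ExteriorSquare

variable (R : Type u) [CommRing R]

/-- The determinant `(a, c) ∧ (b, d) ↦ ad - cb` on the exterior square of `R × R`. -/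
def detTwo : ⋀[R]^2 (R × R) →ₗ[R] R :=
  lift ((LinearMap.mul R R).compl₁₂ (.fst R R R) (.snd R R R) -
    (LinearMap.mul R R).compl₁₂ (.snd R R R) (.fst R R R)) fun v => by simp [mul_comm]

variable {R}

lemma detTwo_wedge (u v : R × R) : detTwo R (wedge R u v) = u.1 * v.2 - u.2 * v.1 :=
  lift_wedge _ _ u v

lemma detTwo_smul_wedge (z : ⋀[R]^2 (R × R)) :
    detTwo R z • wedge R ((1, 0) : R × R) (0, 1) = z := by
  suffices h : (LinearMap.toSpanSingleton R _ (wedge R ((1, 0) : R × R) (0, 1))) ∘ₗ detTwo R =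
      LinearMap.id from LinearMap.congr_fun h z
  refine hom_ext fun u v => ?_
  have hdec (w : R × R) : w = w.1 • (1, 0) + w.2 • (0, 1) := by ext <;> simp
  rw [LinearMap.comp_apply, detTwo_wedge, LinearMap.toSpanSingleton_apply, LinearMap.id_apply]
  conv_rhs => rw [hdec u, hdec v]
  simp only [map_add, map_smul, LinearMap.add_apply, LinearMap.smul_apply, wedge_self,
    wedge_swap ((0, 1) : R × R) (1, 0)]
  module

lemma exists_smul_eq_smul_of_comp_eq_smul_id {E : Type u} [AddCommGroup E] [Module R E]
    {a : E →ₗ[R] R × R} {b : R × R →ₗ[R] E} {s : R} (hba : b ∘ₗ a = s • LinearMap.id)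
    (hab : a ∘ₗ b = s • LinearMap.id) :
    ∃ (w : ⋀[R]^2 E) (δ : ⋀[R]^2 E →ₗ[R] R), (∀ z, (s * s) • z = δ z • w) ∧ δ w = s * s := by
  refine ⟨exteriorPower.map 2 b (wedge R (1, 0) (0, 1)), detTwo R ∘ₗ exteriorPower.map 2 a,
    fun z => ?_, ?_⟩
  · rw [← map_smul, LinearMap.comp_apply, detTwo_smul_wedge, ← LinearMap.comp_apply,
      ← exteriorPower.map_comp, hba, map_smul_id, LinearMap.smul_apply, LinearMap.id_apply]
  · rw [LinearMap.comp_apply, ← LinearMap.comp_apply (exteriorPower.map 2 a),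
      ← exteriorPower.map_comp, hab, map_smul_id, LinearMap.smul_apply, LinearMap.id_apply,
      map_smul, detTwo_wedge]
    simp

end Determinant

section Functional

variable {R : Type*} [CommRing R] {M : Type*} [AddCommGroup M] [Module R M]
  {δ δ₁ : M →ₗ[R] R} {w w₀ : M} {t : R}

lemma mul_functional_eq (hw : ∀ z, t • z = δ₁ z • w) (z : M) : t * δ z = δ₁ z * δ w := by
  simpa only [map_smul, smul_eq_mul] using congrArg δ (hw z)

lemma exists_prime_dvd_mem [UniqueFactorizationMonoid R] {p : Ideal R} [hp : p.IsPrime] {d : R}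
    (hd : d ∈ p) (h₀ : d ≠ 0) : ∃ q, Prime q ∧ q ∣ d ∧ q ∈ p := by
  obtain ⟨f, hf, hfd⟩ := UniqueFactorizationMonoid.exists_prime_factors d h₀
  obtain ⟨q, hq, hqp⟩ := (hp.multiset_prod_mem_iff_exists_mem f).1
    (p.mem_of_dvd hfd.symm.dvd hd)
  exact ⟨q, hf q hq, (Multiset.dvd_prod hq).trans hfd.dvd, hqp⟩

lemma functional_notMem_of_isPrime [UniqueFactorizationMonoid R] {p : Ideal R} [p.IsPrime]
    (hw : ∀ z, t • z = δ₁ z • w) (ht : t ∉ p) (hδw : δ w ≠ 0)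
    (hδ : ∀ q, ¬IsUnit q → ∃ z, ¬q ∣ δ z) : δ w ∉ p := by
  intro hwp
  obtain ⟨q, hq, hqw, hqp⟩ := exists_prime_dvd_mem hwp hδw
  obtain ⟨z, hz⟩ := hδ q hq.not_isUnit
  have hqz : q ∣ t * δ z := mul_functional_eq (δ := δ) hw z ▸ hqw.mul_left _
  exact (hq.dvd_or_dvd hqz).elim (fun h => ht (p.mem_of_dvd h hqp)) hz

variable [IsDomain R]

lemma exists_eq_smul_of_forall_dvd {q : R} (hq : q ≠ 0) (h : ∀ z, q ∣ δ z) :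
    ∃ δ' : M →ₗ[R] R, δ = q • δ' := by
  have hinj : Function.Injective (q • LinearMap.id : R →ₗ[R] R) := fun _ _ => mul_left_cancel₀ hq
  have hmem (z : M) : δ z ∈ LinearMap.range (q • LinearMap.id : R →ₗ[R] R) :=
    have ⟨r, hr⟩ := h z
    ⟨r, hr.symm⟩
  exact ⟨δ.codRestrictOfInjective _ hinj hmem, (δ.codRestrictOfInjective_comp _ hinj hmem).symm⟩

lemma exists_functional_forall_not_dvd [WfDvdMonoid R] (h₀ : δ₁ w₀ ≠ 0) :
    ∃ δ : M →ₗ[R] R, δ w₀ ≠ 0 ∧ ∀ q, ¬IsUnit q → ∃ z, ¬q ∣ δ z := by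
  obtain ⟨_, ⟨hδ, δ, rfl⟩, hmin⟩ := (wellFounded_dvdNotUnit (α := R)).has_min
    {d | d ≠ 0 ∧ ∃ δ : M →ₗ[R] R, δ w₀ = d} ⟨_, h₀, δ₁, rfl⟩
  refine ⟨δ, hδ, fun q hq => by_contra fun h => ?_⟩
  push Not at h
  obtain ⟨δ', rfl⟩ := exists_eq_smul_of_forall_dvd
    (by rintro rfl; exact hδ (zero_dvd_iff.1 (h w₀))) h
  have hδ' : δ' w₀ ≠ 0 := right_ne_zero_of_mul hδ
  exact hmin (δ' w₀) ⟨hδ', δ', rfl⟩ ⟨hδ', q, hq, mul_comm _ _⟩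

lemma functional_ne_zero (hw : ∀ z, t • z = δ₁ z • w) (ht : t ≠ 0) (h₀ : δ w₀ ≠ 0) : δ w ≠ 0 := by
  intro h
  have := mul_functional_eq (δ := δ) hw w₀
  rw [h, mul_zero] at this
  exact mul_ne_zero ht h₀ this

lemma smul_eq_zero_of_functional_eq_zero (hw : ∀ z, t • z = δ₁ z • w) (hδw : δ w ≠ 0) {z : M}
    (hz : δ z = 0) : t • z = 0 := by
  have := mul_functional_eq (δ := δ) hw z
  rw [hz, mul_zero] at this
  rw [hw, (mul_eq_zero.1 this.symm).resolve_right hδw, zero_smul]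

end Functional

section Punctured

variable {K n}

lemma exists_coords_pow_mem {J : Ideal (PolyS K n)}
    (h : ∀ p : PrimeSpectrum (PolyS K n), p.asIdeal ≠ irrel K n → ∃ s ∈ J, s ∉ p.asIdeal)
    (i : Fin (n + 1)) : ∃ c : ℕ, coords K n i ^ c ∈ J := by
  suffices coords K n i ∈ J.radical from this
  rw [Ideal.radical_eq_sInf, Submodule.mem_sInf]
  rintro p ⟨hJ, hp⟩
  by_cases hpm : p = irrel K n
  · exact hpm ▸ Ideal.subset_span ⟨i, rfl⟩
  · obtain ⟨s, hs, hsp⟩ := h ⟨p, hp⟩ hpm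
    exact absurd (hJ hs) hsp

lemma almostInjective_of_forall_primes {A B : Type} [AddCommGroup A] [Module (PolyS K n) A]
    [AddCommGroup B] [Module (PolyS K n) B] {f : A →ₗ[PolyS K n] B}
    (h : ∀ p : PrimeSpectrum (PolyS K n), p.asIdeal ≠ irrel K n →
      ∃ s ∉ p.asIdeal, ∀ z, f z = 0 → s • z = 0) : AlmostInjective (coords K n) f := fun i => by
  obtain ⟨c, hc⟩ := exists_coords_pow_mem
    (J := Module.annihilator (PolyS K n) (LinearMap.ker f)) (fun p hp => by
      obtain ⟨s, hs, hsz⟩ := h p hp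
      exact ⟨s, Module.mem_annihilator.2 fun z => Subtype.ext (hsz z z.2), hs⟩) i
  exact ⟨c, fun z hz => congrArg Subtype.val (Module.mem_annihilator.1 hc ⟨z, hz⟩)⟩

variable {A E P : Type} [AddCommGroup A] [Module (PolyS K n) A] [AddCommGroup E]
  [Module (PolyS K n) E] [AddCommGroup P] [Module (PolyS K n) P]

lemma exists_exteriorSquare_smul_eq_smul (hE : IsRankTwoBundleModule K n E)
    {p : PrimeSpectrum (PolyS K n)} (hp : p.asIdeal ≠ irrel K n) :
    ∃ (t : PolyS K n) (w : ⋀[PolyS K n]^2 E) (δ : ⋀[PolyS K n]^2 E →ₗ[PolyS K n] PolyS K n),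
      t ∉ p.asIdeal ∧ (∀ z, t • z = δ z • w) ∧ δ w = t := by
  have := hE.finite
  have := hE.locFree p hp
  let C := p.asIdeal.primeCompl
  let Sₚ := Localization.AtPrime p.asIdeal
  have : Module.Finite Sₚ (LocalizedModule C E) :=
    Module.Finite.of_isLocalizedModule C (LocalizedModule.mkLinearMap C E)
  let e : LocalizedModule C E ≃ₗ[Sₚ] Sₚ × Sₚ :=
    (Module.finBasisOfFinrankEq _ _ (Module.finrank_eq_of_rank_eq (hE.rank2 p hp))).equivFun.trans
      (LinearEquiv.finTwoArrow Sₚ Sₚ)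
  have : Module.FinitePresentation (PolyS K n) E := Module.finitePresentation_of_finite _ _
  obtain ⟨a, b, s, hs, hba, hab⟩ := exists_comp_eq_smul_id_of_linearEquiv C
    (LocalizedModule.mkLinearMap C E)
    ((Algebra.linearMap (PolyS K n) Sₚ).prodMap (Algebra.linearMap (PolyS K n) Sₚ))
    (e.restrictScalars (PolyS K n))
  obtain ⟨w, δ, hw, hδw⟩ := exists_smul_eq_smul_of_comp_eq_smul_id hba hab
  exact ⟨s * s, w, δ, C.mul_mem hs hs, hw, hδw⟩

/-- `⋀²E` is almost isomorphic to `S`: a functional whose values have no common factor generates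
its dual, because away from the irrelevant ideal `⋀²E` is free of rank one. -/
theorem extVanishes_exteriorSquare_of_rankTwo (hE : IsRankTwoBundleModule K n E) {j : ℕ}
    (hj : 1 ≤ j) (hjn : j + 1 ≤ n) :
    ExtVanishes (PolyS K n) (⋀[PolyS K n]^2 E) (PolyS K n) j := by
  have hne {p : PrimeSpectrum (PolyS K n)} {t : PolyS K n} (ht : t ∉ p.asIdeal) : t ≠ 0 := by
    rintro rfl; exact ht (Ideal.zero_mem _)
  have hbot : (⊥ : Ideal (PolyS K n)) ≠ irrel K n := by
    intro h
    have h₀ : MvPolynomial.X 0 ∈ irrel K n := Ideal.subset_span ⟨0, rfl⟩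
    rw [← h] at h₀
    exact MvPolynomial.X_ne_zero 0 h₀
  obtain ⟨t₀, w₀, δ₀, ht₀, -, hδ₀⟩ := exists_exteriorSquare_smul_eq_smul hE
    (p := ⟨⊥, Ideal.isPrime_bot⟩) hbot
  obtain ⟨δ, hδ, hdvd⟩ := exists_functional_forall_not_dvd (hδ₀ ▸ hne ht₀)
  have hinj : AlmostInjective (coords K n) δ := almostInjective_of_forall_primes fun p hp => by
    obtain ⟨t, w, δ₁, ht, hw, -⟩ := exists_exteriorSquare_smul_eq_smul hE hp
    exact ⟨t, ht, fun z =>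
      smul_eq_zero_of_functional_eq_zero hw (functional_ne_zero hw (hne ht) hδ)⟩
  have hsurj : AlmostSurjective (coords K n) δ := fun i => by
    obtain ⟨c, z, hz⟩ := exists_coords_pow_mem (J := LinearMap.range δ) (fun p hp => by
      obtain ⟨t, w, δ₁, ht, hw, -⟩ := exists_exteriorSquare_smul_eq_smul hE hp
      exact ⟨δ w, ⟨w, rfl⟩, functional_notMem_of_isPrime hw ht
        (functional_ne_zero hw (hne ht) hδ) hdvd⟩) i
    exact ⟨c, fun y => ⟨y • z, by rw [map_smul, hz, smul_eq_mul, smul_eq_mul, mul_comm]⟩⟩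
  exact .source_of_almostIso depthGT_coords hinj hsurj hjn (.of_projective hj)

theorem almostSplitInjective_of_locallyFree_quotient [Module.Finite (PolyS K n) P]
    {α : A →ₗ[PolyS K n] P} (hα : Function.Injective α)
    (hfree : ∀ p : PrimeSpectrum (PolyS K n), p.asIdeal ≠ irrel K n →
      Module.Free (Localization.AtPrime p.asIdeal)
        (LocalizedModule p.asIdeal.primeCompl (P ⧸ LinearMap.range α))) :
    AlmostSplitInjective (coords K n) α := fun i => by
  obtain ⟨c, r, hr⟩ := exists_coords_pow_mem
    (J := (LinearMap.range (LinearMap.lcomp (PolyS K n) A α)).comap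
      (LinearMap.toSpanSingleton (PolyS K n) (A →ₗ[PolyS K n] A) LinearMap.id)) (fun p hp => by
        have := hfree p hp
        have : Module.FinitePresentation (PolyS K n) (P ⧸ LinearMap.range α) :=
          Module.finitePresentation_of_finite _ _
        have : Module.Projective (Localization p.asIdeal.primeCompl)
          (LocalizedModule p.asIdeal.primeCompl (P ⧸ LinearMap.range α)) := .of_free
        obtain ⟨h, s, hs, hπ⟩ := exists_comp_eq_smul_id_of_projective p.asIdeal.primeCompl
          (LinearMap.range α).mkQ_surjective
        exact ⟨s, exists_retraction_eq_smul_id hα hπ, hs⟩) i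
  exact ⟨c, r, hr⟩

end Punctured

section Split

variable {R : Type u} [CommRing R] {ι : Type*} {x : ι → R} {B F P W X Y : Type u}
  [AddCommGroup B] [Module R B] [AddCommGroup F] [Module R F] [AddCommGroup P] [Module R P]
  [AddCommGroup W] [Module R W] [AddCommGroup X] [Module R X] [AddCommGroup Y] [Module R Y]
  {m j : ℕ}

lemma AlmostSurjective.almostSplitSurjective [Module.Projective R B] {β : P →ₗ[R] B}
    (hβ : AlmostSurjective x β) : AlmostSplitSurjective x β := fun i => by
  obtain ⟨c, hc⟩ := hβ i
  obtain ⟨s, hs⟩ := Module.projective_lifting_property β.rangeRestrict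
    (LinearMap.codRestrict (LinearMap.range β) (x i ^ c • LinearMap.id) hc)
    β.surjective_rangeRestrict
  exact ⟨c, s, congrArg ((LinearMap.range β).subtype ∘ₗ ·) hs⟩

lemma AlmostSurjective.exists_inverse_subtype {Y' : Submodule R Y}
    (hY : AlmostSurjective x Y'.subtype) (i : ι) :
    ∃ (c : ℕ) (q : Y →ₗ[R] Y'), q ∘ₗ Y'.subtype = x i ^ c • LinearMap.id ∧
      Y'.subtype ∘ₗ q = x i ^ c • LinearMap.id := by
  obtain ⟨c, hc⟩ := hY i
  refine ⟨c, LinearMap.codRestrict Y' (x i ^ c • LinearMap.id) fun y => ?_, rfl, rfl⟩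
  obtain ⟨z, hz⟩ := hc y
  exact (congrArg (· ∈ Y') hz).mp z.2

lemma ExtVanishes.tensor_of_submodule (hD : DepthGT x m) {Y' : Submodule R Y}
    (hY : AlmostSurjective x Y'.subtype) (hj : j ≤ m) (h : ExtVanishes R (X ⊗[R] Y') R j) :
    ExtVanishes R (X ⊗[R] Y) R j := by
  refine .target_of_almostIso hD (a := Y'.subtype.lTensor X) (fun i => ?_) (fun i => ?_) hj h
  · obtain ⟨c, q, hq, -⟩ := hY.exists_inverse_subtype i
    refine ⟨c, fun z hz => ?_⟩
    have hqz := congrArg (q.lTensor X) hz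
    rwa [← LinearMap.comp_apply, ← LinearMap.lTensor_comp, hq, LinearMap.lTensor_smul,
      LinearMap.lTensor_id, map_zero] at hqz
  · obtain ⟨c, q, -, hq⟩ := hY.exists_inverse_subtype i
    refine ⟨c, fun z => ⟨q.lTensor X z, ?_⟩⟩
    rw [← LinearMap.comp_apply, ← LinearMap.lTensor_comp, hq, LinearMap.lTensor_smul,
      LinearMap.lTensor_id]
    rfl

lemma exists_section_rangeRestrict {u : X →ₗ[R] W} {v : W →ₗ[R] Y} {r : W →ₗ[R] X}
    (huv : Function.Exact u v) (hr : r ∘ₗ u = LinearMap.id) :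
    ∃ t : LinearMap.range v →ₗ[R] W, v.rangeRestrict ∘ₗ t = LinearMap.id ∧ r ∘ₗ t = 0 := by
  have hr' (z) : r (u z) = z := LinearMap.congr_fun hr z
  have hvu (z) : v (u z) = 0 := huv.apply_apply_eq_zero z
  obtain ⟨t, ht⟩ : ∃ t : LinearMap.range v →ₗ[R] W,
      t ∘ₗ v.rangeRestrict = LinearMap.id - u ∘ₗ r := by
    refine exists_comp_rangeRestrict_eq fun w hw => ?_
    obtain ⟨z, rfl⟩ := (huv w).1 hw
    simp [hr']
  have ht' (w) : t (v.rangeRestrict w) = w - u (r w) := LinearMap.congr_fun ht w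
  refine ⟨t, LinearMap.ext fun y => ?_, LinearMap.ext fun y => ?_⟩ <;>
    obtain ⟨w, rfl⟩ := v.surjective_rangeRestrict y
  · simp [Subtype.ext_iff, ht', hvu]
  · simp [ht', hr']

lemma ExtVanishes.exteriorSquare_of_retract {u : X →ₗ[R] W} {r : W →ₗ[R] X}
    (hr : r ∘ₗ u = LinearMap.id) (h : ExtVanishes R (⋀[R]^2 W) R j) :
    ExtVanishes R (⋀[R]^2 X) R j :=
  .of_retract_left (exteriorPower.map 2 u) (exteriorPower.map 2 r)
    (by rw [← exteriorPower.map_comp, hr, exteriorPower.map_id]) h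

/-- `X ⊗ Y` is a direct summand of `⋀²(X ⊕ Y)`. -/
lemma ExtVanishes.tensor_of_exteriorSquare {u : X →ₗ[R] W} {r : W →ₗ[R] X} {t : Y →ₗ[R] W}
    {v : W →ₗ[R] Y} (hr : r ∘ₗ u = LinearMap.id) (ht : v ∘ₗ t = LinearMap.id)
    (hrt : r ∘ₗ t = 0) (h : ExtVanishes R (⋀[R]^2 W) R j) : ExtVanishes R (X ⊗[R] Y) R j := by
  let p : ⋀[R]^2 W →ₗ[R] X ⊗[R] Y := ExteriorSquare.lift
    ((TensorProduct.mk R X Y).compl₁₂ r v - ((TensorProduct.mk R X Y).compl₁₂ r v).flip)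
    fun w => by simp
  have hp (w w') : p (ExteriorSquare.wedge R w w') = r w ⊗ₜ v w' - r w' ⊗ₜ v w :=
    ExteriorSquare.lift_wedge _ _ w w'
  refine .of_retract_left (ExteriorSquare.ofTensor R W ∘ₗ TensorProduct.map u t) p
    (TensorProduct.ext' fun z y => ?_) h
  have hr' : r (u z) = z := LinearMap.congr_fun hr z
  have ht' : v (t y) = y := LinearMap.congr_fun ht y
  have hrt' : r (t y) = 0 := LinearMap.congr_fun hrt y
  simp [hp, hr', ht', hrt']

lemma ExtVanishes.tensor_of_split (hD : DepthGT x m) {u : X →ₗ[R] W} {v : W →ₗ[R] Y}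
    {r : W →ₗ[R] X} (huv : Function.Exact u v) (hv : AlmostSurjective x v)
    (hr : r ∘ₗ u = LinearMap.id) (hj : j ≤ m) (h : ExtVanishes R (⋀[R]^2 W) R j) :
    ExtVanishes R (X ⊗[R] Y) R j := by
  obtain ⟨t, ht, hrt⟩ := exists_section_rangeRestrict huv hr
  exact .tensor_of_submodule hD hv.subtype_range hj (.tensor_of_exteriorSquare hr ht hrt h)

/-- The kernel of a map is unchanged when the same module `F` is added to source and target. -/
def kerProdMapIdEquiv (β : P →ₗ[R] B) (F : Type u) [AddCommGroup F] [Module R F] :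
    LinearMap.ker (β.prodMap (LinearMap.id : F →ₗ[R] F)) ≃ₗ[R] LinearMap.ker β :=
  .ofLinearMap
    (LinearMap.codRestrict _ (LinearMap.fst R P F ∘ₗ Submodule.subtype _) fun z =>
      congrArg Prod.fst z.2)
    (LinearMap.codRestrict _ (LinearMap.inl R P F ∘ₗ Submodule.subtype _) fun z =>
      Prod.ext z.2 rfl)
    rfl (LinearMap.ext fun z => Subtype.ext (Prod.ext rfl (congrArg Prod.snd z.2).symm))

variable {A E : Type u} [AddCommGroup A] [Module R A] [AddCommGroup E] [Module R E]
  {β : P →ₗ[R] B} {α : A →ₗ[R] LinearMap.ker β} {g : LinearMap.ker β →ₗ[R] E}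

lemma ExtVanishes.exteriorSquare_prod_of_monad [Module.Free R A] [Module.Finite R A]
    [Module.Free R B] [Module.Finite R B] [Module.Free R F] [Module.Finite R F]
    (hD : DepthGT x m) (hβ : AlmostSurjective x β) (hα : AlmostSplitInjective x α)
    (hαg : AlmostExact x α g) (hg : AlmostSurjective x g) (hj : 2 ≤ j) (hjm : j + 2 ≤ m)
    (hPF : ExtVanishes R (P × F) R j) (hE : ExtVanishes R (⋀[R]^2 E) R j) :
    ExtVanishes R (⋀[R]^2 (P × F)) R j := by
  let e := kerProdMapIdEquiv β F
  have hβF : AlmostSurjective x (β.prodMap (LinearMap.id : F →ₗ[R] F)) := fun i => by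
    obtain ⟨c, hc⟩ := hβ i
    refine ⟨c, fun y => ?_⟩
    obtain ⟨z, hz⟩ := hc y.1
    exact ⟨(z, x i ^ c • y.2), Prod.ext hz rfl⟩
  refine .exteriorSquare_of_monad hD hβF.almostSplitSurjective (α := e.symm.toLinearMap ∘ₗ α)
    (g := g ∘ₗ e.toLinearMap) (fun i => ?_) ⟨?_, fun i => ?_⟩ (fun i => ?_) hj hjm hPF hE
  · obtain ⟨c, r, hr⟩ := hα i
    exact ⟨c, r ∘ₗ e.toLinearMap, by
      rw [LinearMap.comp_assoc, ← LinearMap.comp_assoc α, e.comp_symm, LinearMap.id_comp, hr]⟩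
  · rw [LinearMap.comp_assoc, ← LinearMap.comp_assoc α, e.comp_symm, LinearMap.id_comp, hαg.1]
  · obtain ⟨c, hc⟩ := hαg.2 i
    refine ⟨c, fun z hz => ?_⟩
    obtain ⟨a, ha⟩ := hc (e z) hz
    exact ⟨a, e.symm_apply_eq.2 (by rw [ha, map_smul])⟩
  · obtain ⟨c, hc⟩ := hg i
    refine ⟨c, fun y => ?_⟩
    obtain ⟨z, hz⟩ := hc y
    exact ⟨e.symm z, by simpa using hz⟩

end Split

section RankTwo

variable {K n}

lemma AlmostInjective.of_pow_irrel_le {M N : Type} [AddCommGroup M] [Module (PolyS K n) M]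
    [AddCommGroup N] [Module (PolyS K n) N] {f : M →ₗ[PolyS K n] N}
    (h : ∃ c : ℕ, irrel K n ^ c ≤ Module.annihilator (PolyS K n) (LinearMap.ker f)) :
    AlmostInjective (coords K n) f := fun i =>
  (actsNilpotently_iff.2 h i).imp fun _ hc z hz => congrArg Subtype.val (hc ⟨z, hz⟩)

lemma AlmostSurjective.of_pow_irrel_le {M N : Type} [AddCommGroup M] [Module (PolyS K n) M]
    [AddCommGroup N] [Module (PolyS K n) N] {f : M →ₗ[PolyS K n] N}
    (h : ∃ c : ℕ, irrel K n ^ c ≤ Module.annihilator (PolyS K n) (N ⧸ LinearMap.range f)) :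
    AlmostSurjective (coords K n) f := fun i =>
  (actsNilpotently_iff.2 h i).imp fun _ hc y =>
    (Submodule.Quotient.mk_eq_zero _).1 (hc (Submodule.Quotient.mk y))

variable {A B E F P : Type} [AddCommGroup A] [Module (PolyS K n) A]
  [AddCommGroup B] [Module (PolyS K n) B] [AddCommGroup E] [Module (PolyS K n) E]
  [AddCommGroup F] [Module (PolyS K n) F] [AddCommGroup P] [Module (PolyS K n) P]
  [Module.Free (PolyS K n) A] [Module.Finite (PolyS K n) A]
  [Module.Free (PolyS K n) B] [Module.Finite (PolyS K n) B]
  [Module.Free (PolyS K n) F] [Module.Finite (PolyS K n) F] [Module.Finite (PolyS K n) P]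
  {α : A →ₗ[PolyS K n] P} {β : P →ₗ[PolyS K n] B}

lemma extVanishes_exteriorSquare_prod_of_rankTwo_monad
    (hβα : β ∘ₗ α = 0) (hα : Function.Injective α)
    (hfree : ∀ p : PrimeSpectrum (PolyS K n), p.asIdeal ≠ irrel K n →
      Module.Free (Localization.AtPrime p.asIdeal)
        (LocalizedModule p.asIdeal.primeCompl (P ⧸ LinearMap.range α)))
    (hβ : AlmostSurjective (coords K n) β)
    {f : MonadHomology α β →ₗ[PolyS K n] E} (hf : IsSheafIso K n f)
    (hE : IsRankTwoBundleModule K n E) {j : ℕ} (hj : 2 ≤ j) (hjn : j + 2 ≤ n)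
    (hPF : ExtVanishes (PolyS K n) (P × F) (PolyS K n) j) :
    ExtVanishes (PolyS K n) (⋀[PolyS K n]^2 (P × F)) (PolyS K n) j := by
  let α' : A →ₗ[PolyS K n] LinearMap.ker β :=
    α.codRestrict (LinearMap.ker β) (LinearMap.congr_fun hβα)
  let q : LinearMap.ker β →ₗ[PolyS K n] MonadHomology α β :=
    ((LinearMap.range α).comap (LinearMap.ker β).subtype).mkQ
  have hq (z) : q z = 0 ↔ ∃ a, α a = z.1 := Submodule.Quotient.mk_eq_zero _
  have hα' : AlmostSplitInjective (coords K n) α' := fun i => by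
    obtain ⟨c, r, hr⟩ := almostSplitInjective_of_locallyFree_quotient hα hfree i
    exact ⟨c, r ∘ₗ (LinearMap.ker β).subtype, hr⟩
  have hexact : AlmostExact (coords K n) α' (f ∘ₗ q) := by
    refine ⟨LinearMap.ext fun a => ?_, fun i => ?_⟩
    · have hqa : q (α' a) = 0 := (hq _).2 ⟨a, rfl⟩
      simp only [LinearMap.comp_apply, hqa, map_zero, LinearMap.zero_apply]
    · obtain ⟨c, hc⟩ := AlmostInjective.of_pow_irrel_le hf.1 i
      refine ⟨c, fun z hz => ?_⟩
      have hqz := hc _ hz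
      rw [← map_smul, hq] at hqz
      exact hqz.imp fun _ ha => Subtype.ext ha
  have hsurj : AlmostSurjective (coords K n) (f ∘ₗ q) := fun i => by
    obtain ⟨c, hc⟩ := AlmostSurjective.of_pow_irrel_le hf.2 i
    refine ⟨c, fun y => ?_⟩
    obtain ⟨w, hw⟩ := hc y
    obtain ⟨z, rfl⟩ := Submodule.mkQ_surjective _ w
    exact ⟨z, hw⟩
  exact .exteriorSquare_prod_of_monad depthGT_coords hβ hα' hexact hsurj hj hjn hPF
    (extVanishes_exteriorSquare_of_rankTwo hE (by omega) (by omega))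

theorem _root_.horrocks_sequence_not_split_general {M N : Type}
    [AddCommGroup M] [Module (PolyS K n) M] [AddCommGroup N] [Module (PolyS K n) N]
    [Nontrivial M] [Nontrivial N] {k : ℕ} (hn : 7 ≤ n) (hk1 : 1 < k) (hk2 : 2 * k < n)
    (hβα : β ∘ₗ α = 0) (hα : Function.Injective α)
    (hfree : ∀ p : PrimeSpectrum (PolyS K n), p.asIdeal ≠ irrel K n →
      Module.Free (Localization.AtPrime p.asIdeal)
        (LocalizedModule p.asIdeal.primeCompl (P ⧸ LinearMap.range α)))
    (hβ : AlmostSurjective (coords K n) β)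
    {f : MonadHomology α β →ₗ[PolyS K n] E} (hf : IsSheafIso K n f)
    (hE : IsRankTwoBundleModule K n E)
    (hN : ActsNilpotently (coords K n) N) (hM : ActsNilpotently (coords K n) M)
    (resN : MinimalResolution K n N) (resM : MinimalResolution K n M)
    {u : Syzygy resN k →ₗ[PolyS K n] P × F} {v : P × F →ₗ[PolyS K n] Syzygy resM (n - k)}
    (huv : Function.Exact u v) (hv : AlmostSurjective (coords K n) v) :
    ¬ ∃ r : P × F →ₗ[PolyS K n] Syzygy resN k, r ∘ₗ u = LinearMap.id := by
  rintro ⟨r, hr⟩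
  have hu : Function.Injective u := Function.LeftInverse.injective (LinearMap.congr_fun hr)
  have hPF {j : ℕ} (h₁ : 1 ≤ j) (h₂ : j + 1 ≤ n) (h₃ : j + k ≠ n) (h₄ : j ≠ k) :
      ExtVanishes (PolyS K n) (P × F) (PolyS K n) j :=
    .middle_of_almostExact depthGT_coords (.of_injective hu) (almostExact_of_exact huv) hv h₂
      (hN.extVanishes_syzygy resN h₁ h₃) (hM.extVanishes_syzygy resM h₁ (by omega))
  have hΛ {j : ℕ} (h₁ : 2 ≤ j) (h₂ : j + 2 ≤ n) (h₃ : j + k ≠ n) (h₄ : j ≠ k) :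
      ExtVanishes (PolyS K n) (⋀[PolyS K n]^2 (P × F)) (PolyS K n) j :=
    extVanishes_exteriorSquare_prod_of_rankTwo_monad hβα hα hfree hβ hf hE h₁ h₂
      (hPF (by omega) (by omega) h₃ h₄)
  obtain rfl | hk := (Nat.succ_le_of_lt hk1).eq_or_lt
  · have hX {j : ℕ} (h₁ : 2 < j) (h₂ : j + 2 < n) :
        ExtVanishes (PolyS K n) (⋀[PolyS K n]^2 (Syzygy resN 2)) (PolyS K n) j :=
      .exteriorSquare_of_retract hr (hΛ (by omega) (by omega) (by omega) (by omega))
    exact hN.not_extVanishes_exteriorSquare_syzygy_two resN (by omega)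
      (hX (by omega) (by omega)) (hX (by omega) (by omega))
  · exact hM.not_extVanishes_tensor_syzygy resN hN resM hk hk2 <|
      .tensor_of_split depthGT_coords huv hv hr (by omega)
        (hΛ (by omega) (by omega) (by omega) (by omega))

end RankTwo

end Horrocks

/-- Let `E` be a rank two bundle on `ℙⁿ` with isolated cohomology
of type `(n,k)` (`n ≥ 7`, `1 < k < n/2`).  Then the exact sequence
`0 → P_k(N) → P ⊕ F → P_{n-k}(M) → 0` associated to the minimal monad bundle `P`
of `E` is not split. -/
theorem horrocks_sequence_not_split
    (K : Type) [Field K] (n : ℕ) (hn : 7 ≤ n)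
    (k : ℕ) (hk1 : 1 < k) (hk2 : 2 * k < n)
    (A B P : Type) [AddCommGroup A] [Module (PolyS K n) A]
    [AddCommGroup B] [Module (PolyS K n) B] [AddCommGroup P] [Module (PolyS K n) P]
    (hAfree : Module.Free (PolyS K n) A) (hAfin : Module.Finite (PolyS K n) A)
    (hBfree : Module.Free (PolyS K n) B) (hBfin : Module.Finite (PolyS K n) B)
    (hP : IsBundleModule K n P)
    (hP1 : Subsingleton (Hstar K n 1 P))
    (hPn1 : Subsingleton (Hstar K n (n-1) P))
    (α : A →ₗ[PolyS K n] P) (β : P →ₗ[PolyS K n] B)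
    (hβα : β.comp α = 0)
    (hαinj : Function.Injective α)
    (hsubbundle : ∀ p : PrimeSpectrum (PolyS K n), p.asIdeal ≠ irrel K n →
      Module.Free (Localization.AtPrime p.asIdeal)
        (LocalizedModule p.asIdeal.primeCompl (P ⧸ LinearMap.range α)))
    (hβsurj : ∃ c : ℕ, (irrel K n) ^ c ≤
      Module.annihilator (PolyS K n) (B ⧸ LinearMap.range β))
    (hαmin : LinearMap.range α ≤ (irrel K n) • (⊤ : Submodule (PolyS K n) P))
    (hβmin : LinearMap.range β ≤ (irrel K n) • (⊤ : Submodule (PolyS K n) B))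
    (E : Type) [AddCommGroup E] [Module (PolyS K n) E]
    (hcoh : ∃ f : MonadHomology α β →ₗ[PolyS K n] E, IsSheafIso K n f)
    (hE : IsRankTwoBundleModule K n E)
    (hHk : ¬ Subsingleton (Hstar K n k E))
    (hHnk : ¬ Subsingleton (Hstar K n (n - k) E))
    (hvan : ∀ i : ℕ, 1 ≤ i → i ≤ n - 1 → i ≠ 1 → i ≠ k → i ≠ n - k → i ≠ n - 1 →
      Subsingleton (Hstar K n i E))
    (resN : MinimalResolution K n ↥(Hstar K n k E))
    (resM : MinimalResolution K n ↥(Hstar K n (n - k) E))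
    (m : ℕ)
    (u : ↥(LinearMap.range (resN.d k)) →ₗ[PolyS K n] P × (Fin m → PolyS K n))
    (v : P × (Fin m → PolyS K n) →ₗ[PolyS K n] ↥(LinearMap.range (resM.d (n - k))))
    (hu : Function.Injective u) (huv : Function.Exact u v)
    (hv : ∃ c : ℕ, (irrel K n) ^ c ≤ Module.annihilator (PolyS K n)
      (↥(LinearMap.range (resM.d (n - k))) ⧸ LinearMap.range v)) :
    ¬ ∃ r : P × (Fin m → PolyS K n) →ₗ[PolyS K n] ↥(LinearMap.range (resN.d k)),
        r.comp u = LinearMap.id := by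
  have := hP.finite
  have := hE.finite
  have := Horrocks.finite_of_minimalResolution resN
  have := Horrocks.finite_of_minimalResolution resM
  have := not_subsingleton_iff_nontrivial.1 hHk
  have := not_subsingleton_iff_nontrivial.1 hHnk
  obtain ⟨f, hf⟩ := hcoh
  exact horrocks_sequence_not_split_general hn hk1 hk2 hβα hαinj hsubbundle
    (.of_pow_irrel_le hβsurj) hf hE (Horrocks.actsNilpotently_Hstar k E)
    (Horrocks.actsNilpotently_Hstar (n - k) E) resN resM huv (.of_pow_irrel_le hv)
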